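/- arXiv:1907.00885 — 2 statements merged into one kernel-verified Lean document; each statement's English description precedes it below -/
import Mathlib

section
/- For every integer n ≥ 6 there exists a family 𝒜 = {A_1, …, A_n} of n open subsets of ℝ² such that: the intersection of every subfamily of 𝒜 is either empty or path-connected; f_3(𝒜) = 0; f_2(𝒜) ≥ C(n−1, 2) + (n²−6n+3)/3; all but one of the sets A_i are contractible; and every nonempty intersection of two or of three of the sets is contractible. -/
/-- `fNum A k` is `f_k(𝒜)`: the number of subsets `σ` of the index set with
`|σ| = k+1` such that `⋂ i ∈ σ, A i` is nonempty. -/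
noncomputable def fNum {α : Type*} {n : ℕ} (A : Fin n → Set α) (k : ℕ) : ℕ :=
  Nat.card {σ : Finset (Fin n) // σ.card = k + 1 ∧ (⋂ i ∈ σ, A i).Nonempty}

/-!
Take `n - 1` lines in general position and a narrow strip around each of them. Enlarge every strip
by the triangular cells that have a side on its line, each without the corner opposite to that side.
The `n`-th set, the network, is the union of all the strips and of all the corners of the cells.
The network meets the intersection of any two strips, which gives `C(n - 1, 2)` triples. The three
strips around a cell meet inside it, which gives one more triple for each cell. There are no
quadruples: three enlarged strips meet only within a cell, off its corners, where the network does
not reach. An intersection of one or two strips is convex, and the cells add disjoint star-shaped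
pieces to it, so that it remains contractible.

To get many cells, take the lines to be the tangents of a deltoid at the angles
`(i + 1 / 6) * π / m`. Three tangents are concurrent if and only if their angles add up to a
multiple of `π`. The sum is here an odd multiple of `π / (2 * m)`, and three tangents bound a cell
as soon as it misses a multiple of `π` by only `π / (2 * m)`. This holds for about `m ^ 2 / 3` of
the triples.
-/

open Set Filter Topology

section Contractible

variable {E : Type*} [NormedAddCommGroup E] [NormedSpace ℝ E]

/-- A Urysohn function that vanishes off `U` and is `1` off `S` sets the speed at which the points
of `U` are pushed towards `c`; this deforms `S ∪ U` into `S`. -/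
theorem contractibleSpace_union_of_starConvex {S U : Set E} {c : E} [ContractibleSpace S]
    (hS : IsOpen S) (hU : IsOpen U) (hc : c ∈ S) (hUc : StarConvex ℝ c U)
    (hSUc : StarConvex ℝ c (S ∩ U)) : ContractibleSpace ↥(S ∪ U) := by
  obtain ⟨φ, hφU, hφS, hφ⟩ := exists_continuous_zero_one_of_isClosed
    (hU.preimage (continuous_subtype_val (p := (· ∈ S ∪ U)))).isClosed_compl
    (hS.preimage (continuous_subtype_val (p := (· ∈ S ∪ U)))).isClosed_compl
    (disjoint_left.2 fun x hxU hxS => x.2.elim hxS hxU)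
  let g : ℝ × ↥(S ∪ U) → E := fun q => AffineMap.lineMap (q.2 : E) c (q.1 * φ q.2)
  have g_cont : Continuous g := by
    simp only [g, AffineMap.lineMap_apply_module]
    fun_prop
  have g_mem {V : Set E} (hV : StarConvex ℝ c V) {s : ℝ} (hs : s ∈ Icc (0 : ℝ) 1)
      {x : ↥(S ∪ U)} (hx : (x : E) ∈ V) : g (s, x) ∈ V := by
    have hle : s * φ x ≤ 1 := mul_le_one₀ hs.2 (hφ x).1 (hφ x).2
    simp only [g, AffineMap.lineMap_apply_module, add_comm (_ • (x : E))]
    exact hV hx (mul_nonneg hs.1 (hφ x).1) (sub_nonneg.2 hle) (add_sub_cancel _ _)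
  have g_eq {s : ℝ} {x : ↥(S ∪ U)} (hx : (x : E) ∉ U) : g (s, x) = x := by
    simp [g, hφU (show x ∈ (Subtype.val ⁻¹' U)ᶜ from hx)]
  have g_union (s : unitInterval) (x : ↥(S ∪ U)) : g (s, x) ∈ S ∪ U := by
    by_cases hx : (x : E) ∈ U
    · exact Or.inr (g_mem hUc s.2 hx)
    · exact (g_eq hx).symm ▸ x.2
  have g_one (x : ↥(S ∪ U)) : g (1, x) ∈ S := by
    by_cases hxS : (x : E) ∈ S
    · by_cases hxU : (x : E) ∈ U
      · exact (g_mem hSUc (right_mem_Icc.2 zero_le_one) ⟨hxS, hxU⟩).1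
      · exact (g_eq hxU).symm ▸ hxS
    · simpa [g, hφS (show x ∈ (Subtype.val ⁻¹' S)ᶜ from hxS)] using hc
  let r : C(↥(S ∪ U), S) :=
    ⟨fun x => ⟨g (1, x), g_one x⟩, (g_cont.comp (by fun_prop)).subtype_mk _⟩
  let i : C(S, ↥(S ∪ U)) := ⟨inclusion subset_union_left, continuous_inclusion _⟩
  have id_homotopic : (ContinuousMap.id ↥(S ∪ U)).Homotopic (i.comp r) :=
    ⟨{  toFun := fun q => ⟨g (q.1, q.2), g_union q.1 q.2⟩
        continuous_toFun := (g_cont.comp (by fun_prop)).subtype_mk _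
        map_zero_left := fun x => Subtype.ext (by simp [g])
        map_one_left := fun x => rfl }⟩
  obtain ⟨y, hy⟩ := ((id_nullhomotopic S).comp_left r).comp_right i
  exact (contractible_iff_id_nullhomotopic _).2 ⟨y, id_homotopic.trans hy⟩

theorem contractibleSpace_union_biUnion_of_starConvex {κ : Type*} {s : Set κ} {S : Set E}
    {U : κ → Set E} {c : κ → E} [ContractibleSpace S] (hs : s.Finite) (hS : IsOpen S)
    (hU : ∀ t ∈ s, IsOpen (U t)) (hc : ∀ t ∈ s, c t ∈ S) (hUc : ∀ t ∈ s, StarConvex ℝ (c t) (U t))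
    (hSUc : ∀ t ∈ s, StarConvex ℝ (c t) (S ∩ U t)) (hdisj : s.PairwiseDisjoint U) :
    ContractibleSpace ↥(S ∪ ⋃ t ∈ s, U t) := by
  induction s, hs using Set.Finite.induction_on with
  | empty => rwa [biUnion_empty, union_empty]
  | @insert a s ha _ ih =>
    simp only [forall_mem_insert] at hU hc hUc hSUc
    rw [pairwiseDisjoint_insert_of_notMem ha] at hdisj
    have := ih hU.2 hc.2 hUc.2 hSUc.2 hdisj.1
    have inter_eq : (S ∪ ⋃ t ∈ s, U t) ∩ U a = S ∩ U a := by
      rw [union_inter_distrib_right, (disjoint_iUnion₂_left.2 fun t ht =>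
        (hdisj.2 t ht).symm).inter_eq, union_empty]
    rw [biUnion_insert, union_left_comm, union_comm]
    exact contractibleSpace_union_of_starConvex (hS.union (isOpen_biUnion hU.2)) hU.1
      (Or.inl hc.1) hUc.1 (inter_eq.symm ▸ hSUc.1)

end Contractible

/-! ### Simple line arrangements -/

theorem exists_eq_insert_pair_of_mem {ι : Type*} [DecidableEq ι] {T : Finset ι} {i : ι}
    (hT : T.card = 3) (hi : i ∈ T) : ∃ a b, a ≠ i ∧ b ≠ i ∧ a ≠ b ∧ T = {i, a, b} := by
  obtain ⟨a, b, hab, h⟩ := Finset.card_eq_two.1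
    ((Finset.card_erase_of_mem hi).trans (congrArg (· - 1) hT))
  have ha : a ∈ T.erase i := by simp [h]
  have hb : b ∈ T.erase i := by simp [h]
  exact ⟨a, b, Finset.ne_of_mem_erase ha, Finset.ne_of_mem_erase hb, hab,
    h ▸ (Finset.insert_erase hi).symm⟩

theorem apply_affineCombination {E κ : Type*} [AddCommGroup E] [Module ℝ E] {s : Finset κ}
    {p : κ → E} {w : κ → ℝ} (hw : ∑ i ∈ s, w i = 1) (g : E →ᵃ[ℝ] ℝ) :
    g (s.affineCombination ℝ p w) = ∑ i ∈ s, w i * g (p i) := by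
  rw [s.map_affineCombination _ _ hw, s.affineCombination_eq_linear_combination _ _ hw]
  rfl

section LineArrangement

variable {E ι : Type*} [NormedAddCommGroup E] [NormedSpace ℝ E] {f : ι → E →ᵃ[ℝ] ℝ}
  {R T T' : Finset ι} {i j l : ι} {x y : E} {ε : ℝ}

/-- A simple arrangement of lines in a plane: the lines are the zero sets of the affine functions
`f i`, any two of them meet and no three pass through one point. If there are at least three
indices, these conditions make the zero sets pairwise different lines. -/
structure IsSimpleLineArrangement (f : ι → E →ᵃ[ℝ] ℝ) : Prop where
  finrank_eq_two : Module.finrank ℝ E = 2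
  exists_common_zero : ∀ i j, ∃ x, f i x = 0 ∧ f j x = 0
  not_concurrent : ∀ ⦃i j k⦄, i ≠ j → i ≠ k → j ≠ k → ∀ x, f i x = 0 → f j x = 0 → f k x ≠ 0

/-- The vertex, opposite to the side on line `i`, of the triangle formed by the lines in `T`:
a common point of the lines in `T` other than line `i`, or a junk value if there is none. -/
noncomputable def oppVertex (f : ι → E →ᵃ[ℝ] ℝ) (T : Finset ι) (i : ι) : E :=
  Classical.epsilon fun x => ∀ j ∈ T, j ≠ i → f j x = 0

/-- The barycentric coordinate in the triangle formed by the lines in `T` belonging to the vertex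
opposite to line `i`. -/
noncomputable def bary (f : ι → E →ᵃ[ℝ] ℝ) (T : Finset ι) (i : ι) : E →ᵃ[ℝ] ℝ :=
  (f i (oppVertex f T i))⁻¹ • f i

theorem bary_apply : bary f T i x = f i x / f i (oppVertex f T i) := by
  simp [bary, div_eq_inv_mul]

/-- The open triangle bounded by the lines in `T`. -/
def openTriangle (f : ι → E →ᵃ[ℝ] ℝ) (T : Finset ι) : Set E :=
  {x | ∀ i ∈ T, 0 < bary f T i x}

/-- The lines in `T` bound a triangular cell of the arrangement: no other line meets the closed
triangle, that is, every other line has the three vertices strictly on one side. -/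
structure IsCell (f : ι → E →ᵃ[ℝ] ℝ) (T : Finset ι) : Prop where
  card_eq : T.card = 3
  same_side : ∀ l ∉ T, (∀ i ∈ T, 0 < f l (oppVertex f T i)) ∨ ∀ i ∈ T, f l (oppVertex f T i) < 0

/-- A half-width `ε` of strips around the lines that is small compared to all the positive
distances `|f l v|` of vertices `v` from lines. Here `v` ranges over the junk vertices too, which
is harmless as long as there are finitely many lines. -/
structure IsNarrow (f : ι → E →ᵃ[ℝ] ℝ) (ε : ℝ) : Prop where
  pos : 0 < ε
  five_mul_le : ∀ T l i, f l (oppVertex f T i) ≠ 0 → 5 * ε ≤ |f l (oppVertex f T i)|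

theorem exists_isNarrow [Finite ι] (f : ι → E →ᵃ[ℝ] ℝ) : ∃ ε, IsNarrow f ε := by
  have small (a : ℝ) : ∀ᶠ ε : ℝ in 𝓝[>] 0, a ≠ 0 → 5 * ε ≤ |a| := by
    by_cases ha : a = 0
    · simp [ha]
    · filter_upwards [Ioo_mem_nhdsGT (show (0 : ℝ) < |a| / 5 by positivity)] with ε hε _
      linarith [hε.2]
  have all_small : ∀ᶠ ε : ℝ in 𝓝[>] 0, ∀ T l i,
      f l (oppVertex f T i) ≠ 0 → 5 * ε ≤ |f l (oppVertex f T i)| :=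
    eventually_all.2 fun _ => eventually_all.2 fun _ => eventually_all.2 fun _ => small _
  obtain ⟨ε, hε, hpos⟩ := (all_small.and self_mem_nhdsWithin).exists
  exact ⟨ε, hpos, hε⟩

namespace IsSimpleLineArrangement

variable (hf : IsSimpleLineArrangement f)
include hf

theorem finiteDimensional : FiniteDimensional ℝ E :=
  Module.finite_of_finrank_eq_succ hf.finrank_eq_two

theorem continuous (i : ι) : Continuous (f i) :=
  have := hf.finiteDimensional
  (f i).continuous_of_finiteDimensional

theorem continuous_bary (T : Finset ι) (i : ι) : Continuous (bary f T i) :=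
  have := hf.finiteDimensional
  (bary f T i).continuous_of_finiteDimensional

theorem apply_oppVertex_of_ne (hT : T.card = 3) (hi : i ∈ T) (hj : j ∈ T) (hji : j ≠ i) :
    f j (oppVertex f T i) = 0 := by
  classical
  obtain ⟨a, b, -, -, -, hTeq⟩ := exists_eq_insert_pair_of_mem hT hi
  obtain ⟨x, hxa, hxb⟩ := hf.exists_common_zero a b
  refine Classical.epsilon_spec (p := fun x => ∀ j ∈ T, j ≠ i → f j x = 0)
    ⟨x, fun k hk hki => ?_⟩ j hj hji
  obtain rfl | rfl : k = a ∨ k = b := by simpa [hTeq, hki] using hk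
  exacts [hxa, hxb]

theorem apply_oppVertex_self_ne_zero (hT : T.card = 3) (hi : i ∈ T) :
    f i (oppVertex f T i) ≠ 0 := by
  classical
  obtain ⟨a, b, hai, hbi, hab, hTeq⟩ := exists_eq_insert_pair_of_mem hT hi
  exact hf.not_concurrent hab hai hbi _ (hf.apply_oppVertex_of_ne hT hi (by simp [hTeq]) hai)
    (hf.apply_oppVertex_of_ne hT hi (by simp [hTeq]) hbi)

theorem bary_oppVertex_self (hT : T.card = 3) (hi : i ∈ T) : bary f T i (oppVertex f T i) = 1 := by
  rw [bary_apply, div_self (hf.apply_oppVertex_self_ne_zero hT hi)]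

theorem bary_oppVertex_of_ne (hT : T.card = 3) (hi : i ∈ T) (hj : j ∈ T) (hji : j ≠ i) :
    bary f T j (oppVertex f T i) = 0 := by
  rw [bary_apply, hf.apply_oppVertex_of_ne hT hi hj hji, zero_div]

theorem bary_affineCombination (hT : T.card = 3) {w : T → ℝ} (hw : ∑ i, w i = 1) (j : T) :
    bary f T j (Finset.univ.affineCombination ℝ (fun i : T => oppVertex f T i) w) = w j := by
  rw [apply_affineCombination hw, Finset.sum_eq_single_of_mem j (Finset.mem_univ j),
    hf.bary_oppVertex_self hT j.2, mul_one]
  intro i _ hij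
  rw [hf.bary_oppVertex_of_ne hT i.2 j.2 fun h => hij (Subtype.ext h.symm), mul_zero]

theorem affineIndependent_oppVertex (hT : T.card = 3) :
    AffineIndependent ℝ fun i : T => oppVertex f T i := by
  refine (affineIndependent_iff_eq_of_fintype_affineCombination_eq ℝ _).2
    fun w w' hw hw' heq => funext fun j => ?_
  rw [← hf.bary_affineCombination hT hw, heq, hf.bary_affineCombination hT hw']

theorem apply_eq_sum_bary_mul (hT : T.card = 3) (g : E →ᵃ[ℝ] ℝ) (x : E) :
    g x = ∑ i ∈ T, bary f T i x * g (oppVertex f T i) := by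
  have := hf.finiteDimensional
  have span_eq_top : affineSpan ℝ (range fun i : T => oppVertex f T i) = ⊤ :=
    (hf.affineIndependent_oppVertex hT).affineSpan_eq_top_iff_card_eq_finrank_add_one.2
      (by rw [Fintype.card_coe, hT, hf.finrank_eq_two])
  obtain ⟨w, hw, rfl⟩ := eq_affineCombination_of_mem_affineSpan_of_fintype
    (span_eq_top ▸ AffineSubspace.mem_top ℝ E x)
  rw [apply_affineCombination hw, ← Finset.sum_coe_sort T]
  simp only [hf.bary_affineCombination hT hw]

theorem sum_bary (hT : T.card = 3) (x : E) : ∑ i ∈ T, bary f T i x = 1 := by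
  simpa using (hf.apply_eq_sum_bary_mul hT (AffineMap.const ℝ E 1) x).symm

theorem exists_bary_eq (hT : T.card = 3) {w : ι → ℝ} (hw : ∑ i ∈ T, w i = 1) :
    ∃ x, ∀ j ∈ T, bary f T j x = w j :=
  ⟨_, fun j hj => hf.bary_affineCombination hT (w := fun i => w i)
    ((Finset.sum_coe_sort T w).trans hw) ⟨j, hj⟩⟩

theorem le_apply_of_forall_le_oppVertex (hT : T.card = 3) (g : E →ᵃ[ℝ] ℝ) {a : ℝ}
    (hg : ∀ i ∈ T, a ≤ g (oppVertex f T i)) (hx : x ∈ openTriangle f T) : a ≤ g x := by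
  rw [hf.apply_eq_sum_bary_mul hT g, ← one_mul a, ← hf.sum_bary hT x, Finset.sum_mul]
  exact Finset.sum_le_sum fun i hi => mul_le_mul_of_nonneg_left (hg i hi) (hx i hi).le

theorem isOpen_openTriangle (T : Finset ι) : IsOpen (openTriangle f T) := by
  simp only [openTriangle, ofPred_forall]
  exact isOpen_biInter_finset fun i _ => isOpen_lt continuous_const (hf.continuous_bary T i)

theorem abs_bary_lt (hε : IsNarrow f ε) (hT : T.card = 3) (hi : i ∈ T) (hx : |f i x| < ε) :
    |bary f T i x| < 1 / 5 := by
  have h := hf.apply_oppVertex_self_ne_zero hT hi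
  rw [bary_apply, abs_div, div_lt_iff₀ (abs_pos.2 h)]
  linarith [hε.five_mul_le T i i h]

theorem card_lt_three_of_abs_lt (hε : IsNarrow f ε) (hR : ∀ i ∈ R, |f i x| < ε) : R.card < 3 := by
  by_contra! h
  obtain ⟨T, hTR, hT⟩ := Finset.exists_subset_card_eq h
  have sum_lt : ∑ i ∈ T, bary f T i x < ∑ i ∈ T, 1 / 5 :=
    Finset.sum_lt_sum_of_nonempty (Finset.card_pos.1 (hT ▸ three_pos)) fun i hi =>
      (le_abs_self _).trans_lt (hf.abs_bary_lt hε hT hi (hR i (hTR hi)))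
  rw [hf.sum_bary hT, Finset.sum_const, hT] at sum_lt
  norm_num at sum_lt

/-- The point `c` lies near the side or the vertex in which the lines in `R` meet the closed
triangle. -/
theorem exists_mem_openTriangle_near (hε : IsNarrow f ε) (hT : T.card = 3) (hRT : R ⊆ T)
    (hR : R.Nonempty) (hR2 : R.card < 3) :
    ∃ c ∈ openTriangle f T, (∀ i ∈ R, |f i c| < ε) ∧ ∀ i ∈ T, i ∉ R → 2 / 5 < bary f T i c := by
  classical
  have small : ∀ᶠ δ : ℝ in 𝓝[>] 0, δ < 1 / 10 ∧ ∀ i ∈ T, δ * |f i (oppVertex f T i)| < ε := by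
    refine .and ?_ <| (eventually_all_finset T).2 fun i _ => ?_
    · exact mem_nhdsWithin_of_mem_nhds (Iio_mem_nhds (by norm_num))
    · exact ((continuous_mul_const |f i (oppVertex f T i)|).tendsto' (0 : ℝ) 0 (zero_mul _)
        |>.eventually_lt_const hε.pos).filter_mono nhdsWithin_le_nhds
  obtain ⟨δ, ⟨hδ, hδε⟩, hδ0⟩ := (small.and self_mem_nhdsWithin).exists
  obtain ⟨b, hb, hsum⟩ : ∃ b : ℝ, 2 / 5 < b ∧ R.card * δ + (3 - R.card) * b = 1 := by
    obtain h | h : R.card = 1 ∨ R.card = 2 := by have := hR.card_pos; omega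
    · exact ⟨(1 - δ) / 2, by linarith, by rw [h]; ring⟩
    · exact ⟨1 - 2 * δ, by linarith, by rw [h]; ring⟩
  obtain ⟨c, hc⟩ := hf.exists_bary_eq hT (w := fun i => if i ∈ R then δ else b) (by
    rw [← Finset.sum_sdiff hRT, add_comm, Finset.sum_congr rfl fun i hi => if_pos hi,
      Finset.sum_congr rfl fun i hi => if_neg (Finset.mem_sdiff.1 hi).2, Finset.sum_const,
      Finset.sum_const, Finset.card_sdiff_of_subset hRT, hT, nsmul_eq_mul, nsmul_eq_mul,
      Nat.cast_sub (by omega)]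
    exact hsum)
  refine ⟨c, fun i hi => ?_, fun i hi => ?_, fun i hi hiR => ?_⟩
  · rw [hc i hi]
    split_ifs
    exacts [hδ0, by linarith]
  · have := hc i (hRT hi)
    rw [if_pos hi, bary_apply, div_eq_iff (hf.apply_oppVertex_self_ne_zero hT (hRT hi))] at this
    rw [this, abs_mul, abs_of_pos hδ0]
    exact hδε i (hRT hi)
  · rwa [hc i hi, if_neg hiR]

theorem exists_two_fifths_lt_bary (hT : T.card = 3) (hi : i ∈ T) (hx : bary f T i x < 1 / 5) :
    ∃ k ∈ T, 2 / 5 < bary f T k x := by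
  classical
  by_contra! h
  have := (T.erase i).sum_le_card_nsmul _ _ fun k hk => h k (Finset.mem_of_mem_erase hk)
  rw [Finset.card_erase_of_mem hi, hT, nsmul_eq_mul] at this
  have := (T.add_sum_erase _ hi).trans (hf.sum_bary hT x)
  norm_num at *
  linarith

theorem exists_bary_lt_two_fifths (hT : T.card = 3) (x : E) : ∃ i ∈ T, bary f T i x < 2 / 5 := by
  by_contra! h
  have := T.card_nsmul_le_sum _ _ h
  rw [hf.sum_bary hT, hT] at this
  norm_num at this

end IsSimpleLineArrangement

namespace IsCell

theorem apply_bounds (hT : IsCell f T) (hf : IsSimpleLineArrangement f) (hε : IsNarrow f ε)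
    (hl : l ∉ T) : (∀ x ∈ openTriangle f T, 5 * ε ≤ f l x) ∨
      ∀ x ∈ openTriangle f T, f l x ≤ -(5 * ε) := by
  refine (hT.same_side l hl).imp (fun h x hx => ?_) fun h x hx => le_neg.2 ?_
  · refine hf.le_apply_of_forall_le_oppVertex hT.card_eq (f l) (fun i hi => ?_) hx
    exact (hε.five_mul_le T l i (h i hi).ne').trans_eq (abs_of_pos (h i hi))
  · refine hf.le_apply_of_forall_le_oppVertex hT.card_eq (-f l) (fun i hi => ?_) hx
    exact (hε.five_mul_le T l i (h i hi).ne).trans_eq (abs_of_neg (h i hi))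

theorem five_mul_le_abs (hT : IsCell f T) (hf : IsSimpleLineArrangement f) (hε : IsNarrow f ε)
    (hl : l ∉ T) (hx : x ∈ openTriangle f T) : 5 * ε ≤ |f l x| :=
  le_abs'.2 ((hT.apply_bounds hf hε hl).symm.imp (· x hx) (· x hx))

theorem apply_mul_apply_pos (hT : IsCell f T) (hf : IsSimpleLineArrangement f)
    (hε : IsNarrow f ε) (i : ι) (hx : x ∈ openTriangle f T) (hy : y ∈ openTriangle f T) :
    0 < f i x * f i y := by
  by_cases hi : i ∈ T
  · have h := mul_pos (hx i hi) (hy i hi)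
    rw [bary_apply, bary_apply, div_mul_div_comm] at h
    exact (div_pos_iff_of_pos_right
      (mul_self_pos.2 (hf.apply_oppVertex_self_ne_zero hT.card_eq hi))).1 h
  · have := hε.pos
    rcases hT.apply_bounds hf hε hi with h | h
    · exact mul_pos (by linarith [h x hx]) (by linarith [h y hy])
    · exact mul_pos_of_neg_of_neg (by linarith [h x hx]) (by linarith [h y hy])

/-- A side of `T'` that is not a side of `T` would come close to a point of the cell `T`, since the
signs of all the `f i` are constant on the cell `T'`. -/
theorem subset_of_mem (hT : IsCell f T) (hT' : IsCell f T') (hf : IsSimpleLineArrangement f)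
    (hε : IsNarrow f ε) (hx : x ∈ openTriangle f T) (hx' : x ∈ openTriangle f T') : T' ⊆ T := by
  intro l hl
  by_contra hlT
  obtain ⟨c, hc, hlc, -⟩ := hf.exists_mem_openTriangle_near hε hT'.card_eq
    (Finset.singleton_subset_iff.2 hl) (Finset.singleton_nonempty l) (by simp)
  have hcT : c ∈ openTriangle f T := by
    intro i hi
    have : 0 < bary f T i x * bary f T i c := by
      rw [bary_apply, bary_apply, div_mul_div_comm]
      exact div_pos (hT'.apply_mul_apply_pos hf hε i hx' hc)
        (mul_self_pos.2 (hf.apply_oppVertex_self_ne_zero hT.card_eq hi))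
    exact (mul_pos_iff_of_pos_left (hx i hi)).1 this
  linarith [hT.five_mul_le_abs hf hε hlT hcT, hlc l (Finset.mem_singleton_self l), hε.pos]

theorem eq_of_mem (hT : IsCell f T) (hT' : IsCell f T') (hf : IsSimpleLineArrangement f)
    (hε : IsNarrow f ε) (hx : x ∈ openTriangle f T) (hx' : x ∈ openTriangle f T') : T = T' :=
  (hT'.subset_of_mem hT hf hε hx' hx).antisymm (hT.subset_of_mem hT' hf hε hx hx')

end IsCell

/-! ### Enlarged strips and the network -/

/-- The open triangle bounded by the lines in `T`, with the corner opposite to each line in `R`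
cut off. -/
def clippedTriangle (f : ι → E →ᵃ[ℝ] ℝ) (R T : Finset ι) : Set E :=
  {x ∈ openTriangle f T | ∀ i ∈ R, bary f T i x < 2 / 5}

/-- The corner, opposite to line `i`, of the open triangle bounded by the lines in `T`. -/
def corner (f : ι → E →ᵃ[ℝ] ℝ) (T : Finset ι) (i : ι) : Set E :=
  {x ∈ openTriangle f T | 2 / 5 < bary f T i x}

/-- The strip of half-width `ε` around line `i`, enlarged by all the cells with a side on line `i`,
except for their corners opposite to that side. -/
def enlargedStrip (f : ι → E →ᵃ[ℝ] ℝ) (ε : ℝ) (i : ι) : Set E :=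
  {x | |f i x| < ε} ∪ ⋃ T ∈ {T | IsCell f T ∧ i ∈ T}, clippedTriangle f {i} T

/-- The union of the strips of half-width `ε` around all the lines, enlarged by the corners of
all the cells. -/
def network (f : ι → E →ᵃ[ℝ] ℝ) (ε : ℝ) : Set E :=
  (⋃ i, {x | |f i x| < ε}) ∪ ⋃ T ∈ {T | IsCell f T}, ⋃ i ∈ T, corner f T i

namespace IsSimpleLineArrangement

variable (hf : IsSimpleLineArrangement f)
include hf

theorem isOpen_strip (ε : ℝ) (i : ι) : IsOpen {x | |f i x| < ε} :=
  isOpen_lt (hf.continuous i).abs continuous_const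

theorem isOpen_clippedTriangle (R T : Finset ι) : IsOpen (clippedTriangle f R T) := by
  simp only [clippedTriangle, ofPred_and, ofPred_forall]
  exact (hf.isOpen_openTriangle T).inter <|
    isOpen_biInter_finset fun i _ => isOpen_lt (hf.continuous_bary T i) continuous_const

theorem isOpen_enlargedStrip (ε : ℝ) (i : ι) : IsOpen (enlargedStrip f ε i) :=
  (hf.isOpen_strip ε i).union <| isOpen_biUnion fun _ _ => hf.isOpen_clippedTriangle _ _

theorem isOpen_network (ε : ℝ) : IsOpen (network f ε) :=
  (isOpen_iUnion fun i => hf.isOpen_strip ε i).union <| isOpen_biUnion fun T _ =>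
    isOpen_biUnion fun i _ =>
      (hf.isOpen_openTriangle T).inter (isOpen_lt continuous_const (hf.continuous_bary T i))

end IsSimpleLineArrangement

theorem convex_strip (f : ι → E →ᵃ[ℝ] ℝ) (ε : ℝ) (i : ι) : Convex ℝ {x | |f i x| < ε} := by
  simp only [abs_lt]
  exact (convex_Ioo (-ε) ε).affine_preimage (f i)

theorem convex_openTriangle (f : ι → E →ᵃ[ℝ] ℝ) (T : Finset ι) :
    Convex ℝ (openTriangle f T) := by
  simp only [openTriangle, ofPred_forall]
  exact convex_iInter₂ fun i _ => (convex_Ioi 0).affine_preimage (bary f T i)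

theorem convex_clippedTriangle (f : ι → E →ᵃ[ℝ] ℝ) (R T : Finset ι) :
    Convex ℝ (clippedTriangle f R T) := by
  simp only [clippedTriangle, ofPred_and, ofPred_forall]
  exact (convex_openTriangle f T).inter <|
    convex_iInter₂ fun i _ => (convex_Iio _).affine_preimage (bary f T i)

theorem convex_corner (f : ι → E →ᵃ[ℝ] ℝ) (T : Finset ι) (i : ι) : Convex ℝ (corner f T i) :=
  (convex_openTriangle f T).inter ((convex_Ioi _).affine_preimage (bary f T i))

namespace IsCell

theorem mem_enlargedStrip_iff (hT : IsCell f T) (hf : IsSimpleLineArrangement f)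
    (hε : IsNarrow f ε) (hx : x ∈ openTriangle f T) :
    x ∈ enlargedStrip f ε i ↔ i ∈ T ∧ bary f T i x < 2 / 5 := by
  constructor
  · rintro (h | h)
    · have hi : i ∈ T := by
        by_contra hi
        linarith [hT.five_mul_le_abs hf hε hi hx, hε.pos, show |f i x| < ε from h]
      have := abs_lt.1 (hf.abs_bary_lt hε hT.card_eq hi h)
      exact ⟨hi, by linarith⟩
    · obtain ⟨T', ⟨hT', hi⟩, hx', hb⟩ := mem_iUnion₂.1 h
      obtain rfl := hT.eq_of_mem hT' hf hε hx hx'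
      exact ⟨hi, hb i (Finset.mem_singleton_self i)⟩
  · rintro ⟨hi, hb⟩
    exact Or.inr (mem_iUnion₂.2 ⟨T, ⟨hT, hi⟩, hx, by simpa using hb⟩)

theorem mem_network_iff (hT : IsCell f T) (hf : IsSimpleLineArrangement f)
    (hε : IsNarrow f ε) (hx : x ∈ openTriangle f T) :
    x ∈ network f ε ↔ ∃ k ∈ T, 2 / 5 < bary f T k x := by
  constructor
  · rintro (h | h)
    · obtain ⟨i, hi⟩ := mem_iUnion.1 h
      have hiT : i ∈ T := by
        by_contra hiT
        linarith [hT.five_mul_le_abs hf hε hiT hx, hε.pos, show |f i x| < ε from hi]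
      exact hf.exists_two_fifths_lt_bary hT.card_eq hiT
        (abs_lt.1 (hf.abs_bary_lt hε hT.card_eq hiT hi)).2
    · obtain ⟨T', hT', h⟩ := mem_iUnion₂.1 h
      obtain ⟨k, hk, hx', hb⟩ := mem_iUnion₂.1 h
      obtain rfl := hT.eq_of_mem hT' hf hε hx hx'
      exact ⟨k, hk, hb⟩
  · rintro ⟨k, hk, hb⟩
    exact Or.inr (mem_iUnion₂.2 ⟨T, hT, mem_iUnion₂.2 ⟨k, hk, hx, hb⟩⟩)

end IsCell

theorem abs_lt_of_mem_enlargedStrip (hx : ∀ T, IsCell f T → x ∉ openTriangle f T)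
    (hi : x ∈ enlargedStrip f ε i) : |f i x| < ε := by
  refine hi.resolve_right fun h => ?_
  obtain ⟨T, hT, hxT, -⟩ := mem_iUnion₂.1 h
  exact hx T hT.1 hxT

theorem biInter_strip_subset_network (hR : R.Nonempty) :
    ⋂ i ∈ R, {x | |f i x| < ε} ⊆ network f ε :=
  fun _ hx => Or.inl (mem_iUnion.2 ⟨hR.choose, mem_iInter₂.1 hx _ hR.choose_spec⟩)

namespace IsSimpleLineArrangement

variable (hf : IsSimpleLineArrangement f) (hε : IsNarrow f ε)
include hf hε

theorem biInter_strip_nonempty (hR : R.Nonempty) (hR3 : R.card < 3) :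
    (⋂ i ∈ R, {x | |f i x| < ε}).Nonempty := by
  classical
  obtain ⟨i, hi⟩ := hR
  have : Nonempty ι := ⟨i⟩
  obtain ⟨j, hj⟩ := Finset.card_le_one_iff_subset_singleton.1
    (show (R.erase i).card ≤ 1 by rw [Finset.card_erase_of_mem hi]; omega)
  obtain ⟨x, hxi, hxj⟩ := hf.exists_common_zero i j
  refine ⟨x, mem_iInter₂.2 fun k hk => ?_⟩
  obtain rfl | rfl : k = i ∨ k = j := by simpa using Finset.subset_insert_iff.2 hj hk
  exacts [by simpa [hxi] using hε.pos, by simpa [hxj] using hε.pos]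

theorem inter_biInter_enlargedStrip_eq {V : Set E} (hRV : ⋂ i ∈ R, {x | |f i x| < ε} ⊆ V) :
    V ∩ ⋂ i ∈ R, enlargedStrip f ε i = (⋂ i ∈ R, {x | |f i x| < ε}) ∪
      ⋃ T ∈ {T | IsCell f T ∧ R ⊆ T}, V ∩ clippedTriangle f R T := by
  ext x
  constructor
  · rintro ⟨hxV, hxR⟩
    rw [mem_iInter₂] at hxR
    by_cases hx : ∃ T, IsCell f T ∧ x ∈ openTriangle f T
    · obtain ⟨T, hT, hxT⟩ := hx
      have hRT (i) (hi : i ∈ R) := (hT.mem_enlargedStrip_iff hf hε hxT).1 (hxR i hi)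
      exact Or.inr (mem_iUnion₂.2
        ⟨T, ⟨hT, fun i hi => (hRT i hi).1⟩, hxV, hxT, fun i hi => (hRT i hi).2⟩)
    · push Not at hx
      exact Or.inl (mem_iInter₂.2 fun i hi => abs_lt_of_mem_enlargedStrip hx (hxR i hi))
  · rintro (hx | hx)
    · exact ⟨hRV hx, mem_iInter₂.2 fun i hi => Or.inl (mem_iInter₂.1 hx i hi)⟩
    · obtain ⟨T, ⟨hT, hRT⟩, hxV, hxT, hxR⟩ := mem_iUnion₂.1 hx
      exact ⟨hxV, mem_iInter₂.2 fun i hi =>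
        (hT.mem_enlargedStrip_iff hf hε hxT).2 ⟨hRT hi, hxR i hi⟩⟩

/-- Each clipped cell is glued to the intersection of the strips along a piece near the common
part of the sides in `R`. -/
theorem contractibleSpace_inter_biInter_enlargedStrip [Finite ι] {V : Set E} (hR : R.Nonempty)
    (hR3 : R.card < 3) (hV : IsOpen V) (hRV : ⋂ i ∈ R, {x | |f i x| < ε} ⊆ V)
    (hVstar : ∀ T, IsCell f T → R ⊆ T → ∀ c ∈ clippedTriangle f R T,
      (∀ i ∈ T, i ∉ R → 2 / 5 < bary f T i c) → StarConvex ℝ c (V ∩ clippedTriangle f R T)) :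
    ContractibleSpace ↥(V ∩ ⋂ i ∈ R, enlargedStrip f ε i) := by
  have strips_convex : Convex ℝ (⋂ i ∈ R, {x | |f i x| < ε}) :=
    convex_iInter₂ fun i _ => convex_strip f ε i
  have : ContractibleSpace ↥(⋂ i ∈ R, {x | |f i x| < ε}) :=
    strips_convex.contractibleSpace (hf.biInter_strip_nonempty hε hR hR3)
  have near (T) (hT : IsCell f T ∧ R ⊆ T) : ∃ c ∈ ⋂ i ∈ R, {x | |f i x| < ε},
      StarConvex ℝ c (V ∩ clippedTriangle f R T) := by
    obtain ⟨hT, hRT⟩ := hT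
    obtain ⟨c, hcT, hcR, hcb⟩ := hf.exists_mem_openTriangle_near hε hT.card_eq hRT hR hR3
    refine ⟨c, mem_iInter₂.2 hcR, hVstar T hT hRT c ⟨hcT, fun i hi => ?_⟩ hcb⟩
    linarith [(abs_lt.1 (hf.abs_bary_lt hε hT.card_eq (hRT hi) (hcR i hi))).2]
  choose! c hc hcV using near
  rw [hf.inter_biInter_enlargedStrip_eq hε hRV]
  refine contractibleSpace_union_biUnion_of_starConvex (toFinite _)
    (isOpen_biInter_finset fun i _ => hf.isOpen_strip ε i)
    (fun T _ => hV.inter (hf.isOpen_clippedTriangle R T)) hc hcV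
    (fun T hT => (strips_convex.starConvex (hc T hT)).inter (hcV T hT)) ?_
  exact fun T hT T' hT' hne => disjoint_left.2 fun x hx hx' =>
    hne (hT.1.eq_of_mem hT'.1 hf hε hx.2.1 hx'.2.1)

/-- In a cell `T` the network consists of three convex corners; those cut off by `R` disappear
and the others contain `c`. -/
theorem starConvex_network_inter_clippedTriangle {c : E} (hT : IsCell f T)
    (hc : c ∈ clippedTriangle f R T) (hcb : ∀ i ∈ T, i ∉ R → 2 / 5 < bary f T i c) :
    StarConvex ℝ c (network f ε ∩ clippedTriangle f R T) := by
  have eq_union : network f ε ∩ clippedTriangle f R T =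
      ⋃ k ∈ {k | k ∈ T ∧ k ∉ R}, corner f T k ∩ clippedTriangle f R T := by
    ext x
    simp only [mem_iUnion₂]
    constructor
    · rintro ⟨hx, hxc⟩
      obtain ⟨k, hk, hkb⟩ := (hT.mem_network_iff hf hε hxc.1).1 hx
      exact ⟨k, ⟨hk, fun hkR => (hxc.2 k hkR).not_gt hkb⟩, ⟨hxc.1, hkb⟩, hxc⟩
    · rintro ⟨k, ⟨hk, -⟩, hxk, hxc⟩
      exact ⟨(hT.mem_network_iff hf hε hxc.1).2 ⟨k, hk, hxk.2⟩, hxc⟩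
  rw [eq_union]
  exact starConvex_iUnion₂ fun k hk =>
    ((convex_corner f T k).inter (convex_clippedTriangle f R T)).starConvex
      ⟨⟨hc.1, hcb k hk.1 hk.2⟩, hc⟩

theorem isCell_of_mem_biInter_enlargedStrip (hR3 : 3 ≤ R.card)
    (hx : x ∈ ⋂ i ∈ R, enlargedStrip f ε i) : IsCell f R ∧ x ∈ openTriangle f R := by
  rw [mem_iInter₂] at hx
  by_cases hxT : ∃ T, IsCell f T ∧ x ∈ openTriangle f T
  · obtain ⟨T, hT, hxT⟩ := hxT
    obtain rfl : R = T := Finset.eq_of_subset_of_card_le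
      (fun i hi => ((hT.mem_enlargedStrip_iff hf hε hxT).1 (hx i hi)).1) (hT.card_eq.trans_le hR3)
    exact ⟨hT, hxT⟩
  · push Not at hxT
    exact absurd (hf.card_lt_three_of_abs_lt hε fun i hi =>
      abs_lt_of_mem_enlargedStrip hxT (hx i hi)) hR3.not_gt

theorem contractibleSpace_biInter_enlargedStrip [Finite ι] (hR : R.Nonempty)
    (hne : (⋂ i ∈ R, enlargedStrip f ε i).Nonempty) :
    ContractibleSpace ↥(⋂ i ∈ R, enlargedStrip f ε i) := by
  obtain hR3 | hR3 := lt_or_ge R.card 3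
  · rw [← univ_inter (⋂ i ∈ R, enlargedStrip f ε i)]
    refine hf.contractibleSpace_inter_biInter_enlargedStrip hε hR hR3 isOpen_univ
      (subset_univ _) fun T _ _ c hc _ => ?_
    rw [univ_inter]
    exact (convex_clippedTriangle f R T).starConvex hc
  · have eq_clipped : ⋂ i ∈ R, enlargedStrip f ε i = clippedTriangle f R R := by
      ext x
      constructor
      · intro hx
        obtain ⟨hRc, hxR⟩ := hf.isCell_of_mem_biInter_enlargedStrip hε hR3 hx
        exact ⟨hxR, fun i hi =>
          ((hRc.mem_enlargedStrip_iff hf hε hxR).1 (mem_iInter₂.1 hx i hi)).2⟩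
      · rintro ⟨hxR, hxb⟩
        have hRc := (hf.isCell_of_mem_biInter_enlargedStrip hε hR3 hne.some_mem).1
        exact mem_iInter₂.2 fun i hi => (hRc.mem_enlargedStrip_iff hf hε hxR).2 ⟨hi, hxb i hi⟩
    rw [eq_clipped] at hne ⊢
    exact (convex_clippedTriangle f R R).contractibleSpace hne

theorem network_inter_biInter_enlargedStrip_eq_empty (hR3 : 3 ≤ R.card) :
    network f ε ∩ ⋂ i ∈ R, enlargedStrip f ε i = ∅ := by
  refine eq_empty_of_forall_notMem fun x ⟨hxN, hx⟩ => ?_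
  obtain ⟨hR, hxR⟩ := hf.isCell_of_mem_biInter_enlargedStrip hε hR3 hx
  obtain ⟨k, hk, hkb⟩ := (hR.mem_network_iff hf hε hxR).1 hxN
  exact ((hR.mem_enlargedStrip_iff hf hε hxR).1 (mem_iInter₂.1 hx k hk)).2.not_gt hkb

theorem contractibleSpace_network_inter_biInter_enlargedStrip [Finite ι] (hR : R.Nonempty)
    (hR3 : R.card < 3) : ContractibleSpace ↥(network f ε ∩ ⋂ i ∈ R, enlargedStrip f ε i) :=
  hf.contractibleSpace_inter_biInter_enlargedStrip hε hR hR3 (hf.isOpen_network ε)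
    (biInter_strip_subset_network hR)
    fun _ hT _ _ hc hcb => hf.starConvex_network_inter_clippedTriangle hε hT hc hcb

theorem exists_mem_enlargedStrip_of_mem_network (hx : x ∈ network f ε) :
    ∃ i, x ∈ enlargedStrip f ε i := by
  obtain h | h := hx
  · exact (mem_iUnion.1 h).imp fun _ => Or.inl
  · obtain ⟨T, hT, h⟩ := mem_iUnion₂.1 h
    obtain ⟨_, _, hxT, _⟩ := mem_iUnion₂.1 h
    obtain ⟨i, hi, hib⟩ := hf.exists_bary_lt_two_fifths hT.card_eq x
    exact ⟨i, (hT.mem_enlargedStrip_iff hf hε hxT).2 ⟨hi, hib⟩⟩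

theorem biInter_enlargedStrip_nonempty_of_isCell (hT : IsCell f T) :
    (⋂ i ∈ T, enlargedStrip f ε i).Nonempty := by
  obtain ⟨x, hx⟩ := hf.exists_bary_eq hT.card_eq (w := fun _ => 1 / 3) (by simp [hT.card_eq])
  have hxT : x ∈ openTriangle f T := fun i hi => by norm_num [hx i hi]
  exact ⟨x, mem_iInter₂.2 fun i hi =>
    (hT.mem_enlargedStrip_iff hf hε hxT).2 ⟨hi, by norm_num [hx i hi]⟩⟩

theorem isPathConnected_network [Finite ι] [Nonempty ι] : IsPathConnected (network f ε) := by
  classical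
  have path (i : ι) : IsPathConnected (network f ε ∩ enlargedStrip f ε i) := by
    have := hf.contractibleSpace_network_inter_biInter_enlargedStrip hε
      (Finset.singleton_nonempty i) (by simp)
    rw [Finset.set_biInter_singleton] at this
    exact isPathConnected_iff_pathConnectedSpace.2 inferInstance
  obtain ⟨x, hx⟩ := (path (Classical.arbitrary ι)).nonempty
  refine isPathConnected_iff.2 ⟨⟨x, hx.1⟩, fun x hx y hy => ?_⟩
  obtain ⟨i, hi⟩ := hf.exists_mem_enlargedStrip_of_mem_network hε hx
  obtain ⟨j, hj⟩ := hf.exists_mem_enlargedStrip_of_mem_network hε hy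
  obtain ⟨z, hzi, hzj⟩ := hf.exists_common_zero i j
  have hzi : |f i z| < ε := by simpa [hzi] using hε.pos
  have hzj : |f j z| < ε := by simpa [hzj] using hε.pos
  have hzN : z ∈ network f ε := Or.inl (mem_iUnion.2 ⟨i, hzi⟩)
  exact (((path i).joinedIn x ⟨hx, hi⟩ z ⟨hzN, Or.inl hzi⟩).mono inter_subset_left).trans
    (((path j).joinedIn z ⟨hzN, Or.inl hzj⟩ y ⟨hy, hj⟩).mono inter_subset_left)

end IsSimpleLineArrangement

end LineArrangement

section Family

variable {E : Type*} [NormedAddCommGroup E] [NormedSpace ℝ E] {m : ℕ} {f : Fin m → E →ᵃ[ℝ] ℝ}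
  {ε : ℝ}

/-- The family consisting of the network, at index `0`, and the enlarged strips around the `m`
lines, at the indices `1, …, m`. -/
def networkFamily (f : Fin m → E →ᵃ[ℝ] ℝ) (ε : ℝ) : Fin (m + 1) → Set E :=
  Fin.cons (network f ε) (enlargedStrip f ε)

theorem exists_eq_map_succ_or (σ : Finset (Fin (m + 1))) : ∃ R : Finset (Fin m),
    σ = R.map (Fin.succEmb m) ∨ σ = insert 0 (R.map (Fin.succEmb m)) := by
  refine ⟨Finset.univ.filter (Fin.succ · ∈ σ), ?_⟩
  by_cases h0 : 0 ∈ σ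
  · right; ext i; cases i using Fin.cases <;> simp [h0]
  · left; ext i; cases i using Fin.cases <;> simp [h0]

theorem biInter_map_networkFamily (R : Finset (Fin m)) :
    ⋂ i ∈ R.map (Fin.succEmb m), networkFamily f ε i = ⋂ i ∈ R, enlargedStrip f ε i := by
  ext x; simp [networkFamily]

theorem biInter_insert_networkFamily (R : Finset (Fin m)) :
    ⋂ i ∈ insert 0 (R.map (Fin.succEmb m)), networkFamily f ε i =
      network f ε ∩ ⋂ i ∈ R, enlargedStrip f ε i := by
  rw [Finset.set_biInter_insert, biInter_map_networkFamily]
  rfl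

theorem zero_notMem_map_succ (R : Finset (Fin m)) : 0 ∉ R.map (Fin.succEmb m) := by
  simp

theorem card_insert_map_succ (R : Finset (Fin m)) :
    (insert 0 (R.map (Fin.succEmb m))).card = R.card + 1 := by
  rw [Finset.card_insert_of_notMem (zero_notMem_map_succ R), Finset.card_map]

namespace IsSimpleLineArrangement

variable (hf : IsSimpleLineArrangement f)
include hf

theorem isOpen_networkFamily (ε : ℝ) (i : Fin (m + 1)) : IsOpen (networkFamily f ε i) := by
  cases i using Fin.cases
  exacts [hf.isOpen_network ε, hf.isOpen_enlargedStrip ε _]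

variable (hε : IsNarrow f ε)
include hε

theorem contractibleSpace_biInter_networkFamily {σ : Finset (Fin (m + 1))}
    (hσ : ∃ i : Fin m, i.succ ∈ σ) (hne : (⋂ i ∈ σ, networkFamily f ε i).Nonempty) :
    ContractibleSpace ↥(⋂ i ∈ σ, networkFamily f ε i) := by
  obtain ⟨R, rfl | rfl⟩ := exists_eq_map_succ_or σ
  all_goals
    have hR : R.Nonempty := hσ.imp fun i hi => by simpa using hi
  · rw [biInter_map_networkFamily] at hne ⊢
    exact hf.contractibleSpace_biInter_enlargedStrip hε hR hne
  · rw [biInter_insert_networkFamily] at hne ⊢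
    refine hf.contractibleSpace_network_inter_biInter_enlargedStrip hε hR ?_
    by_contra! hR3
    exact hne.ne_empty (hf.network_inter_biInter_enlargedStrip_eq_empty hε hR3)

theorem contractibleSpace_networkFamily {i : Fin (m + 1)} (hi : i ≠ 0) :
    ContractibleSpace ↥(networkFamily f ε i) := by
  obtain ⟨j, rfl⟩ := Fin.exists_succ_eq.2 hi
  obtain ⟨x, hx, -⟩ := hf.exists_common_zero j j
  have hmem : x ∈ enlargedStrip f ε j := Or.inl (by simpa [hx] using hε.pos)
  have h := hf.contractibleSpace_biInter_networkFamily hε (σ := {j.succ}) ⟨j, by simp⟩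
  rw [Finset.set_biInter_singleton] at h
  exact h ⟨x, hmem⟩

theorem biInter_networkFamily_eq_empty_or_isPathConnected {σ : Finset (Fin (m + 1))}
    (hσ : σ.Nonempty) : ⋂ i ∈ σ, networkFamily f ε i = ∅ ∨
      IsPathConnected (⋂ i ∈ σ, networkFamily f ε i) := by
  refine (eq_empty_or_nonempty _).imp_right fun hne => ?_
  by_cases h : ∃ i : Fin m, i.succ ∈ σ
  · have := hf.contractibleSpace_biInter_networkFamily hε h hne
    exact isPathConnected_iff_pathConnectedSpace.2 inferInstance
  · obtain rfl : σ = {0} := hσ.subset_singleton_iff.1 fun i hi => by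
      cases i using Fin.cases with
      | zero => simp
      | succ i => exact absurd ⟨i, hi⟩ h
    rw [Finset.set_biInter_singleton] at hne ⊢
    obtain ⟨i, -⟩ := hf.exists_mem_enlargedStrip_of_mem_network hε hne.some_mem
    have : Nonempty (Fin m) := ⟨i⟩
    exact hf.isPathConnected_network hε

theorem fNum_networkFamily_three : fNum (networkFamily f ε) 3 = 0 := by
  refine Nat.card_eq_zero.2 (Or.inl ⟨fun ⟨σ, hσ, hne⟩ => ?_⟩)
  obtain ⟨R, rfl | rfl⟩ := exists_eq_map_succ_or σ
  · rw [Finset.card_map] at hσ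
    rw [biInter_map_networkFamily] at hne
    have := (hf.isCell_of_mem_biInter_enlargedStrip hε (by omega) hne.some_mem).1.card_eq
    omega
  · rw [card_insert_map_succ] at hσ
    rw [biInter_insert_networkFamily] at hne
    exact hne.ne_empty (hf.network_inter_biInter_enlargedStrip_eq_empty hε (by omega))

/-- The network meets the intersection of any two strips, and the three strips along the sides of
a cell meet inside it. -/
theorem choose_two_add_card_cells_le_fNum :
    m.choose 2 + Nat.card {T // IsCell f T} ≤ fNum (networkFamily f ε) 2 := by
  have card_pairs : Nat.card {S : Finset (Fin m) // S.card = 2} = m.choose 2 := by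
    rw [Nat.card_eq_fintype_card, Fintype.card_finset_len, Fintype.card_fin]
  rw [← card_pairs, ← Nat.card_sum]
  refine Nat.card_le_card_of_injective (Sum.elim
    (fun S => ⟨insert 0 (S.1.map (Fin.succEmb m)), ?_, ?_⟩)
    fun T => ⟨T.1.map (Fin.succEmb m), ?_, ?_⟩) ?_
  · rw [card_insert_map_succ, S.2]
  · rw [biInter_insert_networkFamily]
    have := hf.contractibleSpace_network_inter_biInter_enlargedStrip hε
      (Finset.card_pos.1 (two_pos.trans_eq S.2.symm)) (S.2.trans_lt (by norm_num))
    exact nonempty_coe_sort.1 PathConnectedSpace.nonempty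
  · rw [Finset.card_map, T.2.card_eq]
  · rw [biInter_map_networkFamily]
    exact hf.biInter_enlargedStrip_nonempty_of_isCell hε T.2
  · have map_injective : Function.Injective (Finset.map (Fin.succEmb m)) :=
      Finset.map_injective _
    refine Function.Injective.sumElim (fun S S' h => ?_) (fun T T' h => ?_) fun S T h => ?_
    · have h := congrArg (Finset.erase · 0) (Subtype.mk.inj h)
      simp only [Finset.erase_insert (zero_notMem_map_succ _)] at h
      exact Subtype.ext (map_injective h)
    · exact Subtype.ext (map_injective (Subtype.mk.inj h))
    · exact zero_notMem_map_succ T.1 (Subtype.mk.inj h ▸ Finset.mem_insert_self _ _)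

end IsSimpleLineArrangement

end Family

/-! ### Tangents of the deltoid -/

section Deltoid

open Real

/-- The affine function whose zero line is the tangent in direction `(-sin θ, cos θ)` of the
deltoid that is the envelope of these lines. -/
noncomputable def deltoidTangent (θ : ℝ) : EuclideanSpace ℝ (Fin 2) →ᵃ[ℝ] ℝ :=
  (cos θ • EuclideanSpace.projₗ 0 + sin θ • EuclideanSpace.projₗ 1 :
    EuclideanSpace ℝ (Fin 2) →ₗ[ℝ] ℝ).toAffineMap - AffineMap.const ℝ _ (sin (3 * θ))

variable {α β γ : ℝ} {x : EuclideanSpace ℝ (Fin 2)}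

theorem deltoidTangent_apply (θ : ℝ) (x : EuclideanSpace ℝ (Fin 2)) :
    deltoidTangent θ x = cos θ * x 0 + sin θ * x 1 - sin (3 * θ) := by
  simp [deltoidTangent]

theorem exists_deltoidTangent_eq_zero (α β : ℝ) :
    ∃ x, deltoidTangent α x = 0 ∧ deltoidTangent β x = 0 := by
  refine ⟨!₂[4 * sin α * sin β * sin (α + β), 4 * cos α * cos β * cos (α + β) - 1], ?_, ?_⟩ <;>
  simp only [deltoidTangent_apply, sin_three_mul, sin_add, cos_add,
    Matrix.cons_val_zero, Matrix.cons_val_one]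
  · linear_combination 4 * sin α * cos α ^ 2 * sin_sq_add_cos_sq β +
      4 * sin α * sin_sq_add_cos_sq α
  · linear_combination 4 * sin β * cos β ^ 2 * sin_sq_add_cos_sq α +
      4 * sin β * sin_sq_add_cos_sq β

theorem deltoidTangent_mul_sin_cyclic_sum (α β γ : ℝ) (x : EuclideanSpace ℝ (Fin 2)) :
    deltoidTangent α x * sin (β - γ) + deltoidTangent β x * sin (γ - α) +
      deltoidTangent γ x * sin (α - β) =
    -4 * sin (α + β + γ) * sin (α - β) * sin (β - γ) * sin (γ - α) := by
  have sin_three_mul_homog (θ : ℝ) : sin (3 * θ) = 3 * sin θ * cos θ ^ 2 - sin θ ^ 3 := by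
    rw [sin_three_mul]
    linear_combination (-3 * sin θ) * sin_sq_add_cos_sq θ
  have unit_mul_unit (θ φ : ℝ) : (sin θ ^ 2 + cos θ ^ 2) * (sin φ ^ 2 + cos φ ^ 2) = 1 := by
    rw [sin_sq_add_cos_sq, sin_sq_add_cos_sq, one_mul]
  simp only [deltoidTangent_apply, sin_three_mul_homog, sin_sub, sin_add, cos_add]
  linear_combination
    (3 * sin α * cos α ^ 2 - sin α ^ 3) * (sin β * cos γ - cos β * sin γ) * unit_mul_unit β γ +
    (3 * sin β * cos β ^ 2 - sin β ^ 3) * (sin γ * cos α - cos γ * sin α) * unit_mul_unit γ α +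
    (3 * sin γ * cos γ ^ 2 - sin γ ^ 3) * (sin α * cos β - cos α * sin β) * unit_mul_unit α β

theorem deltoidTangent_eq_of_eq_zero (α : ℝ) (hβγ : sin (β - γ) ≠ 0)
    (hβ : deltoidTangent β x = 0) (hγ : deltoidTangent γ x = 0) :
    deltoidTangent α x = 4 * sin (α + β + γ) * (sin (α - β) * sin (α - γ)) := by
  have h := deltoidTangent_mul_sin_cyclic_sum α β γ x
  rw [hβ, hγ, ← neg_sub α γ, sin_neg] at h
  exact mul_right_cancel₀ hβγ (by linear_combination h)

theorem sin_mul_sin_pos_of_mem_Ioo {y z : ℝ} {q : ℤ} (hy : y ∈ Ioo (q * π) ((q + 1) * π))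
    (hz : z ∈ Ioo (q * π) ((q + 1) * π)) : 0 < sin y * sin z := by
  have pos {t : ℝ} (ht : t ∈ Ioo (q * π) ((q + 1) * π)) : 0 < (-1) ^ q * sin t := by
    rw [← sin_sub_int_mul_pi]
    exact sin_pos_of_pos_of_lt_pi (by linarith [ht.1]) (by linarith [ht.2])
  have h := mul_pos (pos hy) (pos hz)
  rwa [mul_mul_mul_comm, ← mul_zpow, neg_one_mul, neg_neg, one_zpow, one_mul] at h

theorem sin_mul_sin_pos_of_not_dvd {m k : ℤ} (hm : 0 < m) (hk : ¬m ∣ k) {η : ℝ} (hη : |η| < 1) :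
    0 < sin (k * π / m) * sin ((k + η) * π / m) := by
  have hm' : (0 : ℝ) < m := by exact_mod_cast hm
  have mem {t : ℝ} (h1 : (k / m : ℤ) * (m : ℝ) < t) (h2 : t < ((k / m : ℤ) + 1) * (m : ℝ)) :
      t * π / m ∈ Ioo ((k / m : ℤ) * π) (((k / m : ℤ) + 1) * π) := by
    have := pi_pos
    constructor
    · rw [lt_div_iff₀ hm']; nlinarith
    · rw [div_lt_iff₀ hm']; nlinarith
  have h1 : (k / m : ℤ) * (m : ℝ) + 1 ≤ k := by
    have := (Int.emod_pos_of_not_dvd hk).resolve_left hm.ne'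
    have := Int.mul_ediv_add_emod k m
    exact_mod_cast (by nlinarith : k / m * m + 1 ≤ k)
  have h2 : (k : ℝ) + 1 ≤ ((k / m : ℤ) + 1) * (m : ℝ) := by
    have := Int.emod_lt_of_pos k hm
    have := Int.mul_ediv_add_emod k m
    exact_mod_cast (by nlinarith : k + 1 ≤ (k / m + 1) * m)
  obtain ⟨hη1, hη2⟩ := abs_lt.1 hη
  exact sin_mul_sin_pos_of_mem_Ioo (mem (by linarith) (by linarith))
    (mem (by linarith) (by linarith))

/-- The angles of `m` tangents of the deltoid, chosen such that the sum of three of them, which for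
concurrent tangents is a multiple of `π`, often comes close to a multiple of `π` but never is one.
-/
noncomputable def tangentAngle (m : ℕ) (i : Fin m) : ℝ := (i + 1 / 6) * π / m

/-- The Füredi–Palásti arrangement of `m` lines with about `m ^ 2 / 3` triangular cells. -/
noncomputable def deltoidArrangement (m : ℕ) (i : Fin m) : EuclideanSpace ℝ (Fin 2) →ᵃ[ℝ] ℝ :=
  deltoidTangent (tangentAngle m i)

variable {m : ℕ} {i j k l : Fin m} {T : Finset (Fin m)}

theorem tangentAngle_sub (i j : Fin m) :
    tangentAngle m i - tangentAngle m j = ((i - j : ℤ) : ℝ) * π / (m : ℤ) := by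
  simp only [tangentAngle]
  push_cast
  ring

theorem not_dvd_sub (hij : i ≠ j) : ¬(m : ℤ) ∣ i - j := fun h =>
  hij <| Fin.ext <| by
    have := Int.eq_zero_of_abs_lt_dvd h (by rw [abs_lt]; omega)
    omega

theorem sin_tangentAngle_sub_ne_zero (hij : i ≠ j) :
    sin (tangentAngle m i - tangentAngle m j) ≠ 0 := by
  have hm : (0 : ℤ) < m := by exact_mod_cast i.pos
  rw [tangentAngle_sub]
  exact left_ne_zero_of_mul (sin_mul_sin_pos_of_not_dvd hm (not_dvd_sub hij) (η := 0) (by simp)).ne'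

theorem tangentAngle_add_add (i j k : Fin m) :
    tangentAngle m i + tangentAngle m j + tangentAngle m k =
      (((i + j + k : ℕ) : ℝ) + 1 / 2) * π / m := by
  simp only [tangentAngle]
  push_cast
  ring

theorem sin_tangentAngle_add_add_ne_zero (i j k : Fin m) :
    sin (tangentAngle m i + tangentAngle m j + tangentAngle m k) ≠ 0 := by
  rw [tangentAngle_add_add, Ne, sin_eq_zero_iff]
  rintro ⟨q, hq⟩
  have hm : (m : ℝ) ≠ 0 := by exact_mod_cast i.pos.ne'
  have h : ((2 * (q * m) : ℤ) : ℝ) = ((2 * (i + j + k : ℕ) + 1 : ℤ) : ℝ) := by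
    push_cast
    rw [eq_div_iff hm] at hq
    exact mul_right_cancel₀ pi_ne_zero (by push_cast at hq; linear_combination 2 * hq)
  have := Int.cast_injective h
  omega

theorem isSimpleLineArrangement_deltoidArrangement (m : ℕ) :
    IsSimpleLineArrangement (deltoidArrangement m) where
  finrank_eq_two := finrank_euclideanSpace_fin
  exists_common_zero _ _ := exists_deltoidTangent_eq_zero _ _
  not_concurrent i j k hij hik hjk x hi hj := by
    rw [deltoidArrangement, deltoidTangent_eq_of_eq_zero _ (sin_tangentAngle_sub_ne_zero hij) hi hj]
    exact mul_ne_zero (mul_ne_zero four_ne_zero (sin_tangentAngle_add_add_ne_zero _ _ _))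
      (mul_ne_zero (sin_tangentAngle_sub_ne_zero hik.symm) (sin_tangentAngle_sub_ne_zero hjk.symm))

/-- With `N` the sum of `T`, the value at the vertex opposite to `i` is
`4 * sin (k * π / m + Θ)`, with `k = l - i` and `Θ = (N + 1 / 2) * π / m`, times two sines; the
remaining factor `sin (k * π / m)` of the product turns these two into a square. -/
theorem prod_sin_mul_deltoidArrangement_oppVertex_pos (hT : T.card = 3) {q : ℤ} {η : ℝ}
    (hη : |η| < 1) (hN : ((∑ j ∈ T, (j : ℕ) : ℕ) : ℝ) + 1 / 2 = q * m + η) (hl : l ∉ T)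
    (hi : i ∈ T) :
    0 < (-1) ^ q * (∏ j ∈ T, sin (tangentAngle m l - tangentAngle m j)) *
      deltoidArrangement m l (oppVertex (deltoidArrangement m) T i) := by
  have hf := isSimpleLineArrangement_deltoidArrangement m
  have hm : (0 : ℤ) < m := by exact_mod_cast l.pos
  have hm' : (m : ℝ) ≠ 0 := by exact_mod_cast l.pos.ne'
  have ne_of_mem {j : Fin m} (hj : j ∈ T) : l ≠ j := fun h => hl (h ▸ hj)
  obtain ⟨a, b, hai, hbi, hab, hTeq⟩ := exists_eq_insert_pair_of_mem hT hi
  have ha : a ∈ T := by simp [hTeq]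
  have hb : b ∈ T := by simp [hTeq]
  have value : deltoidArrangement m l (oppVertex (deltoidArrangement m) T i) =
      4 * sin (tangentAngle m l + tangentAngle m a + tangentAngle m b) *
        (sin (tangentAngle m l - tangentAngle m a) * sin (tangentAngle m l - tangentAngle m b)) :=
    deltoidTangent_eq_of_eq_zero _ (sin_tangentAngle_sub_ne_zero hab)
      (hf.apply_oppVertex_of_ne hT hi ha hai) (hf.apply_oppVertex_of_ne hT hi hb hbi)
  have hi_pair : i ∉ ({a, b} : Finset (Fin m)) := by simp [hai.symm, hbi.symm]
  have prod : ∏ j ∈ T, sin (tangentAngle m l - tangentAngle m j) =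
      sin (tangentAngle m l - tangentAngle m i) * (sin (tangentAngle m l - tangentAngle m a) *
        sin (tangentAngle m l - tangentAngle m b)) := by
    rw [hTeq, Finset.prod_insert hi_pair, Finset.prod_pair hab]
  have sum_angle : tangentAngle m l + tangentAngle m a + tangentAngle m b =
      (((l - i : ℤ) : ℝ) + η) * π / (m : ℤ) + q * π := by
    rw [hTeq, Finset.sum_insert hi_pair, Finset.sum_pair hab] at hN
    rw [tangentAngle_add_add, Int.cast_natCast, div_add' _ _ _ hm']
    push_cast at hN ⊢
    congr 1
    linear_combination π * hN
  rw [value, prod, sum_angle, sin_add_int_mul_pi, tangentAngle_sub l i]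
  set u := sin (((l - i : ℤ) : ℝ) * π / (m : ℤ))
  set v := sin ((((l - i : ℤ) : ℝ) + η) * π / (m : ℤ))
  set w := sin (tangentAngle m l - tangentAngle m a) * sin (tangentAngle m l - tangentAngle m b)
  have uv_pos : 0 < u * v := sin_mul_sin_pos_of_not_dvd hm (not_dvd_sub (ne_of_mem hi)) hη
  have w_ne_zero : w ≠ 0 := mul_ne_zero (sin_tangentAngle_sub_ne_zero (ne_of_mem ha))
    (sin_tangentAngle_sub_ne_zero (ne_of_mem hb))
  calc 0 < 4 * ((-1) ^ q * w) ^ 2 * (u * v) := by positivity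
    _ = (-1) ^ q * (u * w) * (4 * ((-1) ^ q * v) * w) := by ring

theorem isCell_deltoidArrangement (hT : T.card = 3)
    (h : m ∣ ∑ j ∈ T, (j : ℕ) ∨ m ∣ ∑ j ∈ T, (j : ℕ) + 1) :
    IsCell (deltoidArrangement m) T := by
  obtain ⟨q, η, hη, hN⟩ : ∃ (q : ℤ) (η : ℝ), |η| < 1 ∧
      ((∑ j ∈ T, (j : ℕ) : ℕ) : ℝ) + 1 / 2 = q * m + η := by
    obtain ⟨q, hq⟩ | ⟨q, hq⟩ := h
    · exact ⟨q, 1 / 2, by norm_num [abs_lt], by rw [hq]; push_cast; ring⟩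
    · refine ⟨q, -1 / 2, by norm_num [abs_lt], ?_⟩
      have : ((∑ j ∈ T, (j : ℕ) : ℕ) : ℝ) + 1 = m * q := by exact_mod_cast hq
      rw [Int.cast_natCast]
      linear_combination this
  refine ⟨hT, fun l hl => ?_⟩
  have h (i) := prod_sin_mul_deltoidArrangement_oppVertex_pos (i := i) hT hη hN hl
  obtain hc | hc := le_or_gt 0 ((-1) ^ q * ∏ j ∈ T, sin (tangentAngle m l - tangentAngle m j))
  · exact Or.inl fun i hi => pos_of_mul_pos_right (h i hi) hc
  · exact Or.inr fun i hi => neg_of_mul_pos_right (h i hi) hc.le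

end Deltoid

/-! ### Counting the cells -/

section Counting

/-- All but `3 * card G` ordered pairs extend to a triple with sum `s`, and each such triple arises
from six pairs. -/
theorem sq_card_le_card_triples_sum_eq {G : Type*} [AddCommGroup G] [Fintype G] [DecidableEq G]
    (s : G) : Fintype.card G ^ 2 ≤
      6 * (Finset.univ.filter fun T : Finset G => T.card = 3 ∧ ∑ g ∈ T, g = s).card +
        3 * Fintype.card G := by
  let third (p : G × G) : G := s - p.1 - p.2
  let P : Finset (G × G) :=
    Finset.univ.filter fun p => p.1 ≠ p.2 ∧ p.1 ≠ third p ∧ p.2 ≠ third p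
  have hP : P.card ≤
      6 * (Finset.univ.filter fun T : Finset G => T.card = 3 ∧ ∑ g ∈ T, g = s).card := by
    refine Finset.card_le_mul_card_image_of_maps_to (f := fun p => {p.1, p.2, third p})
      (fun p hp => ?_) 6 fun T hT => ?_
    · obtain ⟨h12, h13, h23⟩ := (Finset.mem_filter.1 hp).2
      refine Finset.mem_filter.2 ⟨Finset.mem_univ _, Finset.card_eq_three.2
        ⟨_, _, _, h12, h13, h23, rfl⟩, ?_⟩
      rw [Finset.sum_insert (by simp [h12, h13]), Finset.sum_pair h23]
      simp only [third]
      abel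
    · obtain ⟨hT3, -⟩ := (Finset.mem_filter.1 hT).2
      calc _ ≤ T.offDiag.card := Finset.card_le_card fun p hp => ?_
        _ = 6 := by rw [Finset.offDiag_card, hT3]
      obtain ⟨hpP, rfl⟩ := Finset.mem_filter.1 hp
      simp [(Finset.mem_filter.1 hpP).2.1]
  have hPc : Pᶜ.card ≤ 3 * Fintype.card G := by
    let exceptional : Fin 3 → G → G × G :=
      ![fun g => (g, g), fun g => (g, s - g - g), fun g => (s - g - g, g)]
    calc Pᶜ.card ≤ (Finset.univ.image fun a : Fin 3 × G => exceptional a.1 a.2).card :=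
          Finset.card_le_card fun ⟨g, h⟩ hp => ?_
      _ ≤ 3 * Fintype.card G := by
        simpa using Finset.card_image_le (s := Finset.univ)
          (f := fun a : Fin 3 × G => exceptional a.1 a.2)
    simp only [P, third, Finset.mem_compl, Finset.mem_filter, Finset.mem_univ, true_and,
      not_and_or, not_ne_iff] at hp
    simp only [Finset.mem_image, Finset.mem_univ, true_and, Prod.exists]
    obtain h' | h' | h' := hp
    · exact ⟨0, g, by simp [exceptional, h']⟩
    · exact ⟨1, g, Prod.ext rfl (sub_eq_of_eq_add' (eq_sub_iff_add_eq.1 h').symm)⟩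
    · exact ⟨2, h, Prod.ext (by simp [exceptional, sub_sub, eq_sub_iff_add_eq.1 h']) rfl⟩
  rw [sq, ← Fintype.card_prod, ← Finset.card_add_card_compl P]
  exact add_le_add hP hPc

open scoped Fin.CommRing in
theorem natCast_sum_val {m : ℕ} [NeZero m] (T : Finset (Fin m)) :
    ((∑ j ∈ T, (j : ℕ) : ℕ) : Fin m) = ∑ j ∈ T, j := by
  rw [Nat.cast_sum]
  exact Finset.sum_congr rfl fun j _ => Fin.cast_val_eq_self j

open scoped Fin.CommRing in
theorem isCell_deltoidArrangement_of_sum_eq {m : ℕ} [NeZero m] {T : Finset (Fin m)}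
    (hT : T.card = 3) (hs : ∑ j ∈ T, j = 0 ∨ ∑ j ∈ T, j = -1) :
    IsCell (deltoidArrangement m) T :=
  isCell_deltoidArrangement hT <| hs.imp
    (fun h => by rw [← Fin.natCast_eq_zero, natCast_sum_val, h])
    (fun h => by rw [← Fin.natCast_eq_zero, Nat.cast_succ, natCast_sum_val, h, neg_add_cancel])

theorem sq_le_three_mul_card_cells (m : ℕ) :
    m ^ 2 ≤ 3 * Nat.card {T // IsCell (deltoidArrangement m) T} + 3 * m := by
  classical
  obtain hm | hm := le_or_gt m 1
  · interval_cases m <;> omega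
  have : NeZero m := ⟨by omega⟩
  let triples (s : Fin m) := Finset.univ.filter fun T : Finset (Fin m) =>
    T.card = 3 ∧ ∑ j ∈ T, j = s
  have disjoint : Disjoint (triples 0) (triples (-1)) :=
    Finset.disjoint_filter.2 fun T _ h h' => by
      have one_eq_zero : (1 : Fin m) = 0 := neg_eq_zero.1 (h'.2.symm.trans h.2)
      simpa [Nat.mod_eq_of_lt hm] using congrArg Fin.val one_eq_zero
  have card_triples : (triples 0).card + (triples (-1)).card ≤
      Nat.card {T // IsCell (deltoidArrangement m) T} := by
    rw [← Finset.card_union_of_disjoint disjoint, Nat.card_eq_fintype_card,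
      Fintype.card_subtype]
    refine Finset.card_le_card (Finset.union_subset (fun T hT => ?_) fun T hT => ?_) <;>
    obtain ⟨hT3, hs⟩ := (Finset.mem_filter.1 hT).2
    · simpa using isCell_deltoidArrangement_of_sum_eq hT3 (Or.inl hs)
    · simpa using isCell_deltoidArrangement_of_sum_eq hT3 (Or.inr hs)
  have sq_le (s : Fin m) : m ^ 2 ≤ 6 * (triples s).card + 3 * m := by
    simpa only [Fintype.card_fin] using sq_card_le_card_triples_sum_eq s
  linarith [sq_le 0, sq_le (-1)]

end Counting

theorem construction_lower_bound_general (n : ℕ) (hn : 1 ≤ n) :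
    ∃ A : Fin n → Set (EuclideanSpace ℝ (Fin 2)),
      (∀ i, IsOpen (A i)) ∧
      (∀ σ : Finset (Fin n), σ.Nonempty →
        (⋂ i ∈ σ, A i) = ∅ ∨ IsPathConnected (⋂ i ∈ σ, A i)) ∧
      fNum A 3 = 0 ∧
      (((n - 1).choose 2 : ℝ) + ((n : ℝ) - 1) * (n - 4) / 3 ≤ (fNum A 2 : ℝ)) ∧
      (∃ i₀ : Fin n, ∀ i : Fin n, i ≠ i₀ → ContractibleSpace ↥(A i)) ∧
      (∀ σ : Finset (Fin n), σ.card = 2 ∨ σ.card = 3 → (⋂ i ∈ σ, A i).Nonempty →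
        ContractibleSpace ↥(⋂ i ∈ σ, A i)) := by
  obtain ⟨m, rfl⟩ := Nat.exists_eq_add_of_le' hn
  have hf := isSimpleLineArrangement_deltoidArrangement m
  obtain ⟨ε, hε⟩ := exists_isNarrow (deltoidArrangement m)
  refine ⟨networkFamily (deltoidArrangement m) ε, hf.isOpen_networkFamily ε,
    fun _ => hf.biInter_networkFamily_eq_empty_or_isPathConnected hε,
    hf.fNum_networkFamily_three hε, ?_,
    ⟨0, fun _ => hf.contractibleSpace_networkFamily hε⟩,
    fun σ hσ => hf.contractibleSpace_biInter_networkFamily hε ?_⟩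
  · have hcells := sq_le_three_mul_card_cells m
    have hcount := hf.choose_two_add_card_cells_le_fNum hε
    rify at hcells hcount
    rw [Nat.add_sub_cancel]
    push_cast
    linarith
  · obtain ⟨i, hi, hi0⟩ := Finset.exists_mem_ne (by omega : 1 < σ.card) 0
    exact ⟨i.pred hi0, by rwa [Fin.succ_pred]⟩

/-- **Theorem (construction).** For every `n ≥ 6` there is a family `𝒜` of `n` open sets
in `ℝ²` with all nonempty subfamily intersections path-connected, `f_3(𝒜) = 0`,
`f_2(𝒜) ≥ C(n-1,2) + (n²-6n+3)/3`, all but one of the sets contractible, and all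
nonempty intersections of pairs and triples contractible. -/
theorem construction_lower_bound (n : ℕ) (hn : 6 ≤ n) :
    ∃ A : Fin n → Set (EuclideanSpace ℝ (Fin 2)),
      (∀ i, IsOpen (A i)) ∧
      (∀ σ : Finset (Fin n), σ.Nonempty →
        (⋂ i ∈ σ, A i) = ∅ ∨ IsPathConnected (⋂ i ∈ σ, A i)) ∧
      fNum A 3 = 0 ∧
      (((n - 1).choose 2 : ℝ) + ((n : ℝ) ^ 2 - 6 * n + 3) / 3 ≤ (fNum A 2 : ℝ)) ∧
      (∃ i₀ : Fin n, ∀ i : Fin n, i ≠ i₀ → ContractibleSpace ↥(A i)) ∧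
      (∀ σ : Finset (Fin n), σ.card = 2 ∨ σ.card = 3 → (⋂ i ∈ σ, A i).Nonempty →
        ContractibleSpace ↥(⋂ i ∈ σ, A i)) := by
  obtain ⟨A, hopen, hconn, h3, h2, hcontr⟩ := construction_lower_bound_general n (by omega)
  exact ⟨A, hopen, hconn, h3, by linarith [n.cast_nonneg (α := ℝ)], hcontr⟩
end

section
/- There exist infinitely many integers n such that there is a family ℬ = {B_1, …, B_n} of n open subsets of ℝ² with: the intersection of every subfamily of ℬ either empty or path-connected; f_3(ℬ) = 0; f_2(ℬ) = C(n−1, 2) + (n²−4n+3)/3; all but one of the sets B_i contractible; and every nonempty intersection of two or of three of the sets contractible. -/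
/-!
An arrangement of `q` open strips in the plane, any two of which cross in a star-shaped region and
no three of which meet, yields `q + 1` open sets: the skeleton, i.e. the union of thin copies of the
strips, and the thick strips, each of them enlarged by all bounded triangular cells of the
complement to which it is adjacent. No four of these sets meet. Three of them meet in a crossing, if
the skeleton is among them, and otherwise in a triangular cell, so that the number of intersecting
triples is the number of crossings plus the number of triangular cells.

It remains to find an arrangement with as many triangular cells as possible. For `m` prime to `3`,
take the boundary of a triangle, opened at one corner, and the `m` billiard paths in it which are
parallel to the sides. In coordinates with constant sum, these paths are `x_c = i` for `i` modulo
`m`; as the sum is a half-integer, no three of them meet. Three paths bound a cell if their indices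
sum up to one of two residues modulo `m`, and each of `m - 1` pairs of successive paths bounds a
cell with the boundary. This makes `(m ^ 2 - 1) / 3` triangular cells for `m + 1` strips.
-/

open Set

section Gluing

variable {E : Type*} [NormedAddCommGroup E] [NormedSpace ℝ E] {A B : Set E} {b : E}

theorem contractibleSpace_union_of_starConvex_s6 (hA : IsOpen A) (hB : IsOpen B)
    (hAc : ContractibleSpace A) (hb : b ∈ A ∩ B) (hBs : StarConvex ℝ b B)
    (hABs : StarConvex ℝ b (A ∩ B)) : ContractibleSpace ↥(A ∪ B) := by
  obtain ⟨φ, hφ₀, hφ₁, hφ⟩ := exists_continuous_zero_one_of_isClosed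
    (hB.preimage continuous_subtype_val).isClosed_compl
    (hA.preimage continuous_subtype_val).isClosed_compl
    (disjoint_left.2 fun (p : ↥(A ∪ B)) hpB hpA => p.2.elim hpA hpB)
  -- Points of `B` are pushed towards `b`, those outside `A` all the way.
  let push : unitInterval × ↥(A ∪ B) → E := fun q =>
    (q.1 * φ q.2 : ℝ) • b + (1 - q.1 * φ q.2 : ℝ) • (q.2 : E)
  have push_mem : ∀ q, push q ∈ A ∪ B := by
    rintro ⟨t, p⟩
    by_cases hpB : (p : E) ∈ B
    · exact Or.inr (hBs hpB (mul_nonneg t.2.1 (hφ p).1)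
        (sub_nonneg.2 (mul_le_one₀ t.2.2 (hφ p).1 (hφ p).2)) (add_sub_cancel _ _))
    · simp [push, hφ₀ hpB]
  have push_one_mem : ∀ p, push (1, p) ∈ A := by
    intro p
    by_cases hpA : (p : E) ∈ A
    · by_cases hpB : (p : E) ∈ B
      · simpa [push] using (hABs ⟨hpA, hpB⟩ (hφ p).1 (sub_nonneg.2 (hφ p).2)
          (add_sub_cancel _ _)).1
      · simpa [push, hφ₀ hpB] using hpA
    · simpa [push, hφ₁ hpA] using hb.1
  have hpush : Continuous push := by fun_prop
  let retraction : C(↥(A ∪ B), A) := ⟨fun p => ⟨push (1, p), push_one_mem p⟩, by fun_prop⟩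
  let inclusion : C(A, ↥(A ∪ B)) := ⟨fun p => ⟨p, Or.inl p.2⟩, by fun_prop⟩
  have homotopic : (ContinuousMap.id _).Homotopic (inclusion.comp retraction) :=
    ⟨⟨⟨fun q => ⟨push q, push_mem q⟩, by fun_prop⟩, fun p => Subtype.ext (by simp [push]),
      fun p => rfl⟩⟩
  obtain ⟨c, hc⟩ : (inclusion.comp retraction).Nullhomotopic :=
    ((id_nullhomotopic A).comp_left retraction).comp_right inclusion
  exact (contractible_iff_id_nullhomotopic _).2 ⟨c, homotopic.trans hc⟩

theorem contractibleSpace_union_biUnion_of_starConvex_s6 {κ : Type*} {s : Set κ} (hs : s.Finite)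
    {B : κ → Set E} (hA : IsOpen A) (hAc : ContractibleSpace A) (hB : ∀ k ∈ s, IsOpen (B k))
    (hdisj : ∀ k ∈ s, ∀ l ∈ s, k ≠ l → B k ∩ B l ⊆ A)
    (hstar : ∀ k ∈ s, ∃ b ∈ A ∩ B k, StarConvex ℝ b (B k) ∧ StarConvex ℝ b (A ∩ B k)) :
    ContractibleSpace ↥(A ∪ ⋃ k ∈ s, B k) := by
  induction s, hs using Set.Finite.induction_on with
  | empty =>
    have union_eq : A ∪ ⋃ k ∈ (∅ : Set κ), B k = A := by simp
    rwa [union_eq]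
  | @insert k s hk _ ih =>
    obtain ⟨b, hb, hBs, hABs⟩ := hstar k (mem_insert k s)
    have hopen : IsOpen (A ∪ ⋃ l ∈ s, B l) :=
      hA.union (isOpen_biUnion fun l hl => hB l (mem_insert_of_mem k hl))
    have inter_eq : (A ∪ ⋃ l ∈ s, B l) ∩ B k = A ∩ B k := by
      refine subset_antisymm ?_ (inter_subset_inter_left _ subset_union_left)
      rintro p ⟨hp | hp, hpk⟩
      · exact ⟨hp, hpk⟩
      · obtain ⟨l, hl, hpl⟩ := mem_iUnion₂.1 hp
        exact ⟨hdisj l (mem_insert_of_mem k hl) k (mem_insert k s)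
          (ne_of_mem_of_not_mem hl hk) ⟨hpl, hpk⟩, hpk⟩
    have union_eq : A ∪ ⋃ l ∈ insert k s, B l = (A ∪ ⋃ l ∈ s, B l) ∪ B k := by
      rw [biUnion_insert, union_comm (B k), union_assoc]
    rw [union_eq]
    rw [← inter_eq] at hb hABs
    exact contractibleSpace_union_of_starConvex_s6 hopen (hB k (mem_insert k s)) (ih
      (fun l hl => hB l (mem_insert_of_mem k hl))
      (fun l hl l' hl' => hdisj l (mem_insert_of_mem k hl) l' (mem_insert_of_mem k hl'))
      (fun l hl => hstar l (mem_insert_of_mem k hl))) hb hBs hABs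

end Gluing

theorem biInter_comp_equiv {α β γ : Type*} (e : γ ≃ β) (A : β → Set α) (σ : Finset γ) :
    ⋂ i ∈ σ, (A ∘ e) i = ⋂ o ∈ σ.map e.toEmbedding, A o :=
  e.iInf_congr fun i => by simp

theorem fNum_comp_equiv {α β : Type*} {n : ℕ} (e : Fin n ≃ β) (A : β → Set α) (k : ℕ) :
    fNum (A ∘ e) k =
      Nat.card {σ : Finset β // σ.card = k + 1 ∧ (⋂ i ∈ σ, A i).Nonempty} :=
  Nat.card_congr (e.finsetCongr.subtypeEquiv fun σ => by
    rw [biInter_comp_equiv, Equiv.finsetCongr_apply, Finset.card_map])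

theorem isPathConnected_iUnion_of_inter_nonempty {X ι : Type*} [TopologicalSpace X] [Nonempty ι]
    {s : ι → Set X} (hs : ∀ i, IsPathConnected (s i)) (h : ∀ i j, (s i ∩ s j).Nonempty) :
    IsPathConnected (⋃ i, s i) := by
  have joined : ∀ {i p q}, p ∈ s i → q ∈ s i → JoinedIn (⋃ i, s i) p q := fun hp hq =>
    ((hs _).joinedIn _ hp _ hq).mono (subset_iUnion s _)
  inhabit ι
  obtain ⟨c, hc⟩ := (hs default).nonempty
  refine ⟨c, mem_iUnion_of_mem _ hc, fun {p} hp => ?_⟩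
  obtain ⟨i, hi⟩ := mem_iUnion.1 hp
  obtain ⟨q, hq, hqi⟩ := h default i
  exact (joined hc hq).trans (joined hqi hi)

/-- A set that is star-shaped about one of its own points. -/
def IsStarShaped {E : Type*} [AddCommGroup E] [Module ℝ E] (s : Set E) : Prop :=
  ∃ b ∈ s, StarConvex ℝ b s

/-- A pseudoline-like arrangement of strips, any two of which cross and no three of which meet,
together with chosen triangular regions of its complement. Each strip `i` comes in two widths,
`core i ⊆ tube i`; the region `cell k` reaches into the three tubes indexed by `verts k` but into no
core. -/
structure TubeArrangement (ι κ E : Type*) [NormedAddCommGroup E] [NormedSpace ℝ E] where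
  core : ι → Set E
  tube : ι → Set E
  cell : κ → Set E
  verts : κ → Finset ι
  isOpen_core : ∀ i, IsOpen (core i)
  isOpen_tube : ∀ i, IsOpen (tube i)
  isOpen_cell : ∀ k, IsOpen (cell k)
  core_subset_tube : ∀ i, core i ⊆ tube i
  contractible_core : ∀ i, ContractibleSpace (core i)
  contractible_tube : ∀ i, ContractibleSpace (tube i)
  exists_crossing : ∀ i j, i ≠ j → ∃ b ∈ core i ∩ core j,
    StarConvex ℝ b (core i ∩ core j) ∧ StarConvex ℝ b (core i ∩ tube j) ∧
      StarConvex ℝ b (tube i ∩ core j) ∧ StarConvex ℝ b (tube i ∩ tube j)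
  not_mem_three_tubes : ∀ i j l, i ≠ j → i ≠ l → j ≠ l → ∀ p ∈ tube i, p ∈ tube j → p ∉ tube l
  verts_injective : verts.Injective
  card_verts : ∀ k, (verts k).card = 3
  convex_cell : ∀ k, Convex ℝ (cell k)
  eq_of_mem_cell : ∀ k l, ∀ p ∈ cell k, p ∈ cell l → k = l
  not_mem_core : ∀ k, ∀ p ∈ cell k, ∀ i, p ∉ core i
  mem_verts : ∀ k, ∀ p ∈ cell k, ∀ i, p ∈ tube i → i ∈ verts k
  isStarShaped_tube_cell : ∀ k, ∀ i ∈ verts k, IsStarShaped (tube i ∩ cell k)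
  isStarShaped_tube_tube_cell : ∀ k, ∀ i ∈ verts k, ∀ j ∈ verts k, i ≠ j →
    IsStarShaped (tube i ∩ tube j ∩ cell k)

theorem exists_eq_insertNone_or_eq_map_some {α : Type*} (σ : Finset (Option α)) :
    ∃ s : Finset α, σ = s.insertNone ∨ σ = s.map .some := by
  classical
  refine ⟨σ.eraseNone, ?_⟩
  by_cases h : none ∈ σ
  · rw [Finset.insertNone_eraseNone, Finset.insert_eq_of_mem h]
    exact Or.inl rfl
  · rw [Finset.map_some_eraseNone, Finset.erase_eq_of_notMem h]
    exact Or.inr rfl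

namespace TubeArrangement

variable {ι κ E : Type*} [NormedAddCommGroup E] [NormedSpace ℝ E] (T : TubeArrangement ι κ E)

/-- The tube `i` enlarged by the cells that reach into it. -/
def fat (i : ι) : Set E := T.tube i ∪ ⋃ k ∈ {k | i ∈ T.verts k}, T.cell k

/-- The union of all cores. -/
def skeleton : Set E := ⋃ i, T.core i

/-- The skeleton (at index `none`) together with the fattened tubes. -/
def family : Option ι → Set E := fun o => o.elim T.skeleton T.fat

theorem isOpen_fat (i : ι) : IsOpen (T.fat i) :=
  (T.isOpen_tube i).union (isOpen_biUnion fun k _ => T.isOpen_cell k)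

theorem isOpen_skeleton : IsOpen T.skeleton := isOpen_iUnion T.isOpen_core

theorem isOpen_family : ∀ o, IsOpen (T.family o)
  | none => T.isOpen_skeleton
  | some i => T.isOpen_fat i

variable {T} {p : E} {i j : ι} {k : κ} {s : Finset ι}

theorem mem_fat_iff_of_mem_cell (hp : p ∈ T.cell k) : p ∈ T.fat i ↔ i ∈ T.verts k := by
  refine ⟨?_, fun hi => Or.inr (mem_iUnion₂.2 ⟨k, hi, hp⟩)⟩
  rintro (hpi | hpl)
  · exact T.mem_verts k p hp i hpi
  · obtain ⟨l, hl, hpl⟩ := mem_iUnion₂.1 hpl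
    rwa [T.eq_of_mem_cell k l p hp hpl]

theorem mem_fat_iff_of_forall_not_mem_cell (hp : ∀ k, p ∉ T.cell k) :
    p ∈ T.fat i ↔ p ∈ T.tube i := by
  simp [fat, hp]

theorem mem_fat_iff_of_mem_skeleton (hp : p ∈ T.skeleton) : p ∈ T.fat i ↔ p ∈ T.tube i := by
  obtain ⟨j, hj⟩ := mem_iUnion.1 hp
  exact mem_fat_iff_of_forall_not_mem_cell fun k hk => T.not_mem_core k p hk j hj

theorem card_le_two_of_forall_mem_tube (hp : ∀ i ∈ s, p ∈ T.tube i) : s.card ≤ 2 := by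
  by_contra! hs
  obtain ⟨i, hi, j, hj, l, hl, hij, hil, hjl⟩ := Finset.two_lt_card.1 hs
  exact T.not_mem_three_tubes i j l hij hil hjl p (hp i hi) (hp j hj) (hp l hl)

theorem exists_mem_cell_of_forall_mem_fat (hs : 3 ≤ s.card) (hp : ∀ i ∈ s, p ∈ T.fat i) :
    ∃ k, s = T.verts k ∧ p ∈ T.cell k := by
  by_cases hk : ∃ k, p ∈ T.cell k
  · obtain ⟨k, hk⟩ := hk
    exact ⟨k, Finset.eq_of_subset_of_card_le
      (fun i hi => (mem_fat_iff_of_mem_cell hk).1 (hp i hi)) (by rwa [T.card_verts]), hk⟩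
  · push Not at hk
    have := card_le_two_of_forall_mem_tube fun i hi =>
      (mem_fat_iff_of_forall_not_mem_cell hk).1 (hp i hi)
    lia

theorem card_le_two_of_mem_skeleton (hp₀ : p ∈ T.skeleton) (hp : ∀ i ∈ s, p ∈ T.fat i) :
    s.card ≤ 2 :=
  card_le_two_of_forall_mem_tube fun i hi => (mem_fat_iff_of_mem_skeleton hp₀).1 (hp i hi)

variable (T)

theorem biInter_fat_verts (k : κ) : ⋂ i ∈ T.verts k, T.fat i = T.cell k := by
  ext p
  rw [mem_iInter₂]
  refine ⟨fun hp => ?_, fun hp i hi => (mem_fat_iff_of_mem_cell hp).2 hi⟩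
  obtain ⟨l, hkl, hl⟩ := exists_mem_cell_of_forall_mem_fat (T.card_verts k).ge hp
  rwa [T.verts_injective hkl]

theorem fat_inter_fat (i j : ι) : T.fat i ∩ T.fat j =
    T.tube i ∩ T.tube j ∪ ⋃ k ∈ {k | i ∈ T.verts k ∧ j ∈ T.verts k}, T.cell k := by
  ext p
  by_cases hk : ∃ k, p ∈ T.cell k
  · obtain ⟨k, hk⟩ := hk
    rw [mem_inter_iff, mem_fat_iff_of_mem_cell hk, mem_fat_iff_of_mem_cell hk]
    refine ⟨fun h => Or.inr (mem_iUnion₂.2 ⟨k, h, hk⟩), ?_⟩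
    rintro (h | h)
    · exact ⟨T.mem_verts k p hk i h.1, T.mem_verts k p hk j h.2⟩
    · obtain ⟨l, hl, hpl⟩ := mem_iUnion₂.1 h
      rwa [T.eq_of_mem_cell k l p hk hpl]
  · push Not at hk
    simp [mem_fat_iff_of_forall_not_mem_cell hk, hk]

theorem skeleton_inter_fat (i : ι) :
    T.skeleton ∩ T.fat i = T.core i ∪ ⋃ j ∈ {j | j ≠ i}, T.core j ∩ T.tube i := by
  ext p
  constructor
  · rintro ⟨hp, hpi⟩
    rw [mem_fat_iff_of_mem_skeleton hp] at hpi
    obtain ⟨j, hj⟩ := mem_iUnion.1 hp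
    by_cases hij : j = i
    · exact Or.inl (hij ▸ hj)
    · exact Or.inr (mem_iUnion₂.2 ⟨j, hij, hj, hpi⟩)
  · rintro (hp | hp)
    · exact ⟨mem_iUnion_of_mem i hp, Or.inl (T.core_subset_tube i hp)⟩
    · obtain ⟨j, -, hj, hi⟩ := mem_iUnion₂.1 hp
      exact ⟨mem_iUnion_of_mem j hj, Or.inl hi⟩

theorem skeleton_inter_fat_inter_fat (hij : i ≠ j) :
    T.skeleton ∩ (T.fat i ∩ T.fat j) = T.core i ∩ T.tube j ∪ T.tube i ∩ T.core j := by
  ext p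
  constructor
  · rintro ⟨hp, hpi, hpj⟩
    rw [mem_fat_iff_of_mem_skeleton hp] at hpi hpj
    obtain ⟨l, hl⟩ := mem_iUnion.1 hp
    by_cases hil : i = l
    · exact Or.inl ⟨hil ▸ hl, hpj⟩
    · by_cases hjl : j = l
      · exact Or.inr ⟨hpi, hjl ▸ hl⟩
      · exact absurd (T.core_subset_tube l hl) (T.not_mem_three_tubes i j l hij hil hjl p hpi hpj)
  · rintro (⟨hi, hj⟩ | ⟨hi, hj⟩)
    · exact ⟨mem_iUnion_of_mem i hi, Or.inl (T.core_subset_tube i hi), Or.inl hj⟩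
    · exact ⟨mem_iUnion_of_mem j hj, Or.inl hi, Or.inl (T.core_subset_tube j hj)⟩

theorem contractibleSpace_cell (k : κ) : ContractibleSpace (T.cell k) := by
  obtain ⟨i, hi⟩ := Finset.card_pos.1 (by rw [T.card_verts k]; norm_num)
  obtain ⟨b, hb, -⟩ := T.isStarShaped_tube_cell k i hi
  exact (T.convex_cell k).contractibleSpace ⟨b, hb.2⟩

theorem contractibleSpace_fat [Finite κ] (i : ι) : ContractibleSpace (T.fat i) := by
  refine contractibleSpace_union_biUnion_of_starConvex_s6 (toFinite _) (T.isOpen_tube i)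
    (T.contractible_tube i) (fun k _ => T.isOpen_cell k)
    (fun k _ l _ hkl p hp => (hkl (T.eq_of_mem_cell k l p hp.1 hp.2)).elim) fun k hk => ?_
  obtain ⟨b, hb, hstar⟩ := T.isStarShaped_tube_cell k i hk
  exact ⟨b, hb, (T.convex_cell k).starConvex hb.2, hstar⟩

theorem contractibleSpace_fat_inter_fat [Finite κ] (hij : i ≠ j) :
    ContractibleSpace ↥(T.fat i ∩ T.fat j) := by
  obtain ⟨b, hb, -, -, -, hstar⟩ := T.exists_crossing i j hij
  rw [T.fat_inter_fat]
  refine contractibleSpace_union_biUnion_of_starConvex_s6 (toFinite _)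
    ((T.isOpen_tube i).inter (T.isOpen_tube j))
    (hstar.contractibleSpace ⟨b, T.core_subset_tube i hb.1, T.core_subset_tube j hb.2⟩)
    (fun k _ => T.isOpen_cell k)
    (fun k _ l _ hkl p hp => (hkl (T.eq_of_mem_cell k l p hp.1 hp.2)).elim) fun k hk => ?_
  obtain ⟨b, hb, hstar⟩ := T.isStarShaped_tube_tube_cell k i hk.1 j hk.2 hij
  exact ⟨b, hb, (T.convex_cell k).starConvex hb.2, hstar⟩

theorem contractibleSpace_skeleton_inter_fat [Finite ι] (i : ι) :
    ContractibleSpace ↥(T.skeleton ∩ T.fat i) := by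
  rw [T.skeleton_inter_fat]
  refine contractibleSpace_union_biUnion_of_starConvex_s6 (toFinite _) (T.isOpen_core i)
    (T.contractible_core i) (fun j _ => (T.isOpen_core j).inter (T.isOpen_tube i))
    (fun j hj l hl hjl p hp => ?_) fun j hj => ?_
  · exact absurd hp.1.2 (T.not_mem_three_tubes j l i hjl hj hl p (T.core_subset_tube j hp.1.1)
      (T.core_subset_tube l hp.2.1))
  · obtain ⟨b, hb, hcc, hct, -⟩ := T.exists_crossing j i hj
    have inter_eq : T.core i ∩ (T.core j ∩ T.tube i) = T.core j ∩ T.core i := by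
      rw [inter_left_comm, inter_eq_left.2 (T.core_subset_tube i)]
    rw [inter_eq]
    exact ⟨b, hb, hct, hcc⟩

theorem contractibleSpace_skeleton_inter_fat_inter_fat (hij : i ≠ j) :
    ContractibleSpace ↥(T.skeleton ∩ (T.fat i ∩ T.fat j)) := by
  obtain ⟨b, hb, -, hct, htc, -⟩ := T.exists_crossing i j hij
  rw [T.skeleton_inter_fat_inter_fat hij]
  exact (hct.union htc).contractibleSpace ⟨b, Or.inl ⟨hb.1, T.core_subset_tube j hb.2⟩⟩

theorem isPathConnected_skeleton [Nonempty ι] : IsPathConnected T.skeleton := by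
  refine isPathConnected_iUnion_of_inter_nonempty (fun i => ?_) fun i j => ?_
  · have := T.contractible_core i
    exact isPathConnected_iff_pathConnectedSpace.2 inferInstance
  · by_cases hij : i = j
    · subst hij
      have := T.contractible_core i
      rw [inter_self]
      exact nonempty_coe_sort.1 inferInstance
    · obtain ⟨b, hb, -⟩ := T.exists_crossing i j hij
      exact ⟨b, hb⟩

theorem biInter_family_map_some (s : Finset ι) :
    ⋂ o ∈ s.map .some, T.family o = ⋂ i ∈ s, T.fat i := by
  simp [family]

theorem biInter_family_insertNone (s : Finset ι) :
    ⋂ o ∈ s.insertNone, T.family o = T.skeleton ∩ ⋂ i ∈ s, T.fat i := by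
  ext p
  simp [family, Option.forall]

theorem contractibleSpace_biInter_family_map_some [Finite κ] (hs : s.card = 2 ∨ s.card = 3)
    (hne : (⋂ o ∈ s.map .some, T.family o).Nonempty) :
    ContractibleSpace ↥(⋂ o ∈ s.map .some, T.family o) := by
  classical
  rw [biInter_family_map_some] at hne ⊢
  obtain hs | hs := hs
  · obtain ⟨i, j, hij, rfl⟩ := Finset.card_eq_two.1 hs
    rw [Finset.set_biInter_insert, Finset.set_biInter_singleton]
    exact T.contractibleSpace_fat_inter_fat hij
  · obtain ⟨p, hp⟩ := hne
    obtain ⟨k, rfl, -⟩ := exists_mem_cell_of_forall_mem_fat hs.ge (mem_iInter₂.1 hp)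
    rw [biInter_fat_verts]
    exact T.contractibleSpace_cell k

theorem contractibleSpace_biInter_family_insertNone [Finite ι] (hs : s.card = 1 ∨ s.card = 2) :
    ContractibleSpace ↥(⋂ o ∈ s.insertNone, T.family o) := by
  classical
  rw [biInter_family_insertNone]
  obtain hs | hs := hs
  · obtain ⟨i, rfl⟩ := Finset.card_eq_one.1 hs
    rw [Finset.set_biInter_singleton]
    exact T.contractibleSpace_skeleton_inter_fat i
  · obtain ⟨i, j, hij, rfl⟩ := Finset.card_eq_two.1 hs
    rw [Finset.set_biInter_insert, Finset.set_biInter_singleton]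
    exact T.contractibleSpace_skeleton_inter_fat_inter_fat hij

theorem contractibleSpace_biInter_family [Finite ι] [Finite κ] {σ : Finset (Option ι)}
    (hσ : σ.card = 2 ∨ σ.card = 3) (hne : (⋂ o ∈ σ, T.family o).Nonempty) :
    ContractibleSpace ↥(⋂ o ∈ σ, T.family o) := by
  obtain ⟨s, rfl | rfl⟩ := exists_eq_insertNone_or_eq_map_some σ
  · rw [Finset.card_insertNone] at hσ
    exact T.contractibleSpace_biInter_family_insertNone (by lia)
  · rw [Finset.card_map] at hσ
    exact T.contractibleSpace_biInter_family_map_some hσ hne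

theorem biInter_family_eq_empty {σ : Finset (Option ι)} (hσ : 4 ≤ σ.card) :
    ⋂ o ∈ σ, T.family o = ∅ := by
  refine eq_empty_of_forall_notMem fun p hp => ?_
  obtain ⟨s, rfl | rfl⟩ := exists_eq_insertNone_or_eq_map_some σ
  · rw [Finset.card_insertNone] at hσ
    rw [biInter_family_insertNone] at hp
    have := card_le_two_of_mem_skeleton hp.1 (mem_iInter₂.1 hp.2)
    lia
  · rw [Finset.card_map] at hσ
    rw [biInter_family_map_some] at hp
    obtain ⟨k, rfl, -⟩ := exists_mem_cell_of_forall_mem_fat (by lia) (mem_iInter₂.1 hp)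
    rw [T.card_verts] at hσ
    lia

theorem isPathConnected_family [Nonempty ι] [Finite κ] : ∀ o, IsPathConnected (T.family o)
  | none => T.isPathConnected_skeleton
  | some i =>
    have := T.contractibleSpace_fat i
    isPathConnected_iff_pathConnectedSpace.2 (inferInstanceAs (PathConnectedSpace (T.fat i)))

theorem biInter_family_eq_empty_or_isPathConnected [Nonempty ι] [Finite ι] [Finite κ]
    {σ : Finset (Option ι)} (hσ : σ.Nonempty) :
    ⋂ o ∈ σ, T.family o = ∅ ∨ IsPathConnected (⋂ o ∈ σ, T.family o) := by
  refine (eq_empty_or_nonempty _).imp_right fun hne => ?_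
  have hcard : σ.card < 4 := by
    by_contra! h
    simp [T.biInter_family_eq_empty h] at hne
  obtain h | h : σ.card = 1 ∨ σ.card = 2 ∨ σ.card = 3 := by have := hσ.card_pos; lia
  · obtain ⟨o, rfl⟩ := Finset.card_eq_one.1 h
    rw [Finset.set_biInter_singleton]
    exact T.isPathConnected_family o
  · have := T.contractibleSpace_biInter_family h hne
    exact isPathConnected_iff_pathConnectedSpace.2 inferInstance

theorem card_faces [Fintype ι] [Fintype κ] :
    Nat.card {σ : Finset (Option ι) // σ.card = 3 ∧ (⋂ o ∈ σ, T.family o).Nonempty} =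
      (Fintype.card ι).choose 2 + Fintype.card κ := by
  let face : {s : Finset ι // s.card = 2} ⊕ κ →
      {σ : Finset (Option ι) // σ.card = 3 ∧ (⋂ o ∈ σ, T.family o).Nonempty} :=
    Sum.elim
      (fun s => ⟨s.1.insertNone, by rw [Finset.card_insertNone, s.2],
        have := T.contractibleSpace_biInter_family_insertNone (Or.inr s.2)
        nonempty_coe_sort.1 inferInstance⟩)
      (fun k => ⟨(T.verts k).map .some, by rw [Finset.card_map, T.card_verts], by
        have := T.contractibleSpace_cell k
        rw [biInter_family_map_some, biInter_fat_verts]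
        exact nonempty_coe_sort.1 inferInstance⟩)
  have hface : face.Bijective := by
    constructor
    · refine Function.Injective.sumElim (fun s t hst => Subtype.ext ?_) (fun k l hkl => ?_)
        (fun s k hsk => ?_)
      · simpa using congrArg (fun σ => Finset.eraseNone σ.1) hst
      · exact T.verts_injective (Finset.map_injective _ (congrArg Subtype.val hkl))
      · have hval : s.1.insertNone = (T.verts k).map .some := congrArg Subtype.val hsk
        simpa [hval] using Finset.none_mem_insertNone (s := s.1)
    · rintro ⟨σ, hσ, p, hp⟩
      obtain ⟨s, rfl | rfl⟩ := exists_eq_insertNone_or_eq_map_some σ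
      · rw [Finset.card_insertNone] at hσ
        exact ⟨Sum.inl ⟨s, by lia⟩, rfl⟩
      · rw [Finset.card_map] at hσ
        rw [biInter_family_map_some] at hp
        obtain ⟨k, rfl, -⟩ := exists_mem_cell_of_forall_mem_fat hσ.ge (mem_iInter₂.1 hp)
        exact ⟨Sum.inr k, rfl⟩
  rw [← Nat.card_eq_of_bijective face hface, Nat.card_sum, Nat.card_eq_fintype_card,
    Nat.card_eq_fintype_card, Fintype.card_finset_len]

end TubeArrangement

/-- The Euclidean plane. -/
abbrev Plane : Type := EuclideanSpace ℝ (Fin 2)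

/-- The plane as the affine plane `x₀ + x₁ + x₂ = -3/2`, with the three coordinates extended to all
indices `c : ℤ` by `x_{c+3} = x_c - m`, the convention for the affine Weyl group of type `A₂`. -/
noncomputable def coord (m : ℕ) (c : ℤ) : Plane →ᵃ[ℝ] ℝ :=
  (if c % 3 = 0 then (EuclideanSpace.proj (0 : Fin 2)).toLinearMap.toAffineMap
    else if c % 3 = 1 then (EuclideanSpace.proj (1 : Fin 2)).toLinearMap.toAffineMap
    else AffineMap.const ℝ _ (-3 / 2) - (EuclideanSpace.proj (0 : Fin 2)).toLinearMap.toAffineMap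
      - (EuclideanSpace.proj (1 : Fin 2)).toLinearMap.toAffineMap)
  - AffineMap.const ℝ _ (m * (c / 3 : ℤ) : ℝ)

/-- The difference of two consecutive coordinates. -/
noncomputable def gap (m : ℕ) (c : ℤ) : Plane →ᵃ[ℝ] ℝ := coord m c - coord m (c + 1)

section Coordinates

variable {m : ℕ} {c d : ℤ} {p : Plane}

theorem coord_add_three_mul (m : ℕ) (c q : ℤ) (p : Plane) :
    coord m (c + 3 * q) p = coord m c p - q * m := by
  have hdiv : (c + 3 * q) / 3 = c / 3 + q := by lia
  simp only [coord, Int.add_mul_emod_self_left, hdiv, AffineMap.coe_sub, Pi.sub_apply,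
    AffineMap.const_apply]
  push_cast
  ring

theorem coord_add_three (m : ℕ) (c : ℤ) (p : Plane) : coord m (c + 3) p = coord m c p - m := by
  simpa using coord_add_three_mul m c 1 p

theorem coord_eq_sub_of_dvd (h : 3 ∣ d - c) :
    ∃ q : ℤ, d = c + 3 * q ∧ coord m d p = coord m c p - q * m := by
  obtain ⟨q, hq⟩ := h
  obtain rfl : d = c + 3 * q := by lia
  exact ⟨q, rfl, coord_add_three_mul m c q p⟩

theorem coord_zero (m : ℕ) (p : Plane) : coord m 0 p = p 0 := by
  simp [coord]

theorem coord_one (m : ℕ) (p : Plane) : coord m 1 p = p 1 := by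
  simp [coord]

theorem coord_two (m : ℕ) (p : Plane) : coord m 2 p = -3 / 2 - p 0 - p 1 := by
  simp [coord]

theorem exists_eq_add_three_mul (c : ℤ) :
    ∃ q : ℤ, c = 0 + 3 * q ∨ c = 1 + 3 * q ∨ c = 2 + 3 * q :=
  ⟨c / 3, by lia⟩

theorem coord_add_coord_add_coord (m : ℕ) (c : ℤ) (p : Plane) :
    coord m c p + coord m (c + 1) p + coord m (c + 2) p = -3 / 2 - c * m := by
  have h₃ := coord_add_three m 0 p
  have h₄ := coord_add_three m 1 p
  obtain ⟨q, rfl | rfl | rfl⟩ := exists_eq_add_three_mul c <;>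
    simp only [add_right_comm _ (3 * q) 1, add_right_comm _ (3 * q) 2, coord_add_three_mul] <;>
    norm_num [coord_zero, coord_one, coord_two] at h₃ h₄ ⊢ <;> linarith

theorem exists_coord_eq (m : ℕ) (c : ℤ) (s t : ℝ) :
    ∃ p, coord m c p = s ∧ coord m (c + 1) p = t := by
  have h₃ (p : Plane) := coord_add_three m 0 p
  norm_num at h₃
  obtain ⟨q, rfl | rfl | rfl⟩ := exists_eq_add_three_mul c <;>
    simp only [add_right_comm _ (3 * q) 1, coord_add_three_mul]
  · exact ⟨!₂[s + q * m, t + q * m], by simp [coord_zero, coord_one]⟩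
  · exact ⟨!₂[-3 / 2 - (s + q * m) - (t + q * m), s + q * m], by
      norm_num [coord_one, coord_two]; ring⟩
  · refine ⟨!₂[t + q * m + m, -3 / 2 - (t + q * m + m) - (s + q * m)], ?_⟩
    norm_num [h₃, coord_zero, coord_two]

theorem gap_apply (m : ℕ) (c : ℤ) (p : Plane) : gap m c p = coord m c p - coord m (c + 1) p := rfl

theorem gap_add_three_mul (m : ℕ) (c q : ℤ) (p : Plane) : gap m (c + 3 * q) p = gap m c p := by
  simp only [gap_apply, add_right_comm c, coord_add_three_mul]
  ring

theorem gap_eq_of_dvd (h : 3 ∣ d - c) : gap m d p = gap m c p := by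
  obtain ⟨q, hq⟩ := h
  obtain rfl : d = c + 3 * q := by lia
  exact gap_add_three_mul m c q p

theorem gap_add_one_eq (m : ℕ) (c : ℤ) (p : Plane) :
    gap m (c + 1) p = coord m c p + 2 * coord m (c + 1) p + 3 / 2 + c * m := by
  have := coord_add_coord_add_coord m c p
  rw [gap_apply, add_assoc c 1 1, one_add_one_eq_two]
  linarith

theorem gap_add_two_eq (m : ℕ) (c : ℤ) (p : Plane) :
    gap m (c + 2) p = m - 3 / 2 - c * m - 2 * coord m c p - coord m (c + 1) p := by
  have := coord_add_coord_add_coord m c p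
  have := coord_add_three m c p
  rw [gap_apply, add_assoc c 2 1, two_add_one_eq_three]
  linarith

theorem eq_or_dvd_sub (c d : ℤ) : 3 ∣ d - c ∨ 3 ∣ d - (c + 1) ∨ 3 ∣ d - (c + 2) := by
  lia

theorem exists_gap_lt_iff (c : ℤ) {r : ℝ} :
    (∃ d, gap m d p < r) ↔ gap m c p < r ∨ gap m (c + 1) p < r ∨ gap m (c + 2) p < r := by
  refine ⟨fun ⟨d, hd⟩ => ?_, fun h => by rcases h with h | h | h <;> exact ⟨_, h⟩⟩
  exact (eq_or_dvd_sub c d).imp (fun h => gap_eq_of_dvd h ▸ hd)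
    (Or.imp (fun h => gap_eq_of_dvd h ▸ hd) fun h => gap_eq_of_dvd h ▸ hd)

theorem convex_preimage_of_ordConnected {E : Type*} [AddCommGroup E] [Module ℝ E]
    (f : E →ᵃ[ℝ] ℝ) {s : Set ℝ} (hs : s.OrdConnected) :
    Convex ℝ (f ⁻¹' s) :=
  hs.convex.affine_preimage f

theorem isOpen_preimage_of_isOpen {E : Type*} [NormedAddCommGroup E] [NormedSpace ℝ E]
    [FiniteDimensional ℝ E] (f : E →ᵃ[ℝ] ℝ) {s : Set ℝ} (hs : IsOpen s) : IsOpen (f ⁻¹' s) :=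
  hs.preimage f.continuous_of_finiteDimensional

/-- The open triangle of points with strictly decreasing coordinates (an alcove scaled by `m`) with
a small neighbourhood of the corner `(-1/2, -1/2, -1/2)` cut off. -/
def domain (m : ℕ) : Set Plane :=
  (⋂ c ∈ Finset.range 3, gap m c ⁻¹' Ioi 0) ∩ (gap m 0 + gap m 1) ⁻¹' Ioi (1 / 4)

theorem isOpen_domain (m : ℕ) : IsOpen (domain m) :=
  (isOpen_biInter_finset fun _ _ => isOpen_preimage_of_isOpen _ isOpen_Ioi).inter
    (isOpen_preimage_of_isOpen _ isOpen_Ioi)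

theorem convex_domain (m : ℕ) : Convex ℝ (domain m) :=
  (convex_iInter₂ fun _ _ => convex_preimage_of_ordConnected _ ordConnected_Ioi).inter
    (convex_preimage_of_ordConnected _ ordConnected_Ioi)

theorem gap_pos (hp : p ∈ domain m) (c : ℤ) : 0 < gap m c p := by
  have hgap (k : ℕ) (hk : k ∈ Finset.range 3) : 0 < gap m k p := mem_iInter₂.1 hp.1 k hk
  obtain ⟨q, rfl | rfl | rfl⟩ := exists_eq_add_three_mul c <;> rw [gap_add_three_mul]
  exacts [hgap 0 (by simp), hgap 1 (by simp), hgap 2 (by simp)]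

theorem coord_strictAnti (hp : p ∈ domain m) : StrictAnti fun c => coord m c p :=
  strictAnti_int_of_succ_lt fun c => sub_pos.1 (gap_pos hp c)

theorem mem_domain_of_gap_pos (h₀ : 0 < gap m c p) (h₁ : 0 < gap m (c + 1) p)
    (h₂ : 0 < gap m (c + 2) p) (hd : ¬ 3 ∣ d - 2) (hgap : 1 / 4 < gap m d p) : p ∈ domain m := by
  have hpos (e : ℤ) : 0 < gap m e p := by
    rcases eq_or_dvd_sub c e with h | h | h <;> rwa [gap_eq_of_dvd h]
  refine ⟨mem_iInter₂.2 fun e _ => hpos e, ?_⟩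
  change 1 / 4 < gap m 0 p + gap m 1 p
  obtain h | h | h : 3 ∣ d - 0 ∨ 3 ∣ d - 1 ∨ 3 ∣ d - 2 := by lia
  · linarith [gap_eq_of_dvd (m := m) (p := p) h, hpos 1]
  · linarith [gap_eq_of_dvd (m := m) (p := p) h, hpos 0]
  · exact absurd h hd

theorem mem_domain_of_quarter_lt_gap (h₀ : 1 / 4 < gap m c p) (h₁ : 1 / 4 < gap m (c + 1) p)
    (h₂ : 0 < gap m (c + 2) p) : p ∈ domain m := by
  by_cases hc : 3 ∣ c - 2
  · exact mem_domain_of_gap_pos (by linarith) (by linarith) h₂ (by lia) h₁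
  · exact mem_domain_of_gap_pos (by linarith) (by linarith) h₂ hc h₀

end Coordinates

section Strips

variable {m : ℕ} {r s : ℝ} {c d i j : ℤ} {p : Plane}

/-- The part of the open `r`-neighbourhood of the line `x_c = i` in which the other two coordinates
are not too close to each other modulo `m`. -/
def arm (m : ℕ) (r : ℝ) (c i : ℤ) : Set Plane :=
  domain m ∩ (coord m c ⁻¹' Ioo (i - r) (i + r) ∩ gap m (c + 1) ⁻¹' Ioi (49 / 100))

/-- The neighbourhood of width `r` of the `i`-th billiard path, along which one of the coordinates
has the value `i`. -/
def strip (m : ℕ) (r : ℝ) (i : ℤ) : Set Plane := ⋃ c, arm m r c i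

/-- The neighbourhood of width `r` of the boundary of the domain, without its cut corner. -/
def wall (m : ℕ) (r : ℝ) : Set Plane := domain m ∩ {p | ∃ c, gap m c p < r}

theorem isOpen_arm (m : ℕ) (r : ℝ) (c i : ℤ) : IsOpen (arm m r c i) :=
  (isOpen_domain m).inter ((isOpen_preimage_of_isOpen _ isOpen_Ioo).inter
    (isOpen_preimage_of_isOpen _ isOpen_Ioi))

theorem convex_arm (m : ℕ) (r : ℝ) (c i : ℤ) : Convex ℝ (arm m r c i) :=
  (convex_domain m).inter ((convex_preimage_of_ordConnected _ ordConnected_Ioo).inter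
    (convex_preimage_of_ordConnected _ ordConnected_Ioi))

theorem isOpen_strip (m : ℕ) (r : ℝ) (i : ℤ) : IsOpen (strip m r i) :=
  isOpen_iUnion fun c => isOpen_arm m r c i

theorem isOpen_wall (m : ℕ) (r : ℝ) : IsOpen (wall m r) := by
  refine (isOpen_domain m).inter ?_
  rw [ofPred_exists]
  exact isOpen_iUnion fun c => isOpen_preimage_of_isOpen (gap m c) isOpen_Iio

theorem arm_mono (hrs : r ≤ s) : arm m r c i ⊆ arm m s c i :=
  fun _ hp => ⟨hp.1, Ioo_subset_Ioo (by linarith) (by linarith) hp.2.1, hp.2.2⟩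

theorem strip_mono (hrs : r ≤ s) : strip m r i ⊆ strip m s i := iUnion_mono fun _ => arm_mono hrs

theorem wall_mono (hrs : r ≤ s) : wall m r ⊆ wall m s :=
  fun _ ⟨hp, c, hc⟩ => ⟨hp, c, hc.trans_le hrs⟩

theorem arm_bounds (hr : r ≤ 3 / 100) (hp : p ∈ arm m r c i) :
    -1 ≤ 3 * i + c * m ∧ 3 * i + (c - 2) * m ≤ -2 := by
  obtain ⟨hp, ⟨hl, hu⟩, hgap : 49 / 100 < gap m (c + 1) p⟩ := hp
  have h₀ := gap_pos hp c
  have h₂ := gap_pos hp (c + 2)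
  rw [gap_apply] at h₀
  rw [gap_add_one_eq] at hgap
  rw [gap_add_two_eq] at h₂
  have hlower : (-2 : ℝ) < (3 * i + c * m : ℤ) := by push_cast; linarith
  have hupper : (3 * i + (c - 2) * m : ℤ) < (-1 : ℝ) := by push_cast; linarith
  exact ⟨by exact_mod_cast hlower, Int.le_sub_one_of_lt (by exact_mod_cast hupper)⟩

/-- The integer `a` for which `t + a * m` lies between `-1` and `m - 2`. -/
def level (m : ℕ) (t : ℤ) : ℤ := -((t + 1) / m)

theorem level_bounds [NeZero m] (t : ℤ) : -1 ≤ t + level m t * m ∧ t + level m t * m ≤ m - 2 := by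
  have hm : (0 : ℤ) < m := by exact_mod_cast NeZero.pos m
  have hdiv := Int.emod_add_mul_ediv (t + 1) m
  have hnonneg := Int.emod_nonneg (t + 1) hm.ne'
  have hlt := Int.emod_lt_of_pos (t + 1) hm
  constructor <;> rw [level] <;> linarith

theorem eq_level [NeZero m] {a t : ℤ} (hl : -1 ≤ t + a * m) (hu : t + a * m ≤ m - 2) :
    a = level m t := by
  have hm : (0 : ℤ) < m := by exact_mod_cast NeZero.pos m
  have hlevel := level_bounds (m := m) t
  have hlower : -1 < a - level m t := lt_of_mul_lt_mul_right (by linarith) hm.le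
  have hupper : a - level m t < 1 := lt_of_mul_lt_mul_right (by linarith) hm.le
  lia

/-- The index such that the `i`-th billiard path is reflected where the coordinates `bend m i` and
`bend m i + 1` agree. -/
def bend (m : ℕ) (i : ℤ) : ℤ := level m (3 * i)

theorem bend_bounds [NeZero m] (i : ℤ) :
    -1 ≤ 3 * i + bend m i * m ∧ 3 * i + bend m i * m ≤ m - 2 :=
  level_bounds (3 * i)

theorem eq_bend_or_eq_bend_add_one [NeZero m] (hr : r ≤ 3 / 100) (hp : p ∈ arm m r c i) :
    c = bend m i ∨ c = bend m i + 1 := by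
  have hm : (0 : ℤ) < m := by exact_mod_cast NeZero.pos m
  have harm := arm_bounds hr hp
  have hbend := bend_bounds (m := m) i
  have hlower : -1 < c - bend m i := lt_of_mul_lt_mul_right (by linarith) hm.le
  have hupper : c - bend m i < 2 := lt_of_mul_lt_mul_right (by linarith) hm.le
  lia

theorem strip_eq [NeZero m] (hr : r ≤ 3 / 100) :
    strip m r i = arm m r (bend m i) i ∪ arm m r (bend m i + 1) i := by
  refine subset_antisymm (iUnion_subset fun c p hp => ?_)
    (union_subset (subset_iUnion (fun c => arm m r c i) _)
      (subset_iUnion (fun c => arm m r c i) _))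
  obtain rfl | rfl := eq_bend_or_eq_bend_add_one hr hp
  · exact Or.inl hp
  · exact Or.inr hp

theorem exists_mem_arm_bend [NeZero m] (i : ℤ) :
    ∃ b, gap m (bend m i) b < 1 / 100 ∧ ∀ r : ℝ, 1 / 100 ≤ r →
      b ∈ arm m r (bend m i) i ∩ arm m r (bend m i + 1) i := by
  obtain ⟨b, h₀, h₁⟩ := exists_coord_eq m (bend m i) (i + 1 / 1000) (i - 1 / 1000)
  have hgap₀ := gap_apply m (bend m i) b
  have hgap₁ := gap_add_one_eq m (bend m i) b
  have hgap₂ := gap_add_two_eq m (bend m i) b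
  rw [h₀, h₁] at hgap₀ hgap₁ hgap₂
  have hlower : (-1 : ℝ) ≤ 3 * i + bend m i * m := by exact_mod_cast (bend_bounds i).1
  have hupper : (3 * i + bend m i * m : ℝ) ≤ m - 2 := by exact_mod_cast (bend_bounds i).2
  have hgap₁' : 49 / 100 < gap m (bend m i + 1) b := by linarith
  have hgap₂' : 49 / 100 < gap m (bend m i + 1 + 1) b := by
    rw [add_assoc, one_add_one_eq_two]; linarith
  have hb : b ∈ domain m := mem_domain_of_quarter_lt_gap (c := bend m i + 1) (by linarith)
    (by linarith) (by rw [gap_eq_of_dvd (c := bend m i) (by lia)]; linarith)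
  refine ⟨b, by linarith, fun r hr => ⟨⟨hb, ⟨?_, ?_⟩, hgap₁'⟩, hb, ⟨?_, ?_⟩, hgap₂'⟩⟩ <;> linarith

theorem contractibleSpace_strip [NeZero m] (hr : 1 / 100 ≤ r) (hr' : r ≤ 3 / 100) :
    ContractibleSpace (strip m r i) := by
  obtain ⟨b, -, hb⟩ := exists_mem_arm_bend (m := m) i
  rw [strip_eq hr']
  exact (((convex_arm ..).starConvex (hb r hr).1).union
    ((convex_arm ..).starConvex (hb r hr).2)).contractibleSpace ⟨b, Or.inl (hb r hr).1⟩

theorem two_fifths_lt_gap_of_mem_strip [NeZero m] (hr : r ≤ 3 / 100) (hp : p ∈ strip m r i) :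
    2 / 5 < gap m (bend m i + 1) p ∧ 2 / 5 < gap m (bend m i + 2) p := by
  have hlower : (-1 : ℝ) ≤ 3 * i + bend m i * m := by exact_mod_cast (bend_bounds i).1
  have hupper : (3 * i + bend m i * m : ℝ) ≤ m - 2 := by exact_mod_cast (bend_bounds i).2
  have hgap₁ := gap_add_one_eq m (bend m i) p
  have hgap₂ := gap_add_two_eq m (bend m i) p
  rw [strip_eq hr] at hp
  rcases hp with ⟨hp, hx, hgap⟩ | ⟨hp, hx, hgap⟩
  all_goals
    have hpos := gap_pos hp (bend m i)
    rw [gap_apply] at hpos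
    rw [mem_preimage, mem_Ioi] at hgap
    rw [mem_preimage, mem_Ioo] at hx
  · constructor <;> linarith
  · rw [add_assoc, one_add_one_eq_two] at hgap
    constructor <;> linarith

theorem mem_wall_iff_of_mem_strip [NeZero m] (hr : r ≤ 3 / 100) (hs : s ≤ 3 / 100)
    (hp : p ∈ strip m r i) : p ∈ wall m s ↔ gap m (bend m i) p < s := by
  have hgap := two_fifths_lt_gap_of_mem_strip hr hp
  obtain ⟨c, hc⟩ := mem_iUnion.1 hp
  refine ⟨fun h => ?_, fun h => ⟨hc.1, _, h⟩⟩
  rcases (exists_gap_lt_iff (bend m i)).1 h.2 with h | h | h <;> linarith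

theorem wall_eq (m : ℕ) (r : ℝ) : wall m r = (domain m ∩ gap m 2 ⁻¹' Iio r ∪
    domain m ∩ gap m 0 ⁻¹' Iio r) ∪ domain m ∩ gap m 1 ⁻¹' Iio r := by
  ext p
  have := exists_gap_lt_iff (m := m) (p := p) (r := r) 0
  simp only [wall, mem_inter_iff, mem_union, mem_ofPred_eq, mem_preimage, mem_Iio, this, zero_add]
  tauto

theorem exists_mem_domain_gap_eq {t : ℝ} (hc : ¬ 3 ∣ c) (ht : 0 < t) (hm : 2 * t + 1 / 4 < m) :
    ∃ b ∈ domain m, gap m c b = t ∧ gap m (c + 1) b = t := by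
  obtain ⟨b, h₀, h₁⟩ := exists_coord_eq m c (t - 1 / 2 - c * m / 3) (-1 / 2 - c * m / 3)
  have hgap₀ := gap_apply m c b
  have hgap₁ := gap_add_one_eq m c b
  have hgap₂ := gap_add_two_eq m c b
  rw [h₀, h₁] at hgap₀ hgap₁ hgap₂
  exact ⟨b, mem_domain_of_gap_pos (c := c) (d := c + 2) (by linarith) (by linarith) (by linarith)
    (by lia) (by linarith), by linarith, by linarith⟩

theorem contractibleSpace_wall [NeZero m] (hr : 0 < r) (hr' : r ≤ 1 / 8) :
    ContractibleSpace (wall m r) := by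
  have hm : (1 : ℝ) ≤ m := by exact_mod_cast NeZero.one_le
  have hconvex (c : ℤ) : Convex ℝ (domain m ∩ gap m c ⁻¹' Iio r) :=
    (convex_domain m).inter (convex_preimage_of_ordConnected _ ordConnected_Iio)
  have hopen (c : ℤ) : IsOpen (domain m ∩ gap m c ⁻¹' Iio r) :=
    (isOpen_domain m).inter (isOpen_preimage_of_isOpen _ isOpen_Iio)
  have hcorner {c d : ℤ} (hc : ¬ 3 ∣ c) (hd : 3 ∣ d - (c + 1)) :
      ∃ b, b ∈ domain m ∩ gap m c ⁻¹' Iio r ∧ b ∈ domain m ∩ gap m d ⁻¹' Iio r := by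
    obtain ⟨b, hb, hgap, hgap'⟩ := exists_mem_domain_gap_eq (m := m) (t := r / 2) hc
      (by linarith) (by linarith)
    rw [← gap_eq_of_dvd hd] at hgap'
    exact ⟨b, ⟨hb, hgap.trans_lt (half_lt_self hr)⟩, hb, hgap'.trans_lt (half_lt_self hr)⟩
  have hcut : (domain m ∩ gap m 2 ⁻¹' Iio r ∪ domain m ∩ gap m 0 ⁻¹' Iio r) ∩
      (domain m ∩ gap m 1 ⁻¹' Iio r) =
      (domain m ∩ gap m 2 ⁻¹' Iio r) ∩ (domain m ∩ gap m 1 ⁻¹' Iio r) := by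
    rw [union_inter_distrib_right, union_eq_left]
    rintro p ⟨⟨hp, h₀ : gap m 0 p < r⟩, -, h₁ : gap m 1 p < r⟩
    have hquarter : 1 / 4 < gap m 0 p + gap m 1 p := hp.2
    linarith
  obtain ⟨b, h₂, h₀⟩ := hcorner (c := 2) (d := 0) (by decide) (by decide)
  obtain ⟨b', h₁, h₂'⟩ := hcorner (c := 1) (d := 2) (by decide) (by decide)
  rw [wall_eq]
  refine contractibleSpace_union_of_starConvex_s6 ((hopen 2).union (hopen 0)) (hopen 1)
    ((((hconvex 2).starConvex h₂).union ((hconvex 0).starConvex h₀)).contractibleSpace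
      ⟨b, Or.inl h₂⟩) ⟨Or.inl h₂', h₁⟩ ((hconvex 1).starConvex h₁) ?_
  rw [hcut]
  exact ((hconvex 2).inter (hconvex 1)).starConvex ⟨h₂', h₁⟩

end Strips

section Crossings

variable {m : ℕ} {r s t : ℝ} {c d e i j l : ℤ} {p : Plane}

theorem dvd_sub_of_abs_coord_sub_lt (hij : |(coord m c p - i) - (coord m d p - j)| < 1)
    (h : 3 ∣ d - c) : (m : ℤ) ∣ i - j := by
  obtain ⟨q, -, hq⟩ := coord_eq_sub_of_dvd (m := m) (p := p) h
  rw [hq, abs_lt] at hij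
  have hlt : (i - j - q * m : ℤ) < (1 : ℝ) := by push_cast; linarith
  have hgt : (-1 : ℝ) < (i - j - q * m : ℤ) := by push_cast; linarith
  have hlt' : i - j - q * m < 1 := by exact_mod_cast hlt
  have hgt' : -1 < i - j - q * m := by exact_mod_cast hgt
  exact ⟨q, by linarith⟩

theorem abs_coord_sub_lt_of_mem_arm (hp : p ∈ arm m r c i) : |coord m c p - i| < r :=
  abs_sub_lt_iff.2 ⟨by linarith [hp.2.1.2], by linarith [hp.2.1.1]⟩

theorem dvd_sub_of_mem_arm (hr : r ≤ 3 / 100) (hi : p ∈ arm m r c i) (hj : p ∈ arm m r d j)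
    (h : 3 ∣ d - c) : (m : ℤ) ∣ i - j :=
  dvd_sub_of_abs_coord_sub_lt ((abs_sub _ _).trans_lt (by
    linarith [abs_coord_sub_lt_of_mem_arm hi, abs_coord_sub_lt_of_mem_arm hj])) h

theorem exists_coord_add_eq (hcd : ¬ 3 ∣ d - c) (hce : ¬ 3 ∣ e - c) (hde : ¬ 3 ∣ e - d) :
    ∃ n : ℤ, coord m c p + coord m d p + coord m e p = -3 / 2 + n := by
  have hsum := coord_add_coord_add_coord m c p
  obtain ⟨h₁, h₂⟩ | ⟨h₂, h₁⟩ :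
      3 ∣ d - (c + 1) ∧ 3 ∣ e - (c + 2) ∨ 3 ∣ d - (c + 2) ∧ 3 ∣ e - (c + 1) := by lia
  all_goals
    obtain ⟨q₁, -, hq₁⟩ := coord_eq_sub_of_dvd (m := m) (p := p) h₁
    obtain ⟨q₂, -, hq₂⟩ := coord_eq_sub_of_dvd (m := m) (p := p) h₂
    exact ⟨-(c + q₁ + q₂) * m, by push_cast; linarith⟩

theorem not_mem_three_strips (hr : r ≤ 3 / 100) (hij : ¬ (m : ℤ) ∣ i - j)
    (hil : ¬ (m : ℤ) ∣ i - l) (hjl : ¬ (m : ℤ) ∣ j - l) (hi : p ∈ strip m r i)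
    (hj : p ∈ strip m r j) : p ∉ strip m r l := by
  intro hl
  obtain ⟨c, hc⟩ := mem_iUnion.1 hi
  obtain ⟨d, hd⟩ := mem_iUnion.1 hj
  obtain ⟨e, he⟩ := mem_iUnion.1 hl
  obtain ⟨n, hn⟩ := exists_coord_add_eq (m := m) (p := p)
    (fun h => hij (dvd_sub_of_mem_arm hr hc hd h)) (fun h => hil (dvd_sub_of_mem_arm hr hc he h))
    (fun h => hjl (dvd_sub_of_mem_arm hr hd he h))
  obtain ⟨-, ⟨hc, hc'⟩, -⟩ := hc
  obtain ⟨-, ⟨hd, hd'⟩, -⟩ := hd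
  obtain ⟨-, ⟨he, he'⟩, -⟩ := he
  have hlt : (n - (i + j + l) : ℤ) < (2 : ℝ) := by push_cast; linarith
  have hgt : (1 : ℝ) < (n - (i + j + l) : ℤ) := by push_cast; linarith
  have hlt' : n - (i + j + l) < 2 := by exact_mod_cast hlt
  have hgt' : 1 < n - (i + j + l) := by exact_mod_cast hgt
  lia

theorem not_mem_wall_of_mem_strips [NeZero m] (hr : r ≤ 3 / 100) (hij : ¬ (m : ℤ) ∣ i - j)
    (hi : p ∈ strip m r i) (hj : p ∈ strip m r j) : p ∉ wall m r := by
  intro hwall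
  have hgi := (mem_wall_iff_of_mem_strip hr hr hi).1 hwall
  have hgj := (mem_wall_iff_of_mem_strip hr hr hj).1 hwall
  have hother := two_fifths_lt_gap_of_mem_strip hr hi
  have near {k : ℤ} (hk : p ∈ strip m r k) (hg : gap m (bend m k) p < r) :
      |coord m (bend m k) p - k| < 1 / 2 := by
    rw [strip_eq hr] at hk
    have hpos := gap_pos (hk.elim And.left And.left) (bend m k)
    rw [gap_apply] at hpos hg
    rw [abs_sub_lt_iff]
    obtain ⟨-, ⟨hx, hx'⟩, -⟩ | ⟨-, ⟨hx, hx'⟩, -⟩ := hk <;> constructor <;> linarith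
  rcases eq_or_dvd_sub (bend m i) (bend m j) with h | h | h
  · exact hij (dvd_sub_of_abs_coord_sub_lt
      ((abs_sub _ _).trans_lt (by linarith [near hi hgi, near hj hgj])) h)
  · linarith [gap_eq_of_dvd (m := m) (p := p) h]
  · linarith [gap_eq_of_dvd (m := m) (p := p) h]

theorem arm_inter_bounds (hr : r ≤ 3 / 100) (hs : s ≤ 3 / 100) (hij : i < j) (hjm : j < i + m)
    (hi : p ∈ arm m r c i) (hj : p ∈ arm m s d j) :
    c = d + 1 ∧ -1 ≤ 2 * i + j + d * m ∧ i + 2 * j + d * m ≤ m - 2 ∨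
      c = d + 2 ∧ 2 * i + j + d * m ≤ -2 ∧ -1 ≤ i + 2 * j + d * m := by
  obtain ⟨hp, ⟨hx, hx'⟩, hgi : 49 / 100 < gap m (c + 1) p⟩ := hi
  obtain ⟨-, ⟨hy, hy'⟩, hgj : 49 / 100 < gap m (d + 1) p⟩ := hj
  have hij' : (i + 1 : ℝ) ≤ j := by exact_mod_cast hij
  have hjm' : (j + 1 : ℝ) ≤ i + m := by exact_mod_cast hjm
  have hlt : d < c := (coord_strictAnti hp).lt_iff_gt.1 (by linarith)
  have hlt' : c < d + 3 := (coord_strictAnti hp).lt_iff_gt.1 (by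
    rw [coord_add_three]; linarith)
  have hpos := gap_pos hp d
  obtain rfl | rfl : c = d + 1 ∨ c = d + 2 := by lia
  · left
    rw [add_assoc, one_add_one_eq_two, gap_add_two_eq] at hgi
    rw [gap_add_one_eq] at hgj
    have hlower : (-2 : ℝ) < (2 * i + j + d * m : ℤ) := by push_cast; linarith
    have hupper : (i + 2 * j + (d - 1) * m : ℤ) < (-1 : ℝ) := by push_cast; linarith
    have hupper' : i + 2 * j + (d - 1) * m < -1 := by exact_mod_cast hupper
    exact ⟨rfl, by exact_mod_cast hlower, by linarith⟩
  · right
    have hsum := coord_add_coord_add_coord m d p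
    rw [gap_eq_of_dvd (c := d) (by lia), gap_apply] at hgi
    rw [gap_add_one_eq] at hgj
    have hupper : (2 * i + j + d * m : ℤ) < (-1 : ℝ) := by push_cast; linarith
    have hlower : (-2 : ℝ) < (i + 2 * j + d * m : ℤ) := by push_cast; linarith
    exact ⟨rfl, Int.le_sub_one_of_lt (by exact_mod_cast hupper), by exact_mod_cast hlower⟩

theorem exists_mem_arm_inter_arm (hij : i < j) (hjm : j < i + m)
    (h : c = d + 1 ∧ -1 ≤ 2 * i + j + d * m ∧ i + 2 * j + d * m ≤ m - 2 ∨
      c = d + 2 ∧ 2 * i + j + d * m ≤ -2 ∧ -1 ≤ i + 2 * j + d * m) :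
    ∃ b, ∀ r > 0, b ∈ arm m r c i ∩ arm m r d j := by
  have hij' : (i + 1 : ℝ) ≤ j := by exact_mod_cast hij
  have hjm' : (j + 1 : ℝ) ≤ i + m := by exact_mod_cast hjm
  suffices ∃ b, coord m c b = i ∧ coord m d b = j ∧ b ∈ domain m ∧
      49 / 100 < gap m (c + 1) b ∧ 49 / 100 < gap m (d + 1) b by
    obtain ⟨b, hx, hy, hb, hgi, hgj⟩ := this
    refine ⟨b, fun r hr => ⟨⟨hb, ⟨?_, ?_⟩, hgi⟩, hb, ⟨?_, ?_⟩, hgj⟩⟩ <;> linarith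
  rcases h with ⟨rfl, hl, hu⟩ | ⟨rfl, hu, hl⟩
  · have hl' : (-1 : ℝ) ≤ 2 * i + j + d * m := by exact_mod_cast hl
    have hu' : (i + 2 * j + d * m : ℝ) ≤ m - 2 := by exact_mod_cast hu
    obtain ⟨b, hy, hx⟩ := exists_coord_eq m d j i
    have hgap₀ := gap_apply m d b
    have hgap₁ := gap_add_one_eq m d b
    have hgap₂ := gap_add_two_eq m d b
    refine ⟨b, hx, hy, mem_domain_of_quarter_lt_gap (c := d) ?_ ?_ ?_, ?_, ?_⟩ <;>
      try rw [add_assoc, one_add_one_eq_two]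
    all_goals linarith
  · have hu' : (2 * i + j + d * m : ℝ) ≤ -2 := by exact_mod_cast hu
    have hl' : (-1 : ℝ) ≤ i + 2 * j + d * m := by exact_mod_cast hl
    obtain ⟨b, hy, hz⟩ := exists_coord_eq m d j (-3 / 2 - d * m - i - j)
    have hsum := coord_add_coord_add_coord m d b
    have hgap₀ := gap_apply m d b
    have hgap₁ := gap_add_one_eq m d b
    have hgap₂ := gap_add_two_eq m d b
    have hgap₃ : gap m (d + 2 + 1) b = gap m d b := gap_eq_of_dvd (by lia)
    refine ⟨b, ?_, hy, mem_domain_of_quarter_lt_gap (c := d) ?_ ?_ ?_, ?_, ?_⟩ <;> linarith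

theorem exists_strip_inter_strip_eq [NeZero m] (hij : i < j) (hjm : j < i + m) :
    ∃ c d, (∃ b, ∀ r > 0, b ∈ arm m r c i ∩ arm m r d j) ∧ ∀ r ≤ 3 / 100, ∀ s ≤ 3 / 100,
      strip m r i ∩ strip m s j = arm m r c i ∩ arm m s d j := by
  obtain ⟨hlower, hupper⟩ := level_bounds (m := m) (i + 2 * j)
  set a := level m (i + 2 * j) with ha
  obtain ⟨c, hc⟩ : ∃ c, c = a + 1 ∧ -1 ≤ 2 * i + j + a * m ∧ i + 2 * j + a * m ≤ m - 2 ∨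
      c = a + 2 ∧ 2 * i + j + a * m ≤ -2 ∧ -1 ≤ i + 2 * j + a * m := by
    by_cases h : -1 ≤ 2 * i + j + a * m
    · exact ⟨a + 1, Or.inl ⟨rfl, h, hupper⟩⟩
    · exact ⟨a + 2, Or.inr ⟨rfl, by lia, hlower⟩⟩
  refine ⟨c, a, exists_mem_arm_inter_arm hij hjm hc, fun r hr s hs => subset_antisymm ?_
    (inter_subset_inter (subset_iUnion (fun c => arm m r c i) c)
      (subset_iUnion (fun c => arm m s c j) a))⟩
  rintro p ⟨hpi, hpj⟩
  obtain ⟨c', hc'⟩ := mem_iUnion.1 hpi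
  obtain ⟨d', hd'⟩ := mem_iUnion.1 hpj
  have hbounds := arm_inter_bounds hr hs hij hjm hc' hd'
  obtain rfl : d' = a := by
    rw [ha]
    rcases hbounds with h | h <;> exact eq_level (by lia) (by lia)
  obtain rfl : c' = c := by lia
  exact ⟨hc', hd'⟩

/-- For all widths between `1 / 100` and `3 / 100`, the intersection of the corresponding members
of the two families is star-shaped about one and the same point. -/
def HaveStarShapedCrossing (A B : ℝ → Set Plane) : Prop :=
  ∃ b, ∀ r ∈ Icc (1 / 100 : ℝ) (3 / 100), ∀ s ∈ Icc (1 / 100 : ℝ) (3 / 100),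
    b ∈ A r ∩ B s ∧ StarConvex ℝ b (A r ∩ B s)

theorem HaveStarShapedCrossing.symm {A B : ℝ → Set Plane} (h : HaveStarShapedCrossing A B) :
    HaveStarShapedCrossing B A :=
  h.imp fun _ hb r hr s hs => inter_comm (A s) (B r) ▸ hb s hs r hr

theorem haveStarShapedCrossing_strip_strip [NeZero m] (hij : i < j) (hjm : j < i + m) :
    HaveStarShapedCrossing (strip m · i) (strip m · j) := by
  obtain ⟨c, d, ⟨b, hb⟩, heq⟩ := exists_strip_inter_strip_eq hij hjm
  refine ⟨b, fun r hr s hs => ?_⟩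
  change b ∈ strip m r i ∩ strip m s j ∧ StarConvex ℝ b (strip m r i ∩ strip m s j)
  rw [heq r hr.2 s hs.2]
  have hbrs : b ∈ arm m r c i ∩ arm m s d j :=
    ⟨(hb r (by linarith [hr.1])).1, (hb s (by linarith [hs.1])).2⟩
  exact ⟨hbrs, ((convex_arm ..).inter (convex_arm ..)).starConvex hbrs⟩

theorem haveStarShapedCrossing_wall_strip [NeZero m] (i : ℤ) :
    HaveStarShapedCrossing (wall m) (strip m · i) := by
  obtain ⟨b, hgap, hb⟩ := exists_mem_arm_bend (m := m) i
  refine ⟨b, fun r hr s hs => ?_⟩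
  have hgap' : b ∈ gap m (bend m i) ⁻¹' Iio r := hgap.trans_le hr.1
  have heq : wall m r ∩ strip m s i = gap m (bend m i) ⁻¹' Iio r ∩ strip m s i := by
    ext p
    exact and_congr_left fun hp => mem_wall_iff_of_mem_strip hs.2 hr.2 hp
  have hconvex (c : ℤ) : Convex ℝ (gap m (bend m i) ⁻¹' Iio r ∩ arm m s c i) :=
    (convex_preimage_of_ordConnected _ ordConnected_Iio).inter (convex_arm ..)
  change b ∈ wall m r ∩ strip m s i ∧ StarConvex ℝ b (wall m r ∩ strip m s i)
  rw [heq, strip_eq hs.2, inter_union_distrib_left]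
  exact ⟨Or.inl ⟨hgap', (hb s hs.1).1⟩, ((hconvex _).starConvex ⟨hgap', (hb s hs.1).1⟩).union
    ((hconvex _).starConvex ⟨hgap', (hb s hs.1).2⟩)⟩

/-- The neighbourhood of width `r` of the boundary (at index `none`) or of a billiard path. The
paths are indexed by residues, since `x_c = i + m` means `x_{c+3} = i`. -/
def band (m : ℕ) (r : ℝ) (i : Option (ZMod m)) : Set Plane :=
  i.elim (wall m r) fun j => strip m r j.val

theorem dvd_natCast_val_sub_iff [NeZero m] (i j : ZMod m) :
    (m : ℤ) ∣ (i.val : ℤ) - j.val ↔ i = j := by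
  rw [← ZMod.intCast_eq_intCast_iff_dvd_sub]
  simp [eq_comm]

theorem isOpen_band (m : ℕ) (r : ℝ) : ∀ i, IsOpen (band m r i)
  | none => isOpen_wall m r
  | some i => isOpen_strip m r i.val

theorem band_mono (hrs : r ≤ s) : ∀ i, band m r i ⊆ band m s i
  | none => wall_mono hrs
  | some _ => strip_mono hrs

theorem contractibleSpace_band [NeZero m] (hr : 1 / 100 ≤ r) (hr' : r ≤ 3 / 100) :
    ∀ i, ContractibleSpace (band m r i)
  | none => contractibleSpace_wall (by linarith) (by linarith)
  | some _ => contractibleSpace_strip hr hr'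

theorem haveStarShapedCrossing_band_band [NeZero m] {i j : Option (ZMod m)} (hij : i ≠ j) :
    HaveStarShapedCrossing (band m · i) (band m · j) := by
  match i, j with
  | none, none => exact absurd rfl hij
  | none, some j => exact haveStarShapedCrossing_wall_strip j.val
  | some i, none => exact (haveStarShapedCrossing_wall_strip i.val).symm
  | some i, some j =>
    have hi := i.val_lt
    have hj := j.val_lt
    have hne : i.val ≠ j.val := fun h => hij (congrArg some (ZMod.val_injective m h))
    rcases hne.lt_or_gt with h | h
    · exact haveStarShapedCrossing_strip_strip (by lia) (by lia)
    · exact (haveStarShapedCrossing_strip_strip (by lia) (by lia)).symm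

theorem not_mem_three_bands [NeZero m] (hr : r ≤ 3 / 100) {i j l : Option (ZMod m)} (hij : i ≠ j)
    (hil : i ≠ l) (hjl : j ≠ l) (hi : p ∈ band m r i) (hj : p ∈ band m r j) : p ∉ band m r l := by
  intro hl
  have hdvd {a b : ZMod m} (hab : some a ≠ some b) : ¬ (m : ℤ) ∣ (a.val : ℤ) - b.val :=
    fun h => hab (congrArg some ((dvd_natCast_val_sub_iff a b).1 h))
  match i, j, l with
  | some i, some j, some l =>
    exact not_mem_three_strips hr (hdvd hij) (hdvd hil) (hdvd hjl) hi hj hl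
  | some i, some j, none => exact not_mem_wall_of_mem_strips hr (hdvd hij) hi hj hl
  | some i, none, some l => exact not_mem_wall_of_mem_strips hr (hdvd hil) hi hl hj
  | none, some j, some l => exact not_mem_wall_of_mem_strips hr (hdvd hjl) hj hl hi
  | none, none, _ => exact hij rfl
  | none, _, none => exact hil rfl
  | _, none, none => exact hjl rfl

end Crossings

section Triangles

variable {m : ℕ} {r s t : ℝ} {σ c d n : ℤ} {L : ℤ → ℤ} {p : Plane}

/-- The lines `x_c = L c` bound a triangle of height `1 / 2` which points upwards or downwards
according to the sign `σ`. -/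
structure IsTriangle (m : ℕ) (σ : ℤ) (L : ℤ → ℤ) : Prop where
  sign : σ = 1 ∨ σ = -1
  strictAnti : StrictAnti L
  add_three : ∀ c, L (c + 3) = L c - m
  sum_eq : ∀ c, 2 * (L c + L (c + 1) + L (c + 2) + c * m) = -3 - σ

/-- The signed distance to the side of index `c`, positive inside of the triangle. -/
noncomputable def height (m : ℕ) (σ : ℤ) (L : ℤ → ℤ) (c : ℤ) : Plane →ᵃ[ℝ] ℝ :=
  (σ : ℝ) • (coord m c - AffineMap.const ℝ Plane (L c : ℝ))

/-- The triangle with sides `x_c = L c`, shrunk away from its sides by `1 / 50`. -/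
def triangle (m : ℕ) (σ : ℤ) (L : ℤ → ℤ) : Set Plane :=
  ⋂ c ∈ Finset.range 3, height m σ L c ⁻¹' Ioi (1 / 50)

theorem isOpen_triangle (m : ℕ) (σ : ℤ) (L : ℤ → ℤ) : IsOpen (triangle m σ L) :=
  isOpen_biInter_finset fun _ _ => isOpen_preimage_of_isOpen _ isOpen_Ioi

theorem convex_triangle (m : ℕ) (σ : ℤ) (L : ℤ → ℤ) : Convex ℝ (triangle m σ L) :=
  convex_iInter₂ fun _ _ => convex_preimage_of_ordConnected _ ordConnected_Ioi

theorem height_apply (m : ℕ) (σ : ℤ) (L : ℤ → ℤ) (c : ℤ) (p : Plane) :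
    height m σ L c p = σ * (coord m c p - L c) := rfl

theorem isStarShaped_of_convex {E : Type*} [AddCommGroup E] [Module ℝ E] {A : Set E}
    (hA : Convex ℝ A) (hne : A.Nonempty) : IsStarShaped A :=
  hne.imp fun _ hb => ⟨hb, hA.starConvex hb⟩

namespace IsTriangle

variable (h : IsTriangle m σ L)

include h

theorem sign_mul_sign : (σ : ℝ) * σ = 1 := by
  rcases h.sign with rfl | rfl <;> norm_num

theorem label_add_three_mul (c q : ℤ) : L (c + 3 * q) = L c - q * m := by
  induction q with
  | zero => simp
  | succ q ih =>
    rw [mul_add_one, ← add_assoc, h.add_three, ih]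
    ring
  | pred q ih =>
    have := h.add_three (c + 3 * (-q - 1))
    rw [show c + 3 * (-(q : ℤ) - 1) + 3 = c + 3 * -q by ring, ih] at this
    linarith

theorem height_eq_of_dvd (hcd : 3 ∣ d - c) : height m σ L d p = height m σ L c p := by
  obtain ⟨q, rfl, hq⟩ := coord_eq_sub_of_dvd (m := m) (p := p) hcd
  rw [height_apply, height_apply, hq, h.label_add_three_mul]
  push_cast
  ring

theorem height_add_height_add_height (c : ℤ) (p : Plane) :
    height m σ L c p + height m σ L (c + 1) p + height m σ L (c + 2) p = 1 / 2 := by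
  have hsum := coord_add_coord_add_coord m c p
  have hsumL : (2 * (L c + L (c + 1) + L (c + 2) + c * m) : ℝ) = -3 - σ := by
    exact_mod_cast h.sum_eq c
  simp only [height_apply]
  linear_combination (σ : ℝ) * hsum - (σ : ℝ) / 2 * hsumL + h.sign_mul_sign / 2

theorem exists_height_eq (c : ℤ) (s t : ℝ) :
    ∃ p, height m σ L c p = s ∧ height m σ L (c + 1) p = t := by
  obtain ⟨p, hs, ht⟩ := exists_coord_eq m c (L c + σ * s) (L (c + 1) + σ * t)
  refine ⟨p, ?_, ?_⟩
  · rw [height_apply, hs]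
    linear_combination s * h.sign_mul_sign
  · rw [height_apply, ht]
    linear_combination t * h.sign_mul_sign

theorem mem_triangle_iff (c : ℤ) : p ∈ triangle m σ L ↔
    1 / 50 < height m σ L c p ∧ 1 / 50 < height m σ L (c + 1) p ∧
      1 / 50 < height m σ L (c + 2) p := by
  refine ⟨fun hp => ?_, fun hc => mem_iInter₂.2 fun d _ => ?_⟩
  · have hpos (d : ℤ) : 1 / 50 < height m σ L d p := by
      have hrange (k : ℕ) (hk : k ∈ Finset.range 3) : 1 / 50 < height m σ L k p :=
        mem_iInter₂.1 hp k hk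
      rcases eq_or_dvd_sub 0 d with hd | hd | hd <;> rw [h.height_eq_of_dvd hd]
      exacts [hrange 0 (by simp), hrange 1 (by simp), hrange 2 (by simp)]
    exact ⟨hpos _, hpos _, hpos _⟩
  · change 1 / 50 < height m σ L d p
    rcases eq_or_dvd_sub c d with hd | hd | hd <;> rw [h.height_eq_of_dvd hd]
    exacts [hc.1, hc.2.1, hc.2.2]

theorem height_bounds (hp : p ∈ triangle m σ L) (c : ℤ) :
    1 / 50 < height m σ L c p ∧ height m σ L c p < 23 / 50 := by
  obtain ⟨h₀, h₁, h₂⟩ := (h.mem_triangle_iff c).1 hp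
  exact ⟨h₀, by linarith [h.height_add_height_add_height c p]⟩

theorem coord_eq (c : ℤ) (p : Plane) : coord m c p = L c + σ * height m σ L c p := by
  rw [height_apply]
  linear_combination (L c - coord m c p) * h.sign_mul_sign

theorem half_lt_gap (hp : p ∈ triangle m σ L) (c : ℤ) : 1 / 2 < gap m c p := by
  have hlabel : (L (c + 1) + 1 : ℝ) ≤ L c := by exact_mod_cast h.strictAnti (lt_add_one c)
  have h₀ := h.height_bounds hp c
  have h₁ := h.height_bounds hp (c + 1)
  rw [gap_apply, h.coord_eq c, h.coord_eq (c + 1)]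
  rcases h.sign with hσ | hσ <;> rw [hσ] at h₀ h₁ ⊢ <;> push_cast <;> linarith

theorem mem_domain (hp : p ∈ triangle m σ L) : p ∈ domain m :=
  mem_domain_of_quarter_lt_gap (c := 0) (lt_trans (by norm_num) (h.half_lt_gap hp _))
    (lt_trans (by norm_num) (h.half_lt_gap hp _)) ((half_pos one_pos).trans (h.half_lt_gap hp _))

theorem abs_coord_sub (hp : p ∈ triangle m σ L) (c : ℤ) :
    |coord m c p - L c| = height m σ L c p := by
  have hpos := (h.height_bounds hp c).1
  rw [h.coord_eq c, add_sub_cancel_left, abs_mul, abs_of_pos (a := height m σ L c p) (by linarith)]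
  rcases h.sign with rfl | rfl <;> norm_num

theorem eq_label_of_abs_coord_sub_lt (hp : p ∈ triangle m σ L)
    (hn : |coord m c p - n| < 1 / 2) : n = L c := by
  have hlabel := (h.height_bounds hp c).2
  rw [← h.abs_coord_sub hp, abs_sub_lt_iff] at hlabel
  rw [abs_sub_lt_iff] at hn
  have hlt : ((n - L c : ℤ) : ℝ) < (1 : ℤ) := by push_cast; linarith
  have hgt : ((-1 : ℤ) : ℝ) < (n - L c : ℤ) := by push_cast; linarith
  rw [Int.cast_lt] at hlt hgt
  lia

theorem exists_int_between (hp : p ∈ triangle m σ L) (c : ℤ) :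
    ∃ n : ℤ, coord m (c + 1) p < n ∧ n < coord m c p := by
  have hlabel : (L (c + 1) + 1 : ℝ) ≤ L c := by exact_mod_cast h.strictAnti (lt_add_one c)
  have h₀ := h.height_bounds hp c
  have h₁ := h.height_bounds hp (c + 1)
  rw [h.coord_eq c, h.coord_eq (c + 1)]
  rcases h.sign with hσ | hσ <;> rw [hσ] at h₀ h₁ ⊢ <;> push_cast
  · exact ⟨L c, by linarith, by linarith⟩
  · exact ⟨L (c + 1), by linarith, by linarith⟩

theorem mem_strip_iff (hr : r ≤ 3 / 100) (hp : p ∈ triangle m σ L) :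
    p ∈ strip m r n ↔ ∃ c, L c = n ∧ height m σ L c p < r := by
  simp only [← h.abs_coord_sub hp]
  refine ⟨fun hn => ?_, fun ⟨c, hc, hlt⟩ => mem_iUnion.2 ⟨c, h.mem_domain hp, ?_, ?_⟩⟩
  · obtain ⟨c, hc⟩ := mem_iUnion.1 hn
    have hlt := abs_coord_sub_lt_of_mem_arm hc
    obtain rfl := h.eq_label_of_abs_coord_sub_lt hp (hlt.trans (by linarith))
    exact ⟨c, rfl, hlt⟩
  · rw [hc, abs_sub_lt_iff] at hlt
    exact ⟨by linarith, by linarith⟩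
  · exact lt_trans (by norm_num) (h.half_lt_gap hp (c + 1))

theorem mem_strip_label_iff (hr : r ≤ 3 / 100) (hp : p ∈ triangle m σ L) :
    p ∈ strip m r (L c) ↔ height m σ L c p < r := by
  rw [h.mem_strip_iff hr hp]
  exact ⟨fun ⟨_, hd, hlt⟩ => h.strictAnti.injective hd ▸ hlt, fun hlt => ⟨c, rfl, hlt⟩⟩

theorem not_mem_wall (hr : r ≤ 1 / 2) (hp : p ∈ triangle m σ L) : p ∉ wall m r :=
  fun ⟨_, c, hc⟩ => by linarith [h.half_lt_gap hp c]

theorem not_mem_strip (hr : r ≤ 1 / 50) (hp : p ∈ triangle m σ L) : p ∉ strip m r n := by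
  rw [h.mem_strip_iff (by linarith) hp]
  rintro ⟨c, -, hlt⟩
  linarith [h.height_bounds hp c]

theorem isStarShaped_strip_inter (hr : 1 / 40 < r) (hr' : r ≤ 3 / 100) (c : ℤ) :
    IsStarShaped (strip m r (L c) ∩ triangle m σ L) := by
  have heq : strip m r (L c) ∩ triangle m σ L = height m σ L c ⁻¹' Iio r ∩ triangle m σ L := by
    ext p
    exact and_congr_left fun hp => h.mem_strip_label_iff hr' hp
  rw [heq]
  refine isStarShaped_of_convex ((convex_preimage_of_ordConnected _ ordConnected_Iio).inter
    (convex_triangle ..)) ?_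
  obtain ⟨p, h₀, h₁⟩ := h.exists_height_eq c (1 / 40) (1 / 5)
  have hsum := h.height_add_height_add_height c p
  exact ⟨p, h₀.trans_lt hr, (h.mem_triangle_iff c).2 ⟨by linarith, by linarith, by linarith⟩⟩

theorem isStarShaped_strip_inter_strip_inter (hr : 1 / 40 < r) (hr' : r ≤ 3 / 100)
    (hcd : ¬ 3 ∣ d - c) :
    IsStarShaped (strip m r (L c) ∩ strip m r (L d) ∩ triangle m σ L) := by
  have heq : strip m r (L c) ∩ strip m r (L d) ∩ triangle m σ L =
      height m σ L c ⁻¹' Iio r ∩ height m σ L d ⁻¹' Iio r ∩ triangle m σ L := by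
    ext p
    exact and_congr_left fun hp =>
      and_congr (h.mem_strip_label_iff hr' hp) (h.mem_strip_label_iff hr' hp)
  rw [heq]
  refine isStarShaped_of_convex (((convex_preimage_of_ordConnected _ ordConnected_Iio).inter
    (convex_preimage_of_ordConnected _ ordConnected_Iio)).inter (convex_triangle ..)) ?_
  obtain ⟨e, he⟩ : ∃ e, 3 ∣ c - e ∧ 3 ∣ d - (e + 1) ∨ 3 ∣ d - e ∧ 3 ∣ c - (e + 1) := by
    rcases eq_or_dvd_sub c d with hd | hd | hd
    exacts [absurd hd hcd, ⟨c, by lia⟩, ⟨d, by lia⟩]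
  obtain ⟨p, h₀, h₁⟩ := h.exists_height_eq e (1 / 40) (1 / 40)
  have hsum := h.height_add_height_add_height e p
  have hp : p ∈ triangle m σ L :=
    (h.mem_triangle_iff e).2 ⟨by linarith, by linarith, by linarith⟩
  refine ⟨p, ?_, hp⟩
  rw [mem_inter_iff, mem_preimage, mem_preimage, mem_Iio, mem_Iio]
  rcases he with ⟨hc, hd⟩ | ⟨hd, hc⟩ <;> rw [h.height_eq_of_dvd hc, h.height_eq_of_dvd hd] <;>
    constructor <;> linarith

end IsTriangle

end Triangles

section Labels

variable {m : ℕ} {x y z : ℤ}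

theorem exists_label (hxy : y < x) (hyz : z < y) (hzx : x < z + m) :
    ∃ M : ℤ → ℤ, StrictAnti M ∧ (∀ c, M (c + 3) = M c - m) ∧
      (∀ c, M c + M (c + 1) + M (c + 2) + c * m = x + y + z) ∧
      ∀ n, (∃ c, M c = n) ↔ ∃ q, n + q * m = x ∨ n + q * m = y ∨ n + q * m = z := by
  let M : ℤ → ℤ := fun c => (if c % 3 = 0 then x else if c % 3 = 1 then y else z) - c / 3 * m
  have hM (c q : ℤ) : M (c + 3 * q) = M c - q * m := by
    have hdiv : (c + 3 * q) / 3 = c / 3 + q := by lia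
    simp only [M, Int.add_mul_emod_self_left, hdiv]
    ring
  have h₀ : M 0 = x := by simp [M]
  have h₁ : M 1 = y := by simp [M]
  have h₂ : M 2 = z := by simp [M]
  have h₃ : M 3 = x - m := by simp [M]
  have h₄ : M 4 = y - m := by simp [M]
  refine ⟨M, strictAnti_int_of_succ_lt fun c => ?_, fun c => by simpa using hM c 1, fun c => ?_,
    fun n => ⟨fun ⟨c, hc⟩ => ?_, fun ⟨q, hq⟩ => ?_⟩⟩
  · obtain ⟨q, rfl | rfl | rfl⟩ := exists_eq_add_three_mul c <;>
      simp only [add_right_comm _ (3 * q) 1, hM] <;> norm_num [h₀, h₁, h₂, h₃] <;> linarith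
  · obtain ⟨q, rfl | rfl | rfl⟩ := exists_eq_add_three_mul c <;>
      simp only [add_right_comm _ (3 * q) 1, add_right_comm _ (3 * q) 2, hM] <;>
      norm_num [h₀, h₁, h₂, h₃, h₄] <;> ring
  · obtain ⟨q, rfl | rfl | rfl⟩ := exists_eq_add_three_mul c <;> rw [hM] at hc <;>
      exact ⟨q, by lia⟩
  · rcases hq with hq | hq | hq
    · exact ⟨0 + 3 * q, by rw [hM]; lia⟩
    · exact ⟨1 + 3 * q, by rw [hM]; lia⟩
    · exact ⟨2 + 3 * q, by rw [hM]; lia⟩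

theorem exists_lt_lt_eq_of_card_eq_three {α : Type*} [LinearOrder α] {s : Finset α}
    (hs : s.card = 3) : ∃ x y z, y < x ∧ z < y ∧ s = {x, y, z} := by
  let f := s.orderEmbOfFin hs
  refine ⟨f 2, f 1, f 0, f.strictMono (by decide), f.strictMono (by decide), ?_⟩
  rw [← Finset.image_orderEmbOfFin_univ s hs]
  ext a
  simp only [Finset.mem_image, Finset.mem_univ, true_and, Fin.exists_fin_succ, Fin.exists_fin_zero,
    Finset.mem_insert, Finset.mem_singleton, f, eq_comm (a := a)]
  tauto

theorem exists_val_eq_of_card_eq_three [NeZero m] {S : Finset (ZMod m)} (hS : S.card = 3) :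
    ∃ x y z : ℕ, y < x ∧ z < y ∧ x < m ∧ ∑ i ∈ S, i = ((x + y + z : ℕ) : ZMod m) ∧
      ∀ i, i ∈ S ↔ i.val = x ∨ i.val = y ∨ i.val = z := by
  obtain ⟨x, y, z, hxy, hyz, hxyz⟩ := exists_lt_lt_eq_of_card_eq_three
    ((Finset.card_map ⟨ZMod.val, ZMod.val_injective m⟩).trans hS)
  have hmem (i : ZMod m) : i ∈ S ↔ i.val = x ∨ i.val = y ∨ i.val = z := by
    rw [← Finset.mem_map' ⟨ZMod.val, ZMod.val_injective m⟩, hxyz]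
    simp
  have hx : x ∈ S.map ⟨ZMod.val, ZMod.val_injective m⟩ := by simp [hxyz]
  obtain ⟨i, -, rfl⟩ := Finset.mem_map.1 hx
  refine ⟨i.val, y, z, hxy, hyz, i.val_lt, ?_, hmem⟩
  calc ∑ i ∈ S, i = ∑ n ∈ S.map ⟨ZMod.val, ZMod.val_injective m⟩, (n : ZMod m) := by
        simp [Finset.sum_map]
    _ = ((i.val + y + z : ℕ) : ZMod m) := by
        rw [hxyz, Finset.sum_insert, Finset.sum_insert, Finset.sum_singleton]
        · push_cast
          exact (add_assoc _ _ _).symm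
        · simpa using hyz.ne'
        · simpa using ⟨hxy.ne', (hyz.trans hxy).ne'⟩

theorem exists_isTriangle [NeZero m] {S : Finset (ZMod m)} (hS : S.card = 3)
    (hsum : ∑ i ∈ S, i = -2 ∨ ∑ i ∈ S, i = -1) :
    ∃ σ L, IsTriangle m σ L ∧ ∀ i, i ∈ S ↔ ∃ c, L c = i.val := by
  obtain ⟨σ, t, hσ, ht, hst⟩ : ∃ σ t : ℤ, (σ = 1 ∨ σ = -1) ∧ 2 * t = -3 - σ ∧
      ∑ i ∈ S, i = (t : ZMod m) := by
    rcases hsum with h | h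
    · exact ⟨1, -2, Or.inl rfl, by norm_num, by rw [h]; norm_num⟩
    · exact ⟨-1, -1, Or.inr rfl, by norm_num, by rw [h]; norm_num⟩
  obtain ⟨x, y, z, hxy, hyz, hlt, hval, hmem⟩ := exists_val_eq_of_card_eq_three hS
  obtain ⟨a, ha⟩ := (ZMod.intCast_eq_intCast_iff_dvd_sub t (x + y + z) m).1 (by
    rw [← hst, hval]; push_cast; rfl)
  obtain ⟨M, hM, hM₃, hMsum, hMmem⟩ := exists_label (m := m) (x := x) (y := y) (z := z)
    (by lia) (by lia) (by lia)
  refine ⟨σ, fun c => M (c + a), ⟨hσ, fun c d hcd => hM (by lia), fun c => ?_, fun c => ?_⟩,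
    fun i => ?_⟩
  · rw [← hM₃, add_right_comm]
  · have := hMsum (c + a)
    simp only [add_right_comm _ _ a]
    linarith
  · have hshift : (∃ c, M (c + a) = i.val) ↔ ∃ c, M c = i.val :=
      ⟨fun ⟨c, hc⟩ => ⟨c + a, hc⟩, fun ⟨c, hc⟩ => ⟨c - a, by rwa [sub_add_cancel]⟩⟩
    rw [hmem, hshift, hMmem]
    refine ⟨fun h => ⟨0, by lia⟩, fun ⟨q, hq⟩ => ?_⟩
    have eq_of_add_mul_eq {n : ℕ} (hn : n < m) (h : i.val + q * m = (n : ℤ)) : i.val = n := by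
      have hmod := congrArg (· % (m : ℤ)) h
      rw [Int.add_mul_emod_self_right] at hmod
      norm_cast at hmod
      rwa [Nat.mod_eq_of_lt i.val_lt, Nat.mod_eq_of_lt hn] at hmod
    exact hq.imp (eq_of_add_mul_eq hlt)
      (Or.imp (eq_of_add_mul_eq (hxy.trans hlt)) (eq_of_add_mul_eq (hyz.trans (hxy.trans hlt))))

end Labels

section Pockets

variable {m : ℕ} {r : ℝ} {c i j n : ℤ} {p : Plane}

/-- The index such that the boundary and the billiard paths `x_{c+1} = i` and `x_c = i + 1` bound a
region for `c = pocketIndex m i`. -/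
def pocketIndex (m : ℕ) (i : ℤ) : ℤ := level m (3 * i + 2)

theorem pocketIndex_le [NeZero m] (i : ℤ) : 3 * i + pocketIndex m i * m ≤ m - 4 := by
  have := (level_bounds (m := m) (3 * i + 2)).2
  rw [pocketIndex]
  linarith

theorem le_pocketIndex [NeZero m] (hm : ¬ 3 ∣ m) (hi : ¬ (m : ℤ) ∣ i + 1) :
    -2 ≤ 3 * i + pocketIndex m i * m := by
  have hbound := (level_bounds (m := m) (3 * i + 2)).1
  change -1 ≤ 3 * i + 2 + pocketIndex m i * m at hbound
  refine lt_of_le_of_ne (show -3 ≤ 3 * i + pocketIndex m i * m by linarith) fun h => hi ?_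
  have hcoprime : IsCoprime (m : ℤ) 3 :=
    Nat.isCoprime_iff_coprime.2 ((Nat.prime_three.coprime_iff_not_dvd.2 hm).symm)
  exact hcoprime.dvd_of_dvd_mul_left ⟨-pocketIndex m i, by linarith⟩

/-- The region between the boundary and the billiard paths `i` and `i + 1`, shrunk away from its
sides by `1 / 50`. -/
def pocket (m : ℕ) (i : ℤ) : Set Plane :=
  domain m ∩ ((coord m (pocketIndex m i + 1) ⁻¹' Ioi (i + 1 / 50) ∩
      coord m (pocketIndex m i) ⁻¹' Iio (i + 1 - 1 / 50)) ∩
    (gap m (pocketIndex m i) ⁻¹' Ioi (1 / 50) ∩ (gap m (pocketIndex m i + 1) ⁻¹' Ioi (1 / 50) ∩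
      gap m (pocketIndex m i + 2) ⁻¹' Ioi (1 / 50))))

theorem isOpen_pocket (m : ℕ) (i : ℤ) : IsOpen (pocket m i) := by
  refine (isOpen_domain m).inter (.inter (.inter ?_ ?_) (.inter ?_ (.inter ?_ ?_)))
  exacts [isOpen_preimage_of_isOpen _ isOpen_Ioi, isOpen_preimage_of_isOpen _ isOpen_Iio,
    isOpen_preimage_of_isOpen _ isOpen_Ioi, isOpen_preimage_of_isOpen _ isOpen_Ioi,
    isOpen_preimage_of_isOpen _ isOpen_Ioi]

theorem convex_pocket (m : ℕ) (i : ℤ) : Convex ℝ (pocket m i) := by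
  refine (convex_domain m).inter (.inter (.inter ?_ ?_) (.inter ?_ (.inter ?_ ?_)))
  exacts [convex_preimage_of_ordConnected _ ordConnected_Ioi,
    convex_preimage_of_ordConnected _ ordConnected_Iio,
    convex_preimage_of_ordConnected _ ordConnected_Ioi,
    convex_preimage_of_ordConnected _ ordConnected_Ioi,
    convex_preimage_of_ordConnected _ ordConnected_Ioi]

theorem mem_pocket_iff : p ∈ pocket m i ↔ p ∈ domain m ∧
    (i + 1 / 50 < coord m (pocketIndex m i + 1) p ∧
      coord m (pocketIndex m i) p < i + 1 - 1 / 50) ∧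
    1 / 50 < gap m (pocketIndex m i) p ∧ 1 / 50 < gap m (pocketIndex m i + 1) p ∧
      1 / 50 < gap m (pocketIndex m i + 2) p :=
  Iff.rfl

theorem dvd_sub_of_mem_pocket (hi : p ∈ pocket m i) (hj : p ∈ pocket m j) : (m : ℤ) ∣ i - j := by
  obtain ⟨hp, ⟨hi₁, hi₀⟩, -⟩ := mem_pocket_iff.1 hi
  obtain ⟨-, ⟨hj₁, hj₀⟩, -⟩ := mem_pocket_iff.1 hj
  have hgi := gap_pos hp (pocketIndex m i)
  have hgj := gap_pos hp (pocketIndex m j)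
  rw [gap_apply] at hgi hgj
  obtain ⟨c, d, hc, hd, hcd⟩ : ∃ c d, (c = pocketIndex m i ∨ c = pocketIndex m i + 1) ∧
      (d = pocketIndex m j ∨ d = pocketIndex m j + 1) ∧ 3 ∣ d - c := by
    rcases eq_or_dvd_sub (pocketIndex m i) (pocketIndex m j) with h | h | h
    · exact ⟨_, _, .inl rfl, .inl rfl, h⟩
    · exact ⟨_, _, .inr rfl, .inl rfl, h⟩
    · exact ⟨_, _, .inl rfl, .inr rfl, by lia⟩
  refine dvd_sub_of_abs_coord_sub_lt (p := p) (abs_lt.2 ?_) hcd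
  rcases hc with rfl | rfl <;> rcases hd with rfl | rfl <;> constructor <;> linarith

theorem mem_strip_of_mem_pocket (hr : r ≤ 3 / 100) (hp : p ∈ pocket m i) (hn : p ∈ strip m r n) :
    (∃ q, n + q * m = i + 1 ∧ i + 1 - r < coord m (pocketIndex m i) p) ∨
      ∃ q, n + q * m = i ∧ coord m (pocketIndex m i + 1) p < i + r := by
  obtain ⟨-, ⟨h₁, h₀⟩, hgap₀, -⟩ := mem_pocket_iff.1 hp
  obtain ⟨c, -, ⟨hl, hu⟩, hgap : 49 / 100 < gap m (c + 1) p⟩ := mem_iUnion.1 hn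
  rw [gap_apply] at hgap₀
  rcases eq_or_dvd_sub (pocketIndex m i) c with h | h | h
  all_goals
    obtain ⟨q, -, hq⟩ := coord_eq_sub_of_dvd (m := m) (p := p) h
    rw [hq] at hl hu
  · left
    have hlt : (n + q * m - i : ℤ) < (2 : ℝ) := by push_cast; linarith
    have hgt : (0 : ℝ) < (n + q * m - i : ℤ) := by push_cast; linarith
    have hlt' : n + q * m - i < 2 := by exact_mod_cast hlt
    have hgt' : 0 < n + q * m - i := by exact_mod_cast hgt
    have heq : n + q * m = i + 1 := by linarith
    have heq' : (n + q * m : ℝ) = i + 1 := by exact_mod_cast heq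
    exact ⟨q, heq, by linarith⟩
  · right
    have hlt : (n + q * m - i : ℤ) < (1 : ℝ) := by push_cast; linarith
    have hgt : (-1 : ℝ) < (n + q * m - i : ℤ) := by push_cast; linarith
    have hlt' : n + q * m - i < 1 := by exact_mod_cast hlt
    have hgt' : -1 < n + q * m - i := by exact_mod_cast hgt
    have heq : n + q * m = i := by linarith
    have heq' : (n + q * m : ℝ) = i := by exact_mod_cast heq
    exact ⟨q, heq, by linarith⟩
  · exfalso
    have hsum := coord_add_coord_add_coord m (pocketIndex m i) p
    rw [gap_eq_of_dvd (c := pocketIndex m i) (by lia), gap_apply] at hgap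
    have hlt : (n + q * m + 2 * i + pocketIndex m i * m : ℤ) < (-2 : ℝ) := by
      push_cast; linarith
    have hgt : (-3 : ℝ) < (n + q * m + 2 * i + pocketIndex m i * m : ℤ) := by
      push_cast; linarith
    have hlt' : n + q * m + 2 * i + pocketIndex m i * m < -2 := by exact_mod_cast hlt
    have hgt' : -3 < n + q * m + 2 * i + pocketIndex m i * m := by exact_mod_cast hgt
    lia

theorem mem_strip_self_iff_of_mem_pocket [NeZero m] (hs : -2 ≤ 3 * i + pocketIndex m i * m)
    (hr : r ≤ 3 / 100) (hp : p ∈ pocket m i) :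
    p ∈ strip m r i ↔ coord m (pocketIndex m i + 1) p < i + r := by
  obtain ⟨hdom, ⟨h₁, h₀⟩, -⟩ := mem_pocket_iff.1 hp
  have hupper := pocketIndex_le (m := m) i
  refine ⟨fun hi => ?_, fun hlt => mem_iUnion.2
    ⟨pocketIndex m i + 1, hdom, ⟨by linarith, hlt⟩, ?_⟩⟩
  · obtain ⟨q, hq, -⟩ | ⟨-, -, hlt⟩ := mem_strip_of_mem_pocket hr hp hi
    · have := Int.le_of_dvd one_pos (⟨q, by linarith⟩ : (m : ℤ) ∣ 1)
      lia
    · exact hlt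
  · have hupper' : (3 * i + pocketIndex m i * m : ℝ) ≤ m - 4 := by exact_mod_cast hupper
    rw [add_assoc, one_add_one_eq_two, mem_preimage, gap_add_two_eq, mem_Ioi]
    linarith

theorem mem_strip_add_one_iff_of_mem_pocket [NeZero m]
    (hs : -2 ≤ 3 * i + pocketIndex m i * m) (hr : r ≤ 3 / 100) (hp : p ∈ pocket m i) :
    p ∈ strip m r (i + 1) ↔ i + 1 - r < coord m (pocketIndex m i) p := by
  obtain ⟨hdom, ⟨h₁, h₀⟩, -⟩ := mem_pocket_iff.1 hp
  have hupper := pocketIndex_le (m := m) i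
  refine ⟨fun hi => ?_, fun hlt => mem_iUnion.2 ⟨pocketIndex m i, hdom, ⟨?_, ?_⟩, ?_⟩⟩
  · obtain ⟨-, -, hlt⟩ | ⟨q, hq, -⟩ := mem_strip_of_mem_pocket hr hp hi
    · exact hlt
    · have := Int.le_of_dvd one_pos (⟨-q, by linarith⟩ : (m : ℤ) ∣ 1)
      lia
  · push_cast
    exact hlt
  · push_cast
    linarith
  · have hs' : (-2 : ℝ) ≤ 3 * i + pocketIndex m i * m := by exact_mod_cast hs
    rw [mem_preimage, gap_add_one_eq, mem_Ioi]
    linarith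

theorem not_mem_wall_of_mem_pocket (hr : r ≤ 1 / 50) (hp : p ∈ pocket m i) : p ∉ wall m r := by
  rintro ⟨-, hgap⟩
  obtain ⟨-, -, h₀, h₁, h₂⟩ := mem_pocket_iff.1 hp
  rcases (exists_gap_lt_iff (pocketIndex m i)).1 hgap with h | h | h <;> linarith

theorem not_mem_strip_of_mem_pocket (hr : r ≤ 1 / 50) (hp : p ∈ pocket m i) :
    p ∉ strip m r n := by
  obtain ⟨-, ⟨h₁, h₀⟩, -⟩ := mem_pocket_iff.1 hp
  intro hn
  obtain ⟨-, -, h⟩ | ⟨-, -, h⟩ := mem_strip_of_mem_pocket (hr.trans (by norm_num)) hp hn <;>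
    linarith

theorem exists_mem_pocket {y z : ℝ} (hy : 1 / 50 < y) (hz : 1 / 50 < z)
    (h₀ : 1 / 50 < 1 - y - z) (h₁ : 1 / 50 < 3 * i + pocketIndex m i * m + 5 / 2 + 2 * y - z)
    (h₂ : 1 / 50 < m - (3 * i + pocketIndex m i * m) - 7 / 2 + 2 * z - y)
    (hdom : ∀ p, gap m (pocketIndex m i) p = 1 - y - z →
      gap m (pocketIndex m i + 1) p = 3 * i + pocketIndex m i * m + 5 / 2 + 2 * y - z →
      gap m (pocketIndex m i + 2) p = m - (3 * i + pocketIndex m i * m) - 7 / 2 + 2 * z - y →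
      p ∈ domain m) :
    ∃ p ∈ pocket m i, coord m (pocketIndex m i + 1) p = i + y ∧
      coord m (pocketIndex m i) p = i + 1 - z := by
  obtain ⟨p, h, h'⟩ := exists_coord_eq m (pocketIndex m i) (i + 1 - z) (i + y)
  have hgap₀ := gap_apply m (pocketIndex m i) p
  have hgap₁ := gap_add_one_eq m (pocketIndex m i) p
  have hgap₂ := gap_add_two_eq m (pocketIndex m i) p
  exact ⟨p, mem_pocket_iff.2 ⟨hdom p (by linarith) (by linarith) (by linarith),
    ⟨by linarith, by linarith⟩, by linarith, by linarith, by linarith⟩, h', h⟩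

theorem exists_mem_pocket_near_strips [NeZero m] (hs : -2 ≤ 3 * i + pocketIndex m i * m) :
    ∃ p ∈ pocket m i, coord m (pocketIndex m i + 1) p = i + 1 / 40 ∧
      coord m (pocketIndex m i) p = i + 1 - 1 / 40 := by
  have hs' : (-2 : ℝ) ≤ 3 * i + pocketIndex m i * m := by exact_mod_cast hs
  have hu : (3 * i + pocketIndex m i * m : ℝ) ≤ m - 4 := by exact_mod_cast pocketIndex_le i
  refine exists_mem_pocket (by norm_num) (by norm_num) (by norm_num) (by linarith) (by linarith)
    fun p h₀ h₁ h₂ => mem_domain_of_quarter_lt_gap (c := pocketIndex m i) ?_ ?_ ?_ <;> linarith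

theorem exists_mem_pocket_near_strip_wall [NeZero m]
    (hs : -2 ≤ 3 * i + pocketIndex m i * m) :
    ∃ p ∈ pocket m i, coord m (pocketIndex m i + 1) p = i + 1 / 40 ∧
      ∃ c, gap m c p = 1 / 40 := by
  have hs' : (-2 : ℝ) ≤ 3 * i + pocketIndex m i * m := by exact_mod_cast hs
  have hu : (3 * i + pocketIndex m i * m : ℝ) ≤ m - 4 := by exact_mod_cast pocketIndex_le i
  rcases hs.eq_or_lt with h | h
  · have h' : (-2 : ℝ) = 3 * i + pocketIndex m i * m := by exact_mod_cast h
    obtain ⟨p, hp, hy, hz⟩ := exists_mem_pocket (m := m) (i := i) (y := 1 / 40) (z := 21 / 40)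
      (by norm_num) (by norm_num) (by norm_num) (by linarith) (by linarith)
      fun p h₀ h₁ h₂ => mem_domain_of_quarter_lt_gap (c := pocketIndex m i + 2) (by linarith)
        (by rw [gap_eq_of_dvd (c := pocketIndex m i) (by lia)]; linarith)
        (by rw [gap_eq_of_dvd (c := pocketIndex m i + 1) (by lia)]; linarith)
    exact ⟨p, hp, hy, pocketIndex m i + 1, by rw [gap_add_one_eq]; linarith⟩
  · have h' : (-1 : ℝ) ≤ 3 * i + pocketIndex m i * m := by exact_mod_cast h
    obtain ⟨p, hp, hy, hz⟩ := exists_mem_pocket (m := m) (i := i) (y := 1 / 40) (z := 19 / 20)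
      (by norm_num) (by norm_num) (by norm_num) (by linarith) (by linarith)
      fun p h₀ h₁ h₂ => mem_domain_of_quarter_lt_gap (c := pocketIndex m i + 1) (by linarith)
        (by rw [add_assoc, one_add_one_eq_two]; linarith)
        (by rw [gap_eq_of_dvd (c := pocketIndex m i) (by lia)]; linarith)
    exact ⟨p, hp, hy, pocketIndex m i, by rw [gap_apply]; linarith⟩

theorem exists_mem_pocket_near_strip_add_one_wall [NeZero m]
    (hs : -2 ≤ 3 * i + pocketIndex m i * m) :
    ∃ p ∈ pocket m i, coord m (pocketIndex m i) p = i + 1 - 1 / 40 ∧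
      ∃ c, gap m c p = 1 / 40 := by
  have hs' : (-2 : ℝ) ≤ 3 * i + pocketIndex m i * m := by exact_mod_cast hs
  have hu : (3 * i + pocketIndex m i * m : ℝ) ≤ m - 4 := by exact_mod_cast pocketIndex_le i
  rcases (pocketIndex_le (m := m) i).eq_or_lt with h | h
  · have h' : (3 * i + pocketIndex m i * m : ℝ) = m - 4 := by exact_mod_cast h
    obtain ⟨p, hp, hy, hz⟩ := exists_mem_pocket (m := m) (i := i) (y := 21 / 40) (z := 1 / 40)
      (by norm_num) (by norm_num) (by norm_num) (by linarith) (by linarith)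
      fun p h₀ h₁ h₂ => mem_domain_of_quarter_lt_gap (c := pocketIndex m i) (by linarith)
        (by linarith) (by linarith)
    exact ⟨p, hp, hz, pocketIndex m i + 2, by rw [gap_add_two_eq]; linarith⟩
  · have h' : (3 * i + pocketIndex m i * m + 1 : ℝ) ≤ m - 4 := by exact_mod_cast h
    obtain ⟨p, hp, hy, hz⟩ := exists_mem_pocket (m := m) (i := i) (y := 19 / 20) (z := 1 / 40)
      (by norm_num) (by norm_num) (by norm_num) (by linarith) (by linarith)
      fun p h₀ h₁ h₂ => mem_domain_of_quarter_lt_gap (c := pocketIndex m i + 1) (by linarith)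
        (by rw [add_assoc, one_add_one_eq_two]; linarith)
        (by rw [gap_eq_of_dvd (c := pocketIndex m i) (by lia)]; linarith)
    exact ⟨p, hp, hz, pocketIndex m i, by rw [gap_apply]; linarith⟩

theorem strip_inter_pocket_eq [NeZero m] (hs : -2 ≤ 3 * i + pocketIndex m i * m)
    (hr : r ≤ 3 / 100) :
    strip m r i ∩ pocket m i = coord m (pocketIndex m i + 1) ⁻¹' Iio (i + r) ∩ pocket m i := by
  ext p
  exact and_congr_left fun hp => mem_strip_self_iff_of_mem_pocket hs hr hp

theorem strip_add_one_inter_pocket_eq [NeZero m] (hs : -2 ≤ 3 * i + pocketIndex m i * m)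
    (hr : r ≤ 3 / 100) :
    strip m r (i + 1) ∩ pocket m i = coord m (pocketIndex m i) ⁻¹' Ioi (i + 1 - r) ∩
      pocket m i := by
  ext p
  exact and_congr_left fun hp => mem_strip_add_one_iff_of_mem_pocket hs hr hp

theorem convex_strip_inter_pocket [NeZero m] (hs : -2 ≤ 3 * i + pocketIndex m i * m)
    (hr : r ≤ 3 / 100) : Convex ℝ (strip m r i ∩ pocket m i) := by
  rw [strip_inter_pocket_eq hs hr]
  exact (convex_preimage_of_ordConnected _ ordConnected_Iio).inter (convex_pocket m i)

theorem convex_strip_add_one_inter_pocket [NeZero m] (hs : -2 ≤ 3 * i + pocketIndex m i * m)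
    (hr : r ≤ 3 / 100) : Convex ℝ (strip m r (i + 1) ∩ pocket m i) := by
  rw [strip_add_one_inter_pocket_eq hs hr]
  exact (convex_preimage_of_ordConnected _ ordConnected_Ioi).inter (convex_pocket m i)

theorem convex_wall_inter_strip_inter [NeZero m] (hr : r ≤ 3 / 100) {s : Set Plane}
    (hs : Convex ℝ (strip m r j ∩ s)) : Convex ℝ (wall m r ∩ strip m r j ∩ s) := by
  have heq : wall m r ∩ strip m r j ∩ s = gap m (bend m j) ⁻¹' Iio r ∩ (strip m r j ∩ s) := by
    rw [inter_assoc]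
    ext p
    exact and_congr_left fun hp => mem_wall_iff_of_mem_strip hr hr hp.1
  rw [heq]
  exact (convex_preimage_of_ordConnected _ ordConnected_Iio).inter hs

theorem isStarShaped_strip_inter_strip_inter_pocket [NeZero m]
    (hs : -2 ≤ 3 * i + pocketIndex m i * m) (hr : 1 / 40 < r) (hr' : r ≤ 3 / 100) :
    IsStarShaped (strip m r i ∩ strip m r (i + 1) ∩ pocket m i) := by
  obtain ⟨p, hp, h₁, h₀⟩ := exists_mem_pocket_near_strips hs
  refine isStarShaped_of_convex ?_ ⟨p, ⟨?_, ?_⟩, hp⟩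
  · rw [inter_inter_distrib_right]
    exact (convex_strip_inter_pocket hs hr').inter (convex_strip_add_one_inter_pocket hs hr')
  · exact (mem_strip_self_iff_of_mem_pocket hs hr' hp).2 (by linarith)
  · exact (mem_strip_add_one_iff_of_mem_pocket hs hr' hp).2 (by linarith)

theorem isStarShaped_strip_inter_pocket [NeZero m] (hs : -2 ≤ 3 * i + pocketIndex m i * m)
    (hr : 1 / 40 < r) (hr' : r ≤ 3 / 100) : IsStarShaped (strip m r i ∩ pocket m i) := by
  obtain ⟨p, hp, -⟩ := isStarShaped_strip_inter_strip_inter_pocket hs hr hr'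
  exact isStarShaped_of_convex (convex_strip_inter_pocket hs hr') ⟨p, hp.1.1, hp.2⟩

theorem isStarShaped_strip_add_one_inter_pocket [NeZero m]
    (hs : -2 ≤ 3 * i + pocketIndex m i * m) (hr : 1 / 40 < r) (hr' : r ≤ 3 / 100) :
    IsStarShaped (strip m r (i + 1) ∩ pocket m i) := by
  obtain ⟨p, hp, -⟩ := isStarShaped_strip_inter_strip_inter_pocket hs hr hr'
  exact isStarShaped_of_convex (convex_strip_add_one_inter_pocket hs hr') ⟨p, hp.1.2, hp.2⟩

theorem isStarShaped_wall_inter_strip_inter_pocket [NeZero m]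
    (hs : -2 ≤ 3 * i + pocketIndex m i * m) (hr : 1 / 40 < r) (hr' : r ≤ 3 / 100) :
    IsStarShaped (wall m r ∩ strip m r i ∩ pocket m i) := by
  obtain ⟨p, hp, h₁, c, hc⟩ := exists_mem_pocket_near_strip_wall hs
  exact isStarShaped_of_convex
    (convex_wall_inter_strip_inter hr' (convex_strip_inter_pocket hs hr'))
    ⟨p, ⟨⟨hp.1, c, by linarith⟩,
      (mem_strip_self_iff_of_mem_pocket hs hr' hp).2 (by linarith)⟩, hp⟩

theorem isStarShaped_wall_inter_strip_add_one_inter_pocket [NeZero m]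
    (hs : -2 ≤ 3 * i + pocketIndex m i * m) (hr : 1 / 40 < r) (hr' : r ≤ 3 / 100) :
    IsStarShaped (wall m r ∩ strip m r (i + 1) ∩ pocket m i) := by
  obtain ⟨p, hp, h₀, c, hc⟩ := exists_mem_pocket_near_strip_add_one_wall hs
  exact isStarShaped_of_convex
    (convex_wall_inter_strip_inter hr' (convex_strip_add_one_inter_pocket hs hr'))
    ⟨p, ⟨⟨hp.1, c, by linarith⟩,
      (mem_strip_add_one_iff_of_mem_pocket hs hr' hp).2 (by linarith)⟩, hp⟩

theorem mem_wall_iff_of_mem_pocket (hp : p ∈ pocket m i) :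
    p ∈ wall m r ↔ gap m (pocketIndex m i) p < r ∨ gap m (pocketIndex m i + 1) p < r ∨
      gap m (pocketIndex m i + 2) p < r :=
  ⟨fun h => (exists_gap_lt_iff _).1 h.2,
    fun h => ⟨(mem_pocket_iff.1 hp).1, (exists_gap_lt_iff _).2 h⟩⟩

theorem lt_gap_of_mem_pocket (hp : p ∈ pocket m i) :
    3 * i + pocketIndex m i * m + 3 / 2 < gap m (pocketIndex m i + 1) p ∧
      m - (3 * i + pocketIndex m i * m) - 9 / 2 < gap m (pocketIndex m i + 2) p := by
  obtain ⟨hdom, ⟨h₁, h₀⟩, -⟩ := mem_pocket_iff.1 hp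
  have hpos := gap_pos hdom (pocketIndex m i)
  rw [gap_apply] at hpos
  rw [gap_add_one_eq, gap_add_two_eq]
  constructor <;> linarith

theorem exists_mem_pocket_gap_add_one_eq (hm : 3 ≤ m) (hs : 3 * i + pocketIndex m i * m = -2) :
    ∃ b ∈ pocket m i, gap m (pocketIndex m i) b = 1 / 40 ∧
      gap m (pocketIndex m i + 1) b = 1 / 40 := by
  have hm' : (3 : ℝ) ≤ m := by exact_mod_cast hm
  have hs' : (3 * i + pocketIndex m i * m : ℝ) = -2 := by exact_mod_cast hs
  have hdvd : ¬ 3 ∣ pocketIndex m i := fun ⟨q, hq⟩ => by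
    rw [hq, mul_assoc] at hs
    lia
  obtain ⟨b, hb, h₀, h₁⟩ := exists_mem_domain_gap_eq (m := m) (t := 1 / 40) hdvd
    (by norm_num) (by linarith)
  have hx₀ := gap_apply m (pocketIndex m i) b
  have hx₁ := gap_add_one_eq m (pocketIndex m i) b
  have hx₂ := gap_add_two_eq m (pocketIndex m i) b
  refine ⟨b, mem_pocket_iff.2 ⟨hb, ⟨?_, ?_⟩, ?_, ?_, ?_⟩, h₀, h₁⟩ <;> linarith

theorem exists_mem_pocket_gap_add_two_eq (hm : 3 ≤ m)
    (hs : 3 * i + pocketIndex m i * m = m - 4) :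
    ∃ b ∈ pocket m i, gap m (pocketIndex m i) b = 1 / 40 ∧
      gap m (pocketIndex m i + 2) b = 1 / 40 := by
  have hm' : (3 : ℝ) ≤ m := by exact_mod_cast hm
  have hs' : (3 * i + pocketIndex m i * m : ℝ) = m - 4 := by exact_mod_cast hs
  have hdvd : ¬ 3 ∣ pocketIndex m i + 2 := fun ⟨q, hq⟩ => by
    rw [eq_sub_of_add_eq hq, sub_mul, mul_assoc] at hs
    lia
  obtain ⟨b, hb, h₂, h₀⟩ := exists_mem_domain_gap_eq (m := m) (t := 1 / 40) hdvd
    (by norm_num) (by linarith)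
  rw [gap_eq_of_dvd (c := pocketIndex m i) (by lia)] at h₀
  have hx₀ := gap_apply m (pocketIndex m i) b
  have hx₁ := gap_add_one_eq m (pocketIndex m i) b
  have hx₂ := gap_add_two_eq m (pocketIndex m i) b
  refine ⟨b, mem_pocket_iff.2 ⟨hb, ⟨?_, ?_⟩, ?_, ?_, ?_⟩, h₀, h₂⟩ <;> linarith

theorem exists_mem_pocket_gap_eq (hs : -1 ≤ 3 * i + pocketIndex m i * m)
    (hu : 3 * i + pocketIndex m i * m + 1 ≤ m - 4) :
    ∃ b ∈ pocket m i, gap m (pocketIndex m i) b = 1 / 40 := by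
  have hs' : (-1 : ℝ) ≤ 3 * i + pocketIndex m i * m := by exact_mod_cast hs
  have hu' : (3 * i + pocketIndex m i * m + 1 : ℝ) ≤ m - 4 := by exact_mod_cast hu
  obtain ⟨b, hb, h₁, h₀⟩ := exists_mem_pocket (m := m) (i := i) (y := 39 / 80) (z := 39 / 80)
    (by norm_num) (by norm_num) (by norm_num) (by linarith) (by linarith)
    fun p h₀ h₁ h₂ => mem_domain_of_quarter_lt_gap (c := pocketIndex m i + 1) (by linarith)
      (by rw [add_assoc, one_add_one_eq_two]; linarith)
      (by rw [gap_eq_of_dvd (c := pocketIndex m i) (by lia)]; linarith)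
  exact ⟨b, hb, by rw [gap_apply]; linarith⟩

/-- Apart from the side where `x_c = x_{c+1}` for `c = pocketIndex m i`, a pocket touches at most
one side of the domain. -/
theorem exists_mem_wall_iff_of_mem_pocket [NeZero m] (hm : 3 ≤ m)
    (hs : -2 ≤ 3 * i + pocketIndex m i * m) :
    ∃ e, (∃ b ∈ pocket m i, gap m (pocketIndex m i) b = 1 / 40 ∧ gap m e b = 1 / 40) ∧
      ∀ r ≤ 3 / 100, ∀ p ∈ pocket m i,
        p ∈ wall m r ↔ gap m (pocketIndex m i) p < r ∨ gap m e p < r := by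
  have hm' : (3 : ℝ) ≤ m := by exact_mod_cast hm
  rcases hs.eq_or_lt with hfirst | hlower
  · have hs' : (-2 : ℝ) = 3 * i + pocketIndex m i * m := by exact_mod_cast hfirst
    refine ⟨_, exists_mem_pocket_gap_add_one_eq hm hfirst.symm, fun r hr p hp => ?_⟩
    have hle : ¬ gap m (pocketIndex m i + 2) p < r := by linarith [(lt_gap_of_mem_pocket hp).2]
    simp only [mem_wall_iff_of_mem_pocket hp, hle, or_false]
  rcases (pocketIndex_le (m := m) i).eq_or_lt with hlast | hupper
  · have hs' : (3 * i + pocketIndex m i * m : ℝ) = m - 4 := by exact_mod_cast hlast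
    refine ⟨_, exists_mem_pocket_gap_add_two_eq hm hlast, fun r hr p hp => ?_⟩
    have hle : ¬ gap m (pocketIndex m i + 1) p < r := by linarith [(lt_gap_of_mem_pocket hp).1]
    simp only [mem_wall_iff_of_mem_pocket hp, hle, false_or]
  · have hlower' : (-1 : ℝ) ≤ 3 * i + pocketIndex m i * m := by exact_mod_cast hlower
    have hupper' : (3 * i + pocketIndex m i * m + 1 : ℝ) ≤ m - 4 := by exact_mod_cast hupper
    obtain ⟨b, hb, hgap⟩ := exists_mem_pocket_gap_eq hlower hupper
    refine ⟨pocketIndex m i, ⟨b, hb, hgap, hgap⟩, fun r hr p hp => ?_⟩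
    have hle₁ : ¬ gap m (pocketIndex m i + 1) p < r := by linarith [(lt_gap_of_mem_pocket hp).1]
    have hle₂ : ¬ gap m (pocketIndex m i + 2) p < r := by linarith [(lt_gap_of_mem_pocket hp).2]
    simp only [mem_wall_iff_of_mem_pocket hp, hle₁, hle₂, or_false, or_self]

theorem isStarShaped_wall_inter_pocket [NeZero m] (hm : 3 ≤ m)
    (hs : -2 ≤ 3 * i + pocketIndex m i * m) (hr : 1 / 40 < r) (hr' : r ≤ 3 / 100) :
    IsStarShaped (wall m r ∩ pocket m i) := by
  obtain ⟨e, ⟨b, hb, hgap, hgap'⟩, hiff⟩ := exists_mem_wall_iff_of_mem_pocket hm hs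
  have heq : wall m r ∩ pocket m i = gap m (pocketIndex m i) ⁻¹' Iio r ∩ pocket m i ∪
      gap m e ⁻¹' Iio r ∩ pocket m i := by
    rw [← union_inter_distrib_right]
    ext p
    exact and_congr_left fun hp => hiff r hr' p hp
  have hconvex (c : ℤ) : Convex ℝ (gap m c ⁻¹' Iio r ∩ pocket m i) :=
    (convex_preimage_of_ordConnected _ ordConnected_Iio).inter (convex_pocket m i)
  have hb₁ : b ∈ gap m (pocketIndex m i) ⁻¹' Iio r ∩ pocket m i := ⟨hgap.trans_lt hr, hb⟩
  have hb₂ : b ∈ gap m e ⁻¹' Iio r ∩ pocket m i := ⟨hgap'.trans_lt hr, hb⟩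
  rw [heq]
  exact ⟨b, .inl hb₁, ((hconvex _).starConvex hb₁).union ((hconvex e).starConvex hb₂)⟩

theorem disjoint_pocket_triangle {σ : ℤ} {L : ℤ → ℤ} (h : IsTriangle m σ L) :
    Disjoint (pocket m i) (triangle m σ L) := by
  refine disjoint_left.2 fun p hp hp' => ?_
  obtain ⟨-, ⟨h₁, h₀⟩, -⟩ := mem_pocket_iff.1 hp
  obtain ⟨n, hn, hn'⟩ := h.exists_int_between hp' (pocketIndex m i)
  have hlt : (n : ℝ) < (i + 1 : ℤ) := by push_cast; linarith
  have hgt : (i : ℝ) < n := by linarith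
  rw [Int.cast_lt] at hlt hgt
  lia

end Pockets

section Cells

variable {m : ℕ}

/-- A convex open region reaching into exactly those bands of width `3 / 100` that are indexed by
the three elements of `v`, and into no band of width `1 / 100`. -/
structure IsCell_s6 (m : ℕ) (C : Set Plane) (v : Finset (Option (ZMod m))) : Prop where
  card_eq : v.card = 3
  isOpen : IsOpen C
  convex : Convex ℝ C
  not_mem_band : ∀ p ∈ C, ∀ i, p ∉ band m (1 / 100) i
  mem_of_mem_band : ∀ p ∈ C, ∀ i, p ∈ band m (3 / 100) i → i ∈ v
  isStarShaped_band_inter : ∀ i ∈ v, IsStarShaped (band m (3 / 100) i ∩ C)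
  pairwise : (v : Set (Option (ZMod m))).Pairwise fun i j =>
    IsStarShaped (band m (3 / 100) i ∩ band m (3 / 100) j ∩ C)

theorem isCell_triangle [NeZero m] {σ : ℤ} {L : ℤ → ℤ} {S : Finset (ZMod m)} (hS : S.card = 3)
    (h : IsTriangle m σ L) (hL : ∀ i, i ∈ S ↔ ∃ c, L c = i.val) :
    IsCell_s6 m (triangle m σ L) (S.map .some) where
  card_eq := by rw [Finset.card_map, hS]
  isOpen := isOpen_triangle m σ L
  convex := convex_triangle m σ L
  not_mem_band
    | _, hp, none => h.not_mem_wall (by norm_num) hp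
    | _, hp, some _ => h.not_mem_strip (by norm_num) hp
  mem_of_mem_band
    | _, hp, none, hwall => absurd hwall (h.not_mem_wall (by norm_num) hp)
    | _, hp, some i, hi =>
      have ⟨c, hc, _⟩ := (h.mem_strip_iff le_rfl hp).1 hi
      Finset.mem_map_of_mem _ ((hL i).2 ⟨c, hc⟩)
  isStarShaped_band_inter i hi := by
    obtain ⟨i, hiS, rfl⟩ := Finset.mem_map.1 hi
    obtain ⟨c, hc⟩ := (hL i).1 hiS
    change IsStarShaped (strip m _ i.val ∩ _)
    rw [← hc]
    exact h.isStarShaped_strip_inter (by norm_num) le_rfl c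
  pairwise i hi j hj hij := by
    obtain ⟨i, hiS, rfl⟩ := Finset.mem_map.1 hi
    obtain ⟨j, hjS, rfl⟩ := Finset.mem_map.1 hj
    obtain ⟨c, hc⟩ := (hL i).1 hiS
    obtain ⟨d, hd⟩ := (hL j).1 hjS
    change IsStarShaped (strip m _ i.val ∩ strip m _ j.val ∩ _)
    rw [← hc, ← hd]
    refine h.isStarShaped_strip_inter_strip_inter (by norm_num) le_rfl fun ⟨q, hq⟩ => hij ?_
    rw [eq_add_of_sub_eq' hq, h.label_add_three_mul] at hd
    exact congrArg _ ((dvd_natCast_val_sub_iff i j).1 ⟨q, by linarith⟩)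

theorem not_dvd_val_add_one [NeZero m] {i : ZMod m} (hi : i ≠ -1) : ¬ (m : ℤ) ∣ i.val + 1 :=
  fun h => hi <| eq_neg_of_add_eq_zero_left <| by
    simpa using (ZMod.intCast_zmod_eq_zero_iff_dvd ((i.val : ℤ) + 1) m).2 h

theorem band_add_one [Fact (1 < m)] {i : ZMod m} (hi : i ≠ -1) (r : ℝ) :
    band m r (some (i + 1)) = strip m r (i.val + 1) := by
  have hm : 1 < m := Fact.out
  have : NeZero m := ⟨by lia⟩
  have hne : i.val + 1 ≠ m := fun h => not_dvd_val_add_one hi ⟨1, by rw [mul_one]; exact_mod_cast h⟩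
  have hlt : i.val + (1 : ZMod m).val < m := by
    rw [ZMod.val_one]
    exact lt_of_le_of_ne i.val_lt hne
  change strip m r (i + 1).val = _
  rw [ZMod.val_add_of_lt hlt, ZMod.val_one, Nat.cast_add, Nat.cast_one]

theorem isCell_pocket [NeZero m] (hm : 3 ≤ m) (hm' : ¬ 3 ∣ m) {i : ZMod m} (hi : i ≠ -1) :
    IsCell_s6 m (pocket m i.val) {none, some i, some (i + 1)} := by
  have : Fact (1 < m) := ⟨by lia⟩
  have hs := le_pocketIndex hm' (not_dvd_val_add_one hi)
  have hband := band_add_one hi (3 / 100)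
  refine ⟨Finset.card_eq_three.2 ⟨none, some i, some (i + 1), by simp⟩, isOpen_pocket m i.val,
    convex_pocket m i.val, ?_, ?_, ?_, ?_⟩
  · rintro p hp (_ | j)
    · exact not_mem_wall_of_mem_pocket (by norm_num) hp
    · exact not_mem_strip_of_mem_pocket (by norm_num) hp
  · rintro p hp (_ | j) hj
    · exact Finset.mem_insert_self ..
    · have hj' : j = i + 1 ∨ j = i :=
        (mem_strip_of_mem_pocket le_rfl hp hj).imp
          (fun ⟨_, hq, _⟩ => by simpa using congrArg (Int.cast : ℤ → ZMod m) hq)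
          fun ⟨_, hq, _⟩ => by simpa using congrArg (Int.cast : ℤ → ZMod m) hq
      simpa [or_comm] using hj'
  · simp only [Finset.mem_insert, Finset.mem_singleton, forall_eq_or_imp, forall_eq, hband]
    exact ⟨isStarShaped_wall_inter_pocket hm hs (by norm_num) le_rfl,
      isStarShaped_strip_inter_pocket hs (by norm_num) le_rfl,
      isStarShaped_strip_add_one_inter_pocket hs (by norm_num) le_rfl⟩
  · have : Std.Symm fun j l =>
        IsStarShaped (band m (3 / 100) j ∩ band m (3 / 100) l ∩ pocket m i.val) :=
      ⟨fun j l h => by rwa [inter_comm (band m _ l)]⟩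
    simp only [Finset.coe_insert, Finset.coe_singleton, Set.pairwise_insert_of_symm,
      Set.pairwise_singleton, true_and, mem_singleton_iff, mem_insert_iff, forall_eq_or_imp,
      forall_eq, hband]
    exact ⟨fun _ => isStarShaped_strip_inter_strip_inter_pocket hs (by norm_num) le_rfl,
      fun _ => isStarShaped_wall_inter_strip_inter_pocket hs (by norm_num) le_rfl,
      fun _ => isStarShaped_wall_inter_strip_add_one_inter_pocket hs (by norm_num) le_rfl⟩

/-- The index set of the cells: a triple of billiard paths whose indices sum up to `-2` or `-1`
bounds a triangle, and two successive paths bound a pocket. -/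
abbrev CellIndex (m : ℕ) : Type :=
  {S : Finset (ZMod m) // S.card = 3 ∧ (∑ i ∈ S, i = -2 ∨ ∑ i ∈ S, i = -1)} ⊕
    {i : ZMod m // i ≠ -1}

/-- The indices of the three bands that a cell reaches into. -/
def cellVerts (m : ℕ) : CellIndex m → Finset (Option (ZMod m))
  | .inl S => S.1.map .some
  | .inr i => {none, some i.1, some (i.1 + 1)}

theorem cellVerts_injective (hm : 3 ≤ m) : (cellVerts m).Injective := by
  have hnone (S : Finset (ZMod m)) (s : Finset (Option (ZMod m))) :
      S.map .some ≠ insert none s := fun h => by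
    simpa using Finset.ext_iff.1 h none
  rintro (S | i) (T | j) h
  · exact congrArg Sum.inl (Subtype.ext (Finset.map_injective _ h))
  · exact absurd h (hnone _ _)
  · exact absurd h.symm (hnone _ _)
  · have hij : i.1 = j.1 ∨ i.1 = j.1 + 1 := by
      simpa [cellVerts] using Finset.ext_iff.1 h (some i.1)
    have hji : j.1 = i.1 ∨ j.1 = i.1 + 1 := by
      simpa [cellVerts] using Finset.ext_iff.1 h (some j.1)
    refine congrArg Sum.inr (Subtype.ext (hij.resolve_right fun h₁ => ?_))
    have htwo : ((2 : ℕ) : ZMod m) = 0 := by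
      push_cast
      rcases hji with h₂ | h₂
      · linear_combination -2 * h₁ - 2 * h₂
      · linear_combination -h₁ - h₂
    have := Nat.le_of_dvd two_pos ((ZMod.natCast_eq_zero_iff 2 m).1 htwo)
    lia

theorem exists_isCell [NeZero m] (hm : 3 ≤ m) (hm' : ¬ 3 ∣ m) : ∃ C : CellIndex m → Set Plane,
    (∀ k, IsCell_s6 m (C k) (cellVerts m k)) ∧ ∀ k l, ∀ p ∈ C k, p ∈ C l → k = l := by
  choose σ L hL hmem using fun S : {S : Finset (ZMod m) //
    S.card = 3 ∧ (∑ i ∈ S, i = -2 ∨ ∑ i ∈ S, i = -1)} => exists_isTriangle S.2.1 S.2.2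
  refine ⟨Sum.elim (fun S => triangle m (σ S) (L S)) fun i => pocket m i.1.val,
    Sum.rec (fun S => isCell_triangle S.2.1 (hL S) (hmem S)) fun i => isCell_pocket hm hm' i.2, ?_⟩
  have hnear (S) (p : Plane) (hp : p ∈ triangle m (σ S) (L S)) (i : ZMod m) :
      i ∈ S.1 ↔ ∃ c, |coord m c p - (i.val : ℤ)| < 1 / 2 := by
    rw [hmem]
    refine exists_congr fun c => ⟨fun h => ?_, fun h => ?_⟩
    · rw [← h, (hL S).abs_coord_sub hp]
      linarith [(hL S).height_bounds hp c]
    · exact ((hL S).eq_label_of_abs_coord_sub_lt hp h).symm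
  rintro (S | i) (T | j) p hk hl
  · refine congrArg Sum.inl (Subtype.ext (Finset.ext fun i => ?_))
    rw [hnear S p hk, hnear T p hl]
  · exact (disjoint_left.1 (disjoint_pocket_triangle (hL S)) hl hk).elim
  · exact (disjoint_left.1 (disjoint_pocket_triangle (hL T)) hk hl).elim
  · exact congrArg Sum.inr (Subtype.ext
      ((dvd_natCast_val_sub_iff i.1 j.1).1 (dvd_sub_of_mem_pocket hk hl)))

theorem nonempty_tubeArrangement [NeZero m] (hm : 3 ≤ m) (hm' : ¬ 3 ∣ m) :
    Nonempty (TubeArrangement (Option (ZMod m)) (CellIndex m) Plane) := by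
  obtain ⟨C, hC, heq⟩ := exists_isCell hm hm'
  have h₁ : (1 / 100 : ℝ) ∈ Icc (1 / 100 : ℝ) (3 / 100) := by norm_num
  have h₃ : (3 / 100 : ℝ) ∈ Icc (1 / 100 : ℝ) (3 / 100) := by norm_num
  exact ⟨{
    core := band m (1 / 100)
    tube := band m (3 / 100)
    cell := C
    verts := cellVerts m
    isOpen_core := isOpen_band m _
    isOpen_tube := isOpen_band m _
    isOpen_cell k := (hC k).isOpen
    core_subset_tube := band_mono h₁.2
    contractible_core := contractibleSpace_band le_rfl h₁.2
    contractible_tube := contractibleSpace_band h₃.1 le_rfl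
    exists_crossing i j hij := by
      obtain ⟨b, hb⟩ := haveStarShapedCrossing_band_band hij
      exact ⟨b, (hb _ h₁ _ h₁).1, (hb _ h₁ _ h₁).2, (hb _ h₁ _ h₃).2, (hb _ h₃ _ h₁).2,
        (hb _ h₃ _ h₃).2⟩
    not_mem_three_tubes _ _ _ hij hil hjl _ := not_mem_three_bands le_rfl hij hil hjl
    verts_injective := cellVerts_injective hm
    card_verts k := (hC k).card_eq
    convex_cell k := (hC k).convex
    eq_of_mem_cell := heq
    not_mem_core k := (hC k).not_mem_band
    mem_verts k := (hC k).mem_of_mem_band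
    isStarShaped_tube_cell k := (hC k).isStarShaped_band_inter
    isStarShaped_tube_tube_cell k _ hi _ hj := (hC k).pairwise hi hj }⟩

end Cells

section Counting

/-- The `k`-element subsets of `G` whose elements sum up to `r`. -/
def subsetsWithSum {G : Type*} [AddCommGroup G] [Fintype G] [DecidableEq G] (k : ℕ) (r : G) :
    Finset (Finset G) :=
  {S ∈ Finset.univ.powersetCard k | ∑ g ∈ S, g = r}

theorem mem_subsetsWithSum {G : Type*} [AddCommGroup G] [Fintype G] [DecidableEq G] {k : ℕ} {r : G}
    {S : Finset G} : S ∈ subsetsWithSum k r ↔ S.card = k ∧ ∑ g ∈ S, g = r := by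
  simp [subsetsWithSum]

theorem card_subsetsWithSum_eq {G : Type*} [AddCommGroup G] [Fintype G] [DecidableEq G] {k : ℕ}
    (hk : (Nat.card G).Coprime k) (r s : G) :
    (subsetsWithSum k r).card = (subsetsWithSum k s).card := by
  suffices hle : ∀ r s : G, (subsetsWithSum k r).card ≤ (subsetsWithSum k s).card from
    (hle r s).antisymm (hle s r)
  intro r s
  -- Translation by `t` adds `k • t` to the sum.
  obtain ⟨t, ht⟩ := (Nat.Coprime.nsmul_right_bijective hk).surjective (s - r)
  refine Finset.card_le_card_of_injOn (Finset.map (Equiv.addRight t).toEmbedding) (fun S hS => ?_)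
    (Finset.map_injective _).injOn
  obtain ⟨hcard, hsum⟩ := mem_subsetsWithSum.1 hS
  refine mem_subsetsWithSum.2 ⟨by rw [Finset.card_map, hcard], ?_⟩
  simp [Finset.sum_add_distrib, hcard, hsum, ht]

theorem card_mul_card_subsetsWithSum {G : Type*} [AddCommGroup G] [Fintype G] [DecidableEq G]
    {k : ℕ} (hk : (Nat.card G).Coprime k) (r : G) :
    Fintype.card G * (subsetsWithSum k r).card = (Fintype.card G).choose k := by
  calc Fintype.card G * (subsetsWithSum k r).card
      = ∑ s : G, (subsetsWithSum k s).card :=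
        (Finset.sum_const_nat fun s _ => card_subsetsWithSum_eq hk s r).symm
    _ = ((Finset.univ : Finset G).powersetCard k).card :=
        (Finset.card_eq_sum_card_fiberwise fun _ _ => Finset.mem_coe.2 (Finset.mem_univ _)).symm
    _ = (Fintype.card G).choose k := by rw [Finset.card_powersetCard, Finset.card_univ]

theorem three_mul_card_cellIndex {m : ℕ} [NeZero m] (hm : 3 ≤ m) (hm' : ¬ 3 ∣ m) :
    3 * Fintype.card (CellIndex m) + 1 = m ^ 2 := by
  have : Fact (1 < m) := ⟨by lia⟩
  have hcoprime : (Nat.card (ZMod m)).Coprime 3 := by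
    rw [Nat.card_zmod]
    exact (Nat.prime_three.coprime_iff_not_dvd.2 hm').symm
  have hdisj : Disjoint (subsetsWithSum 3 (-2 : ZMod m)) (subsetsWithSum 3 (-1)) :=
    Finset.disjoint_left.2 fun S h₂ h₁ => one_ne_zero <| by
      linear_combination (mem_subsetsWithSum.1 h₂).2 - (mem_subsetsWithSum.1 h₁).2
  have htriangles : Fintype.card {S : Finset (ZMod m) //
      S.card = 3 ∧ (∑ i ∈ S, i = -2 ∨ ∑ i ∈ S, i = -1)} =
        2 * (subsetsWithSum 3 (-1 : ZMod m)).card := by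
    rw [Fintype.card_of_subtype (subsetsWithSum 3 (-2) ∪ subsetsWithSum 3 (-1)) fun S => by
      rw [Finset.mem_union, mem_subsetsWithSum, mem_subsetsWithSum, and_or_left],
      Finset.card_union_of_disjoint hdisj, card_subsetsWithSum_eq hcoprime (-2) (-1), two_mul]
  have hpockets : Fintype.card {i : ZMod m // i ≠ -1} = m - 1 := by
    rw [Fintype.card_subtype_compl, ZMod.card, Fintype.card_subtype_eq]
  have hchoose := card_mul_card_subsetsWithSum hcoprime (-1)
  rw [ZMod.card] at hchoose
  rw [Fintype.card_sum, htriangles, hpockets]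
  generalize (subsetsWithSum 3 (-1 : ZMod m)).card = a at *
  obtain ⟨k, rfl⟩ := Nat.exists_eq_add_of_le' hm
  have hthree : a * 3 = (k + 2).choose 2 :=
    Nat.eq_of_mul_eq_mul_left (by lia) <|
      calc (k + 3) * (a * 3) = (k + 3).choose 3 * 3 := by rw [← hchoose, mul_assoc]
        _ = (k + 3) * (k + 2).choose 2 := (Nat.add_one_mul_choose_eq (k + 2) 2).symm
  have htwo : (k + 2) * (k + 1) = (k + 2).choose 2 * 2 := by
    simpa only [Nat.choose_one_right] using Nat.add_one_mul_choose_eq (k + 1) 1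
  rw [Nat.add_succ_sub_one]
  linarith

end Counting

/-- **Theorem (construction, sharp version).** For infinitely many `n` there is a family
`ℬ` of `n` open sets in `ℝ²` with all nonempty subfamily intersections path-connected,
`f_3(ℬ) = 0`, `f_2(ℬ) = C(n-1,2) + (n²-4n+3)/3`, all but one of the sets contractible,
and all nonempty intersections of pairs and triples contractible. -/
theorem construction_lower_bound_sharp :
    ∀ N : ℕ, ∃ n : ℕ, N ≤ n ∧
      ∃ B : Fin n → Set (EuclideanSpace ℝ (Fin 2)),
        (∀ i, IsOpen (B i)) ∧
        (∀ σ : Finset (Fin n), σ.Nonempty →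
          (⋂ i ∈ σ, B i) = ∅ ∨ IsPathConnected (⋂ i ∈ σ, B i)) ∧
        fNum B 3 = 0 ∧
        ((fNum B 2 : ℝ) = ((n - 1).choose 2 : ℝ) + ((n : ℝ) ^ 2 - 4 * n + 3) / 3) ∧
        (∃ i₀ : Fin n, ∀ i : Fin n, i ≠ i₀ → ContractibleSpace ↥(B i)) ∧
        (∀ σ : Finset (Fin n), σ.card = 2 ∨ σ.card = 3 → (⋂ i ∈ σ, B i).Nonempty →
          ContractibleSpace ↥(⋂ i ∈ σ, B i)) := by
  intro N
  set m := 3 * N + 4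
  obtain ⟨T⟩ := nonempty_tubeArrangement (m := m) (by lia) (by lia)
  let e : Fin (m + 2) ≃ Option (Option (ZMod m)) := (Fintype.equivFinOfCardEq (by simp)).symm
  refine ⟨m + 2, by lia, T.family ∘ e, fun i => T.isOpen_family (e i), fun σ hσ => ?_, ?_, ?_,
    ⟨e.symm none, fun i hi => ?_⟩, fun σ hσ hne => ?_⟩
  · rw [biInter_comp_equiv]
    exact T.biInter_family_eq_empty_or_isPathConnected hσ.map
  · rw [fNum_comp_equiv, Nat.card_eq_zero]
    exact .inl ⟨fun ⟨σ, hσ, hne⟩ => hne.ne_empty (T.biInter_family_eq_empty hσ.ge)⟩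
  · have hcard : (3 * Fintype.card (CellIndex m) + 1 : ℝ) = m ^ 2 := by
      exact_mod_cast three_mul_card_cellIndex (m := m) (by lia) (by lia)
    rw [fNum_comp_equiv, T.card_faces, Fintype.card_option, ZMod.card, Nat.add_succ_sub_one]
    push_cast
    linarith
  · obtain ⟨j, hj⟩ := Option.ne_none_iff_exists'.1 fun h => hi (e.symm_apply_eq.2 h.symm).symm
    rw [Function.comp_apply, hj]
    exact T.contractibleSpace_fat j
  · rw [biInter_comp_equiv] at hne ⊢
    exact T.contractibleSpace_biInter_family (by rwa [Finset.card_map]) hne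
end
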